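/- arXiv:1611.05482 — 4 statements merged into one kernel-verified Lean document; each statement's English description precedes it below -/
import Mathlib

section
/- The prefixes w_n of the generalized pseudostandard word u_p = u(1^ω, (EERR)^ω) satisfy, for all k ∈ ℕ (with w_z = ε for z ≤ 0): w_{4k+1} = w_{4k}·10·E(w_{4k}), w_{4k+2} = w_{4k+1}·w_{4k−2}^{−1}·w_{4k+1}, w_{4k+3} = w_{4k+2}·(010)^{−1}·R(w_{4k+2}), and w_{4k+4} = w_{4k+3}·w_{4k}^{−1}·w_{4k+3}. -/
abbrev Word := List Bool

/-- The exchange antimorphism `E`: complement each letter and reverse. -/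
def Ebar (w : Word) : Word := (w.map Bool.not).reverse

def IsPal (w : Word) : Prop := w.reverse = w
def IsEPal (w : Word) : Prop := Ebar w = w

open Classical in
lemma exists_minLength {Q : Word → Prop} (hex : ∃ v, Q v) :
    ∃ v, Q v ∧ ∀ v', Q v' → v.length ≤ v'.length := by
  classical
  have h : ∃ n, ∃ v, Q v ∧ v.length = n := ⟨_, hex.choose, hex.choose_spec, rfl⟩
  obtain ⟨v, hv, hlen⟩ := Nat.find_spec h
  exact ⟨v, hv, fun v' hv' => by
    rw [hlen]; exact Nat.find_min' h ⟨v', hv', rfl⟩⟩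

lemma pal_ext (w : Word) : ∃ v, w <+: v ∧ IsPal v :=
  ⟨w ++ w.reverse, List.prefix_append _ _, by simp [IsPal]⟩

lemma epal_ext (w : Word) : ∃ v, w <+: v ∧ IsEPal v :=
  ⟨w ++ Ebar w, List.prefix_append _ _, by
    simp [IsEPal, Ebar, List.map_reverse, List.map_map, Function.comp_def, Bool.not_not]⟩

/-- The palindromic closure: the shortest palindrome having `w` as a prefix. -/
noncomputable def palCl (w : Word) : Word := (exists_minLength (pal_ext w)).choose

/-- The pseudopalindromic closure: the shortest `E`-palindrome having `w` as a prefix. -/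
noncomputable def epalCl (w : Word) : Word := (exists_minLength (epal_ext w)).choose

/-- Prefixes of the generalized pseudostandard word `u(1^ω, (EERR)^ω)`
(the letter `1` is `true`). -/
noncomputable def wp : ℕ → Word
  | 0 => []
  | n+1 => if (n+1) % 4 = 1 ∨ (n+1) % 4 = 2
           then epalCl (wp n ++ [true])
           else palCl (wp n ++ [true])

/-- Factors of `u_p`. -/
def FactorUp (v : Word) : Prop := ∃ n, v <:+: wp n

/-- Factor complexity of `u_p`. -/
noncomputable def Cp (n : ℕ) : ℕ := Set.ncard {v : Word | FactorUp v ∧ v.length = n}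


lemma isEPal_iff (v : Word) : IsEPal v ↔ ∀ i j, (h : i + j + 1 = v.length) →
    v[i]'(by omega) = !v[j]'(by omega) := by
  unfold IsEPal Ebar
  constructor
  · intro h i j hij
    have h2 : i < ((v.map Bool.not).reverse).length := by simp; omega
    have h1 : ((v.map Bool.not).reverse)[i]'h2 = v[i]'(by omega) := by
      simp only [h]
    rw [← h1]
    simp only [List.getElem_reverse, List.getElem_map, List.length_map]
    congr 2
    omega
  · intro h
    apply List.ext_getElem (by simp)
    intro i h1 h2
    simp only [List.getElem_reverse, List.getElem_map, List.length_map]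
    rw [h i (v.length - 1 - i) (by omega)]

lemma isPal_iff (v : Word) : IsPal v ↔ ∀ i j, (h : i + j + 1 = v.length) →
    v[i]'(by omega) = v[j]'(by omega) := by
  unfold IsPal
  constructor
  · intro h i j hij
    have h2 : i < (v.reverse).length := by simp; omega
    have h1 : (v.reverse)[i]'h2 = v[i]'(by omega) := by
      simp only [h]
    rw [← h1]
    simp only [List.getElem_reverse]
    congr 1
    omega
  · intro h
    apply List.ext_getElem (by simp)
    intro i h1 h2
    simp only [List.getElem_reverse]
    rw [h i (v.length - 1 - i) (by omega)]

lemma epal_unique {p v v' : Word} (h : IsEPal v) (h' : IsEPal v') (hp : p <+: v) (hp' : p <+: v')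
    (hl : v.length = v'.length) (hlen : v.length ≤ 2 * p.length) : v = v' := by
  rw [isEPal_iff] at h h'
  apply List.ext_getElem hl
  intro i h1 h2
  by_cases hi : i < p.length
  · rw [← hp.getElem hi, ← hp'.getElem hi]
  · have hj : v.length - 1 - i < p.length := by omega
    rw [h i (v.length - 1 - i) (by omega), h' i (v.length - 1 - i) (by omega),
      ← hp.getElem hj, ← hp'.getElem hj]

lemma pal_unique {p v v' : Word} (h : IsPal v) (h' : IsPal v') (hp : p <+: v) (hp' : p <+: v')
    (hl : v.length = v'.length) (hlen : v.length ≤ 2 * p.length) : v = v' := by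
  rw [isPal_iff] at h h'
  apply List.ext_getElem hl
  intro i h1 h2
  by_cases hi : i < p.length
  · rw [← hp.getElem hi, ← hp'.getElem hi]
  · have hj : v.length - 1 - i < p.length := by omega
    rw [h i (v.length - 1 - i) (by omega), h' i (v.length - 1 - i) (by omega),
      ← hp.getElem hj, ← hp'.getElem hj]

lemma epalCl_spec (w : Word) : (w <+: epalCl w ∧ IsEPal (epalCl w)) ∧
    ∀ v, (w <+: v ∧ IsEPal v) → (epalCl w).length ≤ v.length :=
  (exists_minLength (epal_ext w)).choose_spec

lemma palCl_spec (w : Word) : (w <+: palCl w ∧ IsPal (palCl w)) ∧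
    ∀ v, (w <+: v ∧ IsPal v) → (palCl w).length ≤ v.length :=
  (exists_minLength (pal_ext w)).choose_spec

lemma wp_E (n : ℕ) (h : (n+1) % 4 = 1 ∨ (n+1) % 4 = 2) : wp (n+1) = epalCl (wp n ++ [true]) := by
  rw [wp, if_pos h]

lemma wp_R (n : ℕ) (h : (n+1) % 4 = 3 ∨ (n+1) % 4 = 0) : wp (n+1) = palCl (wp n ++ [true]) := by
  rw [wp, if_neg (by omega)]

lemma wp_pre (n : ℕ) : wp n ++ [true] <+: wp (n+1) := by
  by_cases h : (n+1) % 4 = 1 ∨ (n+1) % 4 = 2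
  · rw [wp_E n h]; exact (epalCl_spec _).1.1
  · rw [wp_R n (by omega)]; exact (palCl_spec _).1.1

noncomputable def LL (n : ℕ) : ℕ := (wp n).length
noncomputable def WW (i : ℕ) : Bool := (wp (i+1)).getD i false

lemma LL_lt (n : ℕ) : LL n < LL (n+1) := by
  have := (wp_pre n).length_le
  simp at this
  unfold LL; omega

lemma LL_mono : StrictMono LL := strictMono_nat_of_lt_succ LL_lt

lemma LL_zero : LL 0 = 0 := by simp [LL, wp]

lemma LL_ge (n : ℕ) : n ≤ LL n := LL_mono.le_apply

lemma wp_prefix {m n : ℕ} (h : m ≤ n) : wp m <+: wp n := by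
  induction n, h using Nat.le_induction with
  | base => exact List.prefix_rfl
  | succ n _ ih => exact ih.trans ((List.prefix_append _ _).trans (wp_pre n))

lemma wp_get (n i : ℕ) (h : i < (wp n).length) : (wp n)[i] = WW i := by
  have h2 : i < (wp (i+1)).length := LL_ge (i+1)
  have e : WW i = (wp (i+1))[i] := by
    unfold WW; rw [List.getD_eq_getElem _ _ h2]
  rw [e]
  rcases le_total n (i+1) with h3 | h3
  · exact (wp_prefix h3).getElem h
  · exact ((wp_prefix h3).getElem h2).symm

lemma WW_LL (n : ℕ) : WW (LL n) = true := by
  have h : LL n < (wp (n+1)).length := LL_lt n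
  have h' : LL n < (wp n ++ [true]).length := by simp [LL]
  rw [← wp_get (n+1) _ h, ← (wp_pre n).getElem h']
  simp [LL]

def PalN (n : ℕ) : Prop := ∀ i j, i + j + 1 = n → WW i = WW j
def EpalN (n : ℕ) : Prop := ∀ i j, i + j + 1 = n → WW i = !WW j

lemma epalN_LL (n : ℕ) (h : n % 4 = 1 ∨ n % 4 = 2) : EpalN (LL n) := by
  obtain ⟨n, rfl⟩ : ∃ m, n = m + 1 := ⟨n-1, by omega⟩
  have := (epalCl_spec (wp n ++ [true])).1.2
  rw [← wp_E n h, isEPal_iff] at this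
  intro i j hij
  have := this i j hij
  simpa only [wp_get] using this

lemma palN_LL (n : ℕ) (h : n % 4 = 3 ∨ n % 4 = 0) : PalN (LL n) := by
  rcases n with _ | n
  · intro i j hij; rw [LL_zero] at hij; omega
  have := (palCl_spec (wp n ++ [true])).1.2
  rw [← wp_R n h, isPal_iff] at this
  intro i j hij
  have := this i j hij
  simpa only [wp_get] using this

lemma isEPal_wp (n : ℕ) (h : n % 4 = 1 ∨ n % 4 = 2) : IsEPal (wp n) := by
  rw [isEPal_iff]
  intro i j hij
  simp only [wp_get]
  exact epalN_LL n h i j hij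

lemma isPal_wp (n : ℕ) (h : n % 4 = 3 ∨ n % 4 = 0) : IsPal (wp n) := by
  rw [isPal_iff]
  intro i j hij
  simp only [wp_get]
  exact palN_LL n h i j hij

lemma pre_prefix (n N : ℕ) (h : LL n < N) : wp n ++ [true] <+: (List.range N).map WW := by
  rw [List.prefix_iff_getElem]
  refine ⟨by simpa [LL] using h, ?_⟩
  intro i hi
  simp only [List.getElem_map, List.getElem_range]
  simp only [List.length_append, List.length_singleton] at hi
  rw [List.getElem_append]
  split_ifs with h1
  · rw [wp_get]
  · have : i = LL n := by unfold LL; omega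
    rw [show WW i = true by rw [this, WW_LL]]; simp

lemma min_E (n N : ℕ) (h : (n+1) % 4 = 1 ∨ (n+1) % 4 = 2) (hN : EpalN N) (hl : LL n < N) :
    LL (n+1) ≤ N := by
  have := (epalCl_spec (wp n ++ [true])).2 ((List.range N).map WW) ⟨pre_prefix n N hl, by
    rw [isEPal_iff]
    intro i j hij
    simp only [List.getElem_map, List.getElem_range]
    exact hN i j (by simpa using hij)⟩
  rw [← wp_E n h] at this
  simpa [LL] using this

lemma min_R (n N : ℕ) (h : (n+1) % 4 = 3 ∨ (n+1) % 4 = 0) (hN : PalN N) (hl : LL n < N) :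
    LL (n+1) ≤ N := by
  have := (palCl_spec (wp n ++ [true])).2 ((List.range N).map WW) ⟨pre_prefix n N hl, by
    rw [isPal_iff]
    intro i j hij
    simp only [List.getElem_map, List.getElem_range]
    exact hN i j (by simpa using hij)⟩
  rw [← wp_R n h] at this
  simpa [LL] using this

lemma eq_E (n : ℕ) (h : (n+1) % 4 = 1 ∨ (n+1) % 4 = 2) (v : Word) (hv : IsEPal v)
    (hp : wp n ++ [true] <+: v) (hl : v.length ≤ LL (n+1)) (hl2 : v.length ≤ 2 * LL n + 2) :
    wp (n+1) = v := by
  have h1 := epalCl_spec (wp n ++ [true])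
  have h2 := h1.2 v ⟨hp, hv⟩
  rw [← wp_E n h] at h1 h2
  have : (wp (n+1)).length = v.length := le_antisymm h2 hl
  refine epal_unique h1.1.2 hv h1.1.1 hp this ?_
  simp [LL] at hl2 ⊢; omega

lemma eq_R (n : ℕ) (h : (n+1) % 4 = 3 ∨ (n+1) % 4 = 0) (v : Word) (hv : IsPal v)
    (hp : wp n ++ [true] <+: v) (hl : v.length ≤ LL (n+1)) (hl2 : v.length ≤ 2 * LL n + 2) :
    wp (n+1) = v := by
  have h1 := palCl_spec (wp n ++ [true])
  have h2 := h1.2 v ⟨hp, hv⟩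
  rw [← wp_R n h] at h1 h2
  have : (wp (n+1)).length = v.length := le_antisymm h2 hl
  refine pal_unique h1.1.2 hv h1.1.1 hp this ?_
  simp [LL] at hl2 ⊢; omega

lemma Ebar_append (a b : Word) : Ebar (a ++ b) = Ebar b ++ Ebar a := by simp [Ebar]
lemma Ebar_Ebar (a : Word) : Ebar (Ebar a) = a := by
  simp [Ebar, List.map_reverse, List.map_map, Function.comp_def]
lemma Ebar_length (a : Word) : (Ebar a).length = a.length := by simp [Ebar]

lemma overlap_E {u w : Word} (hu : IsEPal u) (hw : IsEPal w) (h : u ++ [true] <+: w) :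
    ∃ z, w = z ++ u ∧ IsEPal (z ++ w) ∧ w ++ [true] <+: z ++ w := by
  obtain ⟨t, ht⟩ := h
  unfold IsEPal at *
  refine ⟨Ebar ([true] ++ t), ?_, ?_, ?_⟩
  · rw [← hw, ← ht, List.append_assoc, Ebar_append, hu]
  · have e : w = Ebar ([true] ++ t) ++ u := by
      conv_lhs => rw [← hw, ← ht, List.append_assoc, Ebar_append, hu]
    rw [Ebar_append, hw, Ebar_Ebar]
    conv_lhs => rw [e]
    rw [List.append_assoc, ← List.append_assoc u, ht]
  · have e : w = Ebar ([true] ++ t) ++ u := by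
      conv_lhs => rw [← hw, ← ht, List.append_assoc, Ebar_append, hu]
    refine ⟨t, ?_⟩
    conv_lhs => rw [e]
    conv_rhs => rw [← ht]
    simp

lemma overlap_R {u w : Word} (hu : IsPal u) (hw : IsPal w) (h : u ++ [true] <+: w) :
    ∃ z, w = z ++ u ∧ IsPal (z ++ w) ∧ w ++ [true] <+: z ++ w := by
  obtain ⟨t, ht⟩ := h
  unfold IsPal at *
  have e : w = ([true] ++ t).reverse ++ u := by
    conv_lhs => rw [← hw, ← ht, List.append_assoc, List.reverse_append, hu]
  refine ⟨([true] ++ t).reverse, e, ?_, ?_⟩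
  · rw [List.reverse_append, hw, List.reverse_reverse]
    conv_lhs => rw [e]
    rw [List.append_assoc, ← List.append_assoc u, ht]
  · refine ⟨t, ?_⟩
    conv_lhs => rw [e]
    conv_rhs => rw [← ht]
    simp

lemma overlap_3 {w : Word} (hw : IsEPal w) (h : [true, false, true, false] <+: w) :
    ∃ z, w = z ++ [false, true, false] ∧ IsPal (z ++ w.reverse) ∧
      w ++ [true] <+: z ++ w.reverse := by
  obtain ⟨t, ht⟩ := h
  unfold IsEPal IsPal at *
  have e : w = (Ebar t ++ [true]) ++ [false, true, false] := by
    conv_lhs => rw [← hw, ← ht, Ebar_append]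
    simp [Ebar]
  refine ⟨Ebar t ++ [true], e, ?_, ?_⟩
  · rw [e]; simp
  · refine ⟨(Ebar t).reverse, ?_⟩
    rw [e]; simp

-- reflection lemmas
lemma refl_EEE {N n m : ℕ} (hN : EpalN N) (hn : EpalN n) (hm : EpalN m) (q : ℕ)
    (hq : q + N = n + m) (h1 : n ≤ N) (h2 : m ≤ N) : EpalN q := by
  intro i j hij
  rw [hn i (n-1-i) (by omega), hN (n-1-i) (N - n + i) (by omega), hm (N-n+i) j (by omega)]
  simp

lemma refl_RRR {N n m : ℕ} (hN : PalN N) (hn : PalN n) (hm : PalN m) (q : ℕ)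
    (hq : q + N = n + m) (h1 : n ≤ N) (h2 : m ≤ N) : PalN q := by
  intro i j hij
  rw [hn i (n-1-i) (by omega), hN (n-1-i) (N - n + i) (by omega), hm (N-n+i) j (by omega)]

lemma refl_ERR {N n m : ℕ} (hN : EpalN N) (hn : PalN n) (hm : PalN m) (q : ℕ)
    (hq : q + N = n + m) (h1 : n ≤ N) (h2 : m ≤ N) : EpalN q := by
  intro i j hij
  rw [hn i (n-1-i) (by omega), hN (n-1-i) (N - n + i) (by omega), hm (N-n+i) j (by omega)]

lemma refl_ERE {N n m : ℕ} (hN : EpalN N) (hn : PalN n) (hm : EpalN m) (q : ℕ)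
    (hq : q + N = n + m) (h1 : n ≤ N) (h2 : m ≤ N) : PalN q := by
  intro i j hij
  rw [hn i (n-1-i) (by omega), hN (n-1-i) (N - n + i) (by omega), hm (N-n+i) j (by omega)]
  simp

lemma refl_REE {N n m : ℕ} (hN : PalN N) (hn : EpalN n) (hm : EpalN m) (q : ℕ)
    (hq : q + N = n + m) (h1 : n ≤ N) (h2 : m ≤ N) : PalN q := by
  intro i j hij
  rw [hn i (n-1-i) (by omega), hN (n-1-i) (N - n + i) (by omega), hm (N-n+i) j (by omega)]
  simp

lemma refl_RER {N n m : ℕ} (hN : PalN N) (hn : EpalN n) (hm : PalN m) (q : ℕ)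
    (hq : q + N = n + m) (h1 : n ≤ N) (h2 : m ≤ N) : EpalN q := by
  intro i j hij
  rw [hn i (n-1-i) (by omega), hN (n-1-i) (N - n + i) (by omega), hm (N-n+i) j (by omega)]

lemma epal_even {N : ℕ} (hN : EpalN N) : N % 2 = 0 := by
  by_contra h
  have := hN (N/2) (N/2) (by omega)
  simp at this

lemma not_both {N : ℕ} (h0 : 0 < N) (h : EpalN N) (h' : PalN N) : False := by
  have h1 := h 0 (N-1) (by omega)
  have h2 := h' 0 (N-1) (by omega)
  rw [h2] at h1; simp at h1

lemma WW0 : WW 0 = true := by have := WW_LL 0; rwa [LL_zero] at this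

def InvE (M : ℕ) : Prop := ∀ n ≤ LL M, EpalN n → n = 0 ∨ ∃ j ≤ M, n = LL j ∧ (j % 4 = 1 ∨ j % 4 = 2)
def InvR (M : ℕ) : Prop := ∀ n ≤ LL M, PalN n → n = 0 ∨ n = 1 ∨ n = 3 ∨
  ∃ j ≤ M, n = LL j ∧ (j % 4 = 3 ∨ j % 4 = 0)

lemma InvE_follow {M n : ℕ} (h : InvE M) (hn : n ≤ LL M) (hp : EpalN n) : WW n = true := by
  rcases h n hn hp with rfl | ⟨j, -, rfl, -⟩
  · exact WW0
  · exact WW_LL j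

lemma InvR_follow {M n : ℕ} (h : InvR M) (hn : n ≤ LL M) (hp : PalN n) (hf : WW n = false) :
    n = 1 ∨ n = 3 := by
  rcases h n hn hp with rfl | h | h | ⟨j, -, rfl, -⟩
  · rw [WW0] at hf; simp at hf
  · exact Or.inl h
  · exact Or.inr h
  · rw [WW_LL] at hf; simp at hf

/-- extending the invariants by an E-step -/
lemma InvE_step {M : ℕ} (hM : InvE M) (h : (M+1) % 4 = 1 ∨ (M+1) % 4 = 2) : InvE (M+1) := by
  intro n hn hp
  by_cases h1 : n ≤ LL M
  · rcases hM n h1 hp with h | ⟨j, hj, h⟩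
    · exact Or.inl h
    · exact Or.inr ⟨j, by omega, h⟩
  · exact Or.inr ⟨M+1, le_rfl, le_antisymm hn (min_E M n h hp (by omega)), h⟩

lemma InvR_step {M : ℕ} (hM : InvR M) (h : (M+1) % 4 = 3 ∨ (M+1) % 4 = 0) : InvR (M+1) := by
  intro n hn hp
  by_cases h1 : n ≤ LL M
  · rcases hM n h1 hp with h | h | h | ⟨j, hj, h⟩
    · exact Or.inl h
    · exact Or.inr (Or.inl h)
    · exact Or.inr (Or.inr (Or.inl h))
    · exact Or.inr (Or.inr (Or.inr ⟨j, by omega, h⟩))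
  · exact Or.inr (Or.inr (Or.inr ⟨M+1, le_rfl, le_antisymm hn (min_R M n h hp (by omega)), h⟩))

lemma InvR_keep {M : ℕ} (hM : InvR M) (h : (M+1) % 4 = 1 ∨ (M+1) % 4 = 2)
    (hnew : ∀ n, LL M < n → n < LL (M+1) → PalN n → n = 1 ∨ n = 3) : InvR (M+1) := by
  intro n hn hp
  by_cases h1 : n ≤ LL M
  · rcases hM n h1 hp with h | h | h | ⟨j, hj, h⟩
    · exact Or.inl h
    · exact Or.inr (Or.inl h)
    · exact Or.inr (Or.inr (Or.inl h))
    · exact Or.inr (Or.inr (Or.inr ⟨j, by omega, h⟩))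
  · rcases hn.lt_or_eq with h2 | h2
    · have := hnew n (by omega) h2 hp
      tauto
    · subst h2
      exact (not_both (by omega) (epalN_LL _ h) hp).elim

lemma InvE_keep {M : ℕ} (hM : InvE M) (h : (M+1) % 4 = 3 ∨ (M+1) % 4 = 0)
    (hnew : ∀ n, LL M < n → n < LL (M+1) → EpalN n → False) : InvE (M+1) := by
  intro n hn hp
  by_cases h1 : n ≤ LL M
  · rcases hM n h1 hp with h | ⟨j, hj, h⟩
    · exact Or.inl h
    · exact Or.inr ⟨j, by omega, h⟩
  · rcases hn.lt_or_eq with h2 | h2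
    · exact (hnew n (by omega) h2 hp).elim
    · subst h2
      exact (not_both (by omega) hp (palN_LL _ h)).elim

/-- a new E-palindromic prefix length is at most the previous one -/
lemma InvE_le {M n : ℕ} (hM : InvE M) (hn : n < LL M) (hp : EpalN n) (r : ℕ)
    (hr : ∀ j < M, (j % 4 = 1 ∨ j % 4 = 2) → j ≤ r) : n ≤ LL r := by
  rcases hM n hn.le hp with h | ⟨j, hj, rfl, h⟩
  · omega
  · have : j < M := LL_mono.lt_iff_lt.1 hn
    exact LL_mono.monotone (hr j this h)

lemma InvR_le {M n : ℕ} (hM : InvR M) (hn : n < LL M) (hp : PalN n) (r : ℕ)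
    (hr : ∀ j < M, (j % 4 = 3 ∨ j % 4 = 0) → j ≤ r) : n ≤ LL r ∨ n = 1 ∨ n = 3 := by
  rcases hM n hn.le hp with h | h | h | ⟨j, hj, rfl, h⟩
  · omega
  · omega
  · omega
  · have : j < M := LL_mono.lt_iff_lt.1 hn
    exact Or.inl (LL_mono.monotone (hr j this h))

lemma step1 (k : ℕ) (hE : InvE (4*k)) (hR : InvR (4*k)) (hw1 : k ≠ 0 → WW 1 = false) :
    wp (4*k+1) = wp (4*k) ++ [true, false] ++ Ebar (wp (4*k)) ∧
    LL (4*k+1) = 2 * LL (4*k) + 2 ∧ InvE (4*k+1) ∧ InvR (4*k+1) := by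
  have hPm := palN_LL (4*k) (by omega)
  have hPN := epalN_LL (4*k+1) (by omega)
  have hlt := LL_lt (4*k)
  have hWm := WW_LL (4*k)
  have hk : k ≠ 0 → 4 ≤ LL (4*k) := fun h => le_trans (by omega) (LL_ge (4*k))
  have hk0 : k = 0 → LL (4*k) = 0 := by rintro rfl; exact LL_zero
  have hlow : 2 * LL (4*k) + 2 ≤ LL (4*k+1) := by
    by_contra hc
    have hev := epal_even hPN
    by_cases h2 : LL (4*k+1) ≤ 2 * LL (4*k)
    · have hq := refl_ERR hPN hPm hPm (2 * LL (4*k) - LL (4*k+1)) (by omega) (by omega) (by omega)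
      have h3 := InvE_follow hE (by omega) hq
      rw [hPm _ (LL (4*k+1) - LL (4*k) - 1) (by omega), hPN _ (LL (4*k)) (by omega), hWm] at h3
      simp at h3
    · omega
  have heq : wp (4*k+1) = wp (4*k) ++ [true, false] ++ Ebar (wp (4*k)) := by
    apply eq_E (4*k) (by omega)
    · unfold IsEPal
      rw [Ebar_append, Ebar_append, Ebar_Ebar]
      simp [Ebar]
    · exact ⟨[false] ++ Ebar (wp (4*k)), by simp⟩
    · simp only [List.length_append, Ebar_length]
      unfold LL at *
      simp; omega
    · simp only [List.length_append, Ebar_length]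
      unfold LL
      simp; omega
  have hN : LL (4*k+1) = 2 * LL (4*k) + 2 := by
    conv_lhs => rw [LL, heq]
    simp only [List.length_append, Ebar_length]
    unfold LL
    simp; omega
  refine ⟨heq, hN, InvE_step hE (by omega), InvR_keep hR (by omega) ?_⟩
  intro n hn1 hn2 hp
  by_cases hk' : k = 0
  · have := hk0 hk'; omega
  have hk4 := hk hk'
  exfalso
  have hWm1 : WW (LL (4*k) + 1) = false := by
    rw [hPN _ (LL (4*k)) (by omega), hWm]; rfl
  by_cases hn : n = LL (4*k) + 1
  · have h1 := hPm 0 (LL (4*k) - 1) (by omega)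
    have h2 := hp 1 (LL (4*k) - 1) (by omega)
    have h5 := hw1 hk'
    rw [h5, ← h1, WW0] at h2
    simp at h2
  · have hq := refl_ERR hPN hp hPm (n - LL (4*k) - 2) (by omega) (by omega) (by omega)
    have h3 := InvE_follow hE (by omega) hq
    rw [hp _ (LL (4*k) + 1) (by omega), hWm1] at h3
    simp at h3

lemma step2 (k : ℕ) (hE : InvE (4*k+1)) (hR : InvR (4*k+1))
    (hm : LL (4*k+1) = 2 * LL (4*k) + 2) :
    (∃ z : Word, wp (4*k+1) = z ++ wp (4*k-2) ∧ wp (4*k+2) = z ++ wp (4*k+1)) ∧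
    LL (4*k+2) + LL (4*k-2) = 2 * LL (4*k+1) ∧ InvE (4*k+2) ∧ InvR (4*k+2) := by
  have hPm := epalN_LL (4*k+1) (by omega)
  have hPN := epalN_LL (4*k+2) (by omega)
  have hlt : LL (4*k+1) < LL (4*k+2) := LL_lt (4*k+1)
  have hlt0 := LL_lt (4*k)
  have hltu : LL (4*k-2) < LL (4*k+1) := LL_mono (by omega)
  have hk : k ≠ 0 → 4 ≤ LL (4*k) := fun h => le_trans (by omega) (LL_ge (4*k))
  have hk0 : k = 0 → LL (4*k) = 0 ∧ LL (4*k-2) = 0 := by rintro rfl; exact ⟨LL_zero, LL_zero⟩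
  have hlow : 2 * LL (4*k+1) ≤ LL (4*k+2) + LL (4*k-2) := by
    by_contra hc
    have hq := refl_EEE hPN hPm hPm (2 * LL (4*k+1) - LL (4*k+2)) (by omega) (by omega) (by omega)
    have := InvE_le hE (by omega) hq (4*k-2) (by intro j hj hj2; omega)
    omega
  have hu : IsEPal (wp (4*k-2)) := by
    by_cases h : k = 0
    · subst h; simp [wp, IsEPal, Ebar]
    · exact isEPal_wp _ (by omega)
  obtain ⟨z, hz1, hz2, hz3⟩ := overlap_E hu (isEPal_wp (4*k+1) (by omega))
    ((wp_pre (4*k-2)).trans (wp_prefix (by omega)))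
  have hzl := congrArg List.length hz1
  simp only [List.length_append] at hzl
  have heq : wp (4*k+2) = z ++ wp (4*k+1) := by
    apply eq_E (4*k+1) (by omega) _ hz2 hz3
    · change _ ≤ LL (4*k+2)
      rw [List.length_append]; unfold LL at *; omega
    · rw [List.length_append]; unfold LL at *; omega
  have hN : LL (4*k+2) + LL (4*k-2) = 2 * LL (4*k+1) := by
    have := congrArg List.length heq
    rw [List.length_append] at this
    unfold LL at *; omega
  have hE' : InvE (4*k+2) := InvE_step hE (by omega)
  refine ⟨⟨z, hz1, heq⟩, hN, hE', InvR_keep hR (by omega) ?_⟩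
  intro n hn1 hn2 hp
  replace hn2 : n < LL (4*k+2) := hn2
  have hp1 := refl_ERR hPN hp hp (2 * n - LL (4*k+2)) (by omega) (by omega) (by omega)
  have hp1le := InvE_le hE' (by omega) hp1 (4*k+1) (by intro j hj hj2; omega)
  have hp1eq : 2 * n - LL (4*k+2) = LL (4*k+1) := by
    by_contra hne
    have := InvE_le hE (by omega) hp1 (4*k-2) (by intro j hj hj2; omega)
    omega
  have hq := refl_ERE hPN hp hPm (n + LL (4*k+1) - LL (4*k+2)) (by omega) (by omega) (by omega)
  have := InvR_le hR (by omega) hq (4*k) (by intro j hj hj2; omega)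
  by_cases h : k = 0
  · have := hk0 h; omega
  · have := hk h; omega

lemma step3 (k : ℕ) (hE : InvE (4*k+2)) (hR : InvR (4*k+2))
    (h1 : WW 1 = false) (h2 : WW 2 = true) (h3 : WW 3 = false) (hm4 : 4 ≤ LL (4*k+2)) :
    (∃ z : Word, wp (4*k+2) = z ++ [false, true, false] ∧
      wp (4*k+3) = z ++ (wp (4*k+2)).reverse) ∧
    LL (4*k+3) + 3 = 2 * LL (4*k+2) ∧ InvE (4*k+3) ∧ InvR (4*k+3) := by
  have hPm := epalN_LL (4*k+2) (by omega)
  have hPN := palN_LL (4*k+3) (by omega)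
  have hlt : LL (4*k+2) < LL (4*k+3) := LL_lt (4*k+2)
  have hWm := WW_LL (4*k+2)
  have hlow : 2 * LL (4*k+2) ≤ LL (4*k+3) + 3 := by
    by_contra hc
    have hq := refl_REE hPN hPm hPm (2 * LL (4*k+2) - LL (4*k+3)) (by omega) (by omega) (by omega)
    have := InvR_follow hR (by omega) hq (by
      rw [hPm _ (LL (4*k+3) - LL (4*k+2) - 1) (by omega), hPN _ (LL (4*k+2)) (by omega), hWm]; rfl)
    omega
  obtain ⟨z, hz1, hz2, hz3⟩ := overlap_3 (isEPal_wp (4*k+2) (by omega)) (by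
    rw [List.prefix_iff_getElem]
    refine ⟨hm4, ?_⟩
    intro i hi
    simp only [wp_get]
    simp at hi
    interval_cases i <;> simp [WW0, h1, h2, h3])
  have hzl := congrArg List.length hz1
  simp only [List.length_append, List.length_cons, List.length_nil] at hzl
  have heq : wp (4*k+3) = z ++ (wp (4*k+2)).reverse := by
    apply eq_R (4*k+2) (by omega) _ hz2 hz3
    · change _ ≤ LL (4*k+3)
      rw [List.length_append, List.length_reverse]; unfold LL at *; omega
    · rw [List.length_append, List.length_reverse]; unfold LL at *; omega
  have hN : LL (4*k+3) + 3 = 2 * LL (4*k+2) := by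
    have := congrArg List.length heq
    rw [List.length_append, List.length_reverse] at this
    unfold LL at *; omega
  refine ⟨⟨z, hz1, heq⟩, hN, InvE_keep hE (by omega) ?_, InvR_step hR (by omega)⟩
  intro n hn1 hn2 hp
  replace hn2 : n < LL (4*k+3) := hn2
  have hq := refl_REE hPN hp hPm (n + LL (4*k+2) - LL (4*k+3)) (by omega) (by omega) (by omega)
  have := InvR_follow hR (by omega) hq (by
    rw [hp _ (LL (4*k+2) - 4) (by omega), hPm _ 3 (by omega), h3]; rfl)
  omega

lemma step4 (k : ℕ) (hE : InvE (4*k+3)) (hR : InvR (4*k+3))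
    (h1 : WW 1 = false) (h3 : WW 3 = false)
    (hm : LL (4*k+3) + 3 = 2 * LL (4*k+2)) :
    (∃ z : Word, wp (4*k+3) = z ++ wp (4*k) ∧ wp (4*k+4) = z ++ wp (4*k+3)) ∧
    InvE (4*k+4) ∧ InvR (4*k+4) := by
  have hPm := palN_LL (4*k+3) (by omega)
  have hPN := palN_LL (4*k+4) (by omega)
  have hlt : LL (4*k+3) < LL (4*k+4) := LL_lt (4*k+3)
  have hWm := WW_LL (4*k+3)
  have hltu : LL (4*k) < LL (4*k+3) := LL_mono (by omega)
  have hk : k ≠ 0 → 4 ≤ LL (4*k) := fun h => le_trans (by omega) (LL_ge (4*k))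
  have hk0 : k = 0 → LL (4*k) = 0 := by rintro rfl; exact LL_zero
  have hlow : 2 * LL (4*k+3) ≤ LL (4*k+4) + LL (4*k) := by
    by_contra hc
    have hq := refl_RRR hPN hPm hPm (2 * LL (4*k+3) - LL (4*k+4)) (by omega) (by omega) (by omega)
    have hf : WW (2 * LL (4*k+3) - LL (4*k+4)) = true := by
      rw [hPm _ (LL (4*k+4) - LL (4*k+3) - 1) (by omega), hPN _ (LL (4*k+3)) (by omega), hWm]
    rcases InvR_le hR (by omega) hq (4*k) (by intro j hj hj2; omega) with h | h | h
    · omega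
    · rw [h, h1] at hf; simp at hf
    · rw [h, h3] at hf; simp at hf
  obtain ⟨z, hz1, hz2, hz3⟩ := overlap_R (isPal_wp (4*k) (by omega)) (isPal_wp (4*k+3) (by omega))
    ((wp_pre (4*k)).trans (wp_prefix (by omega)))
  have hzl := congrArg List.length hz1
  simp only [List.length_append] at hzl
  have heq : wp (4*k+4) = z ++ wp (4*k+3) := by
    apply eq_R (4*k+3) (by omega) _ hz2 hz3
    · change _ ≤ LL (4*k+4)
      rw [List.length_append]; unfold LL at *; omega
    · rw [List.length_append]; unfold LL at *; omega
  have hN : LL (4*k+4) + LL (4*k) = 2 * LL (4*k+3) := by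
    have := congrArg List.length heq
    rw [List.length_append] at this
    unfold LL at *; omega
  have hR' : InvR (4*k+4) := InvR_step hR (by omega)
  refine ⟨⟨z, hz1, heq⟩, InvE_keep hE (by omega) ?_, hR'⟩
  intro n hn1 hn2 hp
  replace hn2 : n < LL (4*k+4) := hn2
  have hev := epal_even hp
  have hp1 := refl_REE hPN hp hp (2 * n - LL (4*k+4)) (by omega) (by omega) (by omega)
  have hp1le := InvR_le hR' (by omega) hp1 (4*k+3) (by intro j hj hj2; omega)
  have hp1eq : 2 * n - LL (4*k+4) = LL (4*k+3) := by
    by_contra hne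
    by_cases h : k = 0
    · have := hk0 h
      have := InvR_le hR' (by omega) hp1 (4*k+3) (by intro j hj hj2; omega)
      by_cases h' : 2 * n - LL (4*k+4) < LL (4*k+3)
      · have := InvR_le hR h' hp1 (4*k) (by intro j hj hj2; omega)
        omega
      · omega
    · have := hk h
      have := InvR_le hR (by omega) hp1 (4*k) (by intro j hj hj2; omega)
      omega
  have hq := refl_RER hPN hp hPm (n + LL (4*k+3) - LL (4*k+4)) (by omega) (by omega) (by omega)
  have := InvE_le hE (by omega) hq (4*k+2) (by intro j hj hj2; omega)
  by_cases h : k = 0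
  · have := hk0 h; omega
  · have := hk h; omega

lemma inv0 : InvE 0 ∧ InvR 0 := by
  constructor
  · intro n hn _
    rw [LL_zero] at hn; left; omega
  · intro n hn _
    rw [LL_zero] at hn; left; omega

lemma base : LL 2 = 4 ∧ WW 1 = false ∧ WW 2 = true ∧ WW 3 = false := by
  obtain ⟨-, a, b, c⟩ := step1 0 inv0.1 inv0.2 (by simp)
  obtain ⟨-, d, -⟩ := step2 0 b c a
  have e1 : LL 1 = 2 := by simpa [LL_zero] using a
  have e2 : LL 2 = 4 := by simpa [LL_zero, e1] using d
  have w2 := WW_LL 1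
  rw [e1] at w2
  have w1 := epalN_LL 1 (by omega) 1 0 (by omega)
  have w3 := epalN_LL 2 (by omega) 3 0 (by omega)
  rw [WW0] at w1 w3
  exact ⟨e2, w1, w2, w3⟩

lemma inv_all (k : ℕ) : InvE (4*k) ∧ InvR (4*k) := by
  obtain ⟨e2, w1, w2, w3⟩ := base
  induction k with
  | zero => exact inv0
  | succ k ih =>
    obtain ⟨-, a, b, c⟩ := step1 k ih.1 ih.2 (fun _ => w1)
    obtain ⟨-, d, e, f⟩ := step2 k b c a
    obtain ⟨-, g, h, i⟩ := step3 k e f w1 w2 w3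
      (by rw [← e2]; exact LL_mono.monotone (by omega))
    exact (step4 k h i w1 w3 g).2

/-- the recurrence relations between consecutive prefixes of
`u_p = u(1^ω, (EERR)^ω)` (overlap products written via explicit decompositions;
note `wp (4*k-2) = []` for `k = 0`, matching the convention `w_z = ε` for `z ≤ 0`). -/
theorem up_prefix_recurrences (k : ℕ) :
    wp (4*k+1) = wp (4*k) ++ [true, false] ++ Ebar (wp (4*k)) ∧
    (∃ z : Word, wp (4*k+1) = z ++ wp (4*k-2) ∧ wp (4*k+2) = z ++ wp (4*k+1)) ∧
    (∃ z : Word, wp (4*k+2) = z ++ [false, true, false] ∧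
      wp (4*k+3) = z ++ (wp (4*k+2)).reverse) ∧
    (∃ z : Word, wp (4*k+3) = z ++ wp (4*k) ∧ wp (4*k+4) = z ++ wp (4*k+3)) := by

  obtain ⟨e2, w1, w2, w3⟩ := base
  have ih := inv_all k
  obtain ⟨r1, a, b, c⟩ := step1 k ih.1 ih.2 (fun _ => w1)
  obtain ⟨r2, d, e, f⟩ := step2 k b c a
  obtain ⟨r3, g, h, i⟩ := step3 k e f w1 w2 w3
    (by rw [← e2]; exact LL_mono.monotone (by omega))
  exact ⟨r1, r2, r3, (step4 k h i w1 w3 g).1⟩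
end

section
/- In u_p = u(1^ω, (EERR)^ω), for every k ∈ ℕ the prefixes w_{4k+1} and w_{4k+3} are strong bispecial factors; moreover 1·w_{4k+1}·0 is a central factor of w_{4k+5} and 0·w_{4k+3}·0 is a central factor of w_{4k+7}. -/
namespace UP

def th (c : Bool) (w : Word) : Word := (w.map (fun b => c ^^ b)).reverse

def P (c : Bool) (w : Word) : Prop := th c w = w

@[simp] lemma th_len (c : Bool) (w : Word) : (th c w).length = w.length := by simp [th]
@[simp] lemma th_app (c : Bool) (x y : Word) : th c (x ++ y) = th c y ++ th c x := by simp [th]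
@[simp] lemma th_cons (c b : Bool) (x : Word) : th c (b :: x) = th c x ++ [c ^^ b] := by simp [th]
@[simp] lemma th_nil (c : Bool) : th c [] = [] := rfl
@[simp] lemma th_th (c : Bool) (w : Word) : th c (th c w) = w := by
  simp [th, List.map_reverse, Function.comp_def]

lemma th_comm (a c : Bool) (w : Word) : th a (th c w) = th c (th a w) := by
  simp only [th, List.map_reverse, List.map_map, List.reverse_reverse]
  congr 1
  funext b
  cases a <;> cases c <;> cases b <;> rfl

def IsCl (c : Bool) (w v : Word) : Prop :=
  w <+: v ∧ P c v ∧ ∀ v', w <+: v' → P c v' → v.length ≤ v'.length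

lemma cl_unique {c : Bool} {w v x s : Word} (h : IsCl c w v) (hw : w = x ++ s) (hs : P c s)
    (hm : ∀ s', s' <:+ w → P c s' → s'.length ≤ s.length) : v = x ++ s ++ th c x := by
  obtain ⟨⟨t, rfl⟩, hP, hmin⟩ := h
  have h1 : (w ++ t).length ≤ (x ++ s ++ th c x).length := by
    apply hmin
    · rw [hw]; exact List.prefix_append _ _
    · unfold P at *; simp [hs]
  have hl : w.length = x.length + s.length := by rw [hw]; simp
  simp at h1
  have htw : t.length ≤ w.length := by omega
  have hP' : th c t <+: w := by
    apply List.prefix_of_prefix_length_le (l₃ := w ++ t)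
    · have : th c (w ++ t) = w ++ t := hP
      rw [← this]; simp
    · simp
    · simpa using htw
  obtain ⟨s', hs'⟩ := hP'
  have hPs : P c s' := by
    have : th c (w ++ t) = w ++ t := hP
    rw [← hs'] at this
    simp at this
    exact this
  have h2 := hm s' ⟨_, hs'⟩ hPs
  have h3 : w.length = t.length + s'.length := by rw [← hs']; simp
  have h4 : th c t = x ∧ s' = s := by
    apply List.append_inj (hs'.trans hw)
    simp; omega
  rw [← h4.1, ← h4.2, hs']; simp

lemma tri {w v p : Word} {b : Bool} (h1 : w ++ [true] <+: v) (h2 : p ++ [b] <+: v) :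
    (p ++ [b] <+: w) ∨ (p = w ∧ b = true) ∨ (w ++ [true] <+: p) := by
  rcases lt_trichotomy p.length w.length with h | h | h
  · left
    exact List.prefix_of_prefix_length_le h2 ((List.prefix_append _ _).trans h1) (by simp; omega)
  · right; left
    have := (List.prefix_of_prefix_length_le h2 h1 (by simp; omega)).eq_of_length (by simp; omega)
    have h3 := List.append_inj this h
    simpa using h3
  · right; right
    exact List.prefix_of_prefix_length_le h1 ((List.prefix_append _ _).trans h2) (by simp; omega)

lemma P_get {c : Bool} {v : Word} (h : P c v) (i j : ℕ) (hij : i + j + 1 = v.length) :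
    v.getD i false = (c ^^ v.getD j false) := by
  have hi : i < v.length := by omega
  have hj : j < v.length := by omega
  have h1 : (th c v)[i]? = v[i]? := by rw [show th c v = v from h]
  have e : v.length - 1 - i = j := by omega
  simp [th, List.getElem?_reverse, hi, e, hj] at h1
  simp [List.getD, hi, hj, h1]

lemma P_of_get {c : Bool} {v : Word}
    (h : ∀ i j : ℕ, i + j + 1 = v.length → v.getD i false = (c ^^ v.getD j false)) : P c v := by
  unfold P
  apply List.ext_getElem (by simp)
  intro i h1 h2
  have := h i (v.length - 1 - i) (by omega)
  have h3 : v.length - 1 - i < v.length := by omega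
  simp [List.getD, h2, h3] at this
  simp [th, this]

lemma pre_get {p v : Word} (h : p <+: v) (i : ℕ) (hi : i < p.length) :
    v.getD i false = p.getD i false := by
  obtain ⟨t, rfl⟩ := h
  simp [List.getD, List.getElem?_append_left hi]

lemma key {a b : Bool} {w v p : Word} (hw : P a w) (hv : P b v) (hwv : w ++ [true] <+: v)
    (hpv : p <+: v) (hp : P (!b) p) (hl : w.length < p.length)
    (hd : v.length - p.length ≤ w.length) :
    ∃ q : Word, P (!a) q ∧ q ++ [false] <+: w ∧ q.length + v.length = w.length + p.length := by
  have hpl := hpv.length_le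
  obtain ⟨d, hdd⟩ : ∃ d, v.length = p.length + d := ⟨v.length - p.length, by omega⟩
  have anti : ∀ j, j < p.length → v.getD (j + d) false = !(v.getD j false) := by
    intro j hj
    have h1 := P_get hv (j + d) (p.length - 1 - j) (by omega)
    have h2 := P_get hp (p.length - 1 - j) j (by omega)
    rw [← pre_get hpv _ (by omega), ← pre_get hpv _ hj] at h2
    rw [h1, h2]
    cases b <;> simp
  have hwl : v.getD w.length false = true := by
    rw [pre_get hwv _ (by simp)]
    simp [List.getD]
  have hwv' : w <+: v := (List.prefix_append _ _).trans hwv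
  have hd0 : 0 < d := by
    rcases Nat.eq_zero_or_pos d with h | h
    · have := anti w.length hl
      subst h
      simp only [Nat.add_zero] at this
      rw [hwl] at this; simp at this
    · exact h
  have hdw : d ≤ w.length := by omega
  have h0 : v.getD (w.length - d) false = false := by
    have := anti (w.length - d) (by omega)
    rw [show w.length - d + d = w.length by omega, hwl] at this
    simpa using this.symm
  refine ⟨w.take (w.length - d), ?_, ?_, ?_⟩
  · apply P_of_get
    intro i j hij
    have hlt : (w.take (w.length - d)).length = w.length - d := by simp
    rw [hlt] at hij
    have ht := List.take_prefix (w.length - d) w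
    rw [← pre_get ht i (by omega), ← pre_get ht j (by omega)]
    rw [P_get hw i (j + d) (by omega)]
    rw [← pre_get hwv' _ (by omega), anti j (by omega), pre_get hwv' _ (by omega)]
    cases a <;> simp
  · rw [pre_get hwv' _ (by omega)] at h0
    have hlt : w.length - d < w.length := by omega
    have : w.take (w.length - d) ++ [false] = w.take (w.length - d + 1) := by
      rw [List.take_succ_eq_append_getElem hlt]
      simp [List.getD, hlt] at h0
      rw [h0]
    rw [this]
    exact List.take_prefix _ _
  · simp; omega

/-- pseudopalindromic suffixes of `w1` -/
lemma maxsuf {a c : Bool} {w s : Word} (hw : P a w) (hs : s <:+ w ++ [true]) (hP : P c s) :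
    s.length ≤ 1 ∨ ∃ p, P c p ∧ p ++ [a ^^ !c] <+: w ∧ s.length = p.length + 2 := by
  rcases s with _ | ⟨d, s⟩
  · simp
  rcases List.eq_nil_or_concat s with rfl | ⟨s', e, rfl⟩
  · simp
  right
  obtain ⟨y, hy⟩ := hs
  have h1 : (y ++ d :: s') ++ [e] = w ++ [true] := by rw [← hy]; simp
  have h2 := List.append_inj' h1 rfl
  obtain ⟨h2, h3⟩ := h2
  simp at h3
  subst h3
  have hP' : th c (d :: (s' ++ [true])) = d :: (s' ++ [true]) := by
    rw [List.concat_eq_append] at hP; exact hP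
  simp at hP'
  obtain ⟨hd, hs'⟩ := hP'
  have h4 := hs'
  refine ⟨th a s', ?_, ?_, by simp⟩
  · unfold P; rw [th_comm, h4.1]
  · have : th a w = w := hw
    rw [← this, ← h2, hd]
    simp

/-- closure of same type -/
lemma same_cl {c : Bool} {w v q y : Word} (hw : P c w) (hq : P c q) (e : w = q ++ true :: y)
    (hm : ∀ p, P c p → p ++ [true] <+: w → p.length ≤ q.length) (h : IsCl c (w ++ [true]) v) :
    v = w ++ true :: y ∧ v = th c y ++ (!c) :: w := by
  have e2 : w = th c y ++ (!c) :: q := by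
    have h1 : th c w = w := hw
    have h2 : th c q = q := hq
    rw [← h1]
    conv_lhs => rw [e]
    simp [h2]
  have h1 : v = th c y ++ ((!c) :: q ++ [true]) ++ th c (th c y) := by
    apply cl_unique h
    · conv_lhs => rw [e2]
      simp
    · have h2 : th c q = q := hq
      unfold P; simp [h2]
    · intro s' h1 h2
      rcases maxsuf hw h1 h2 with h3 | ⟨p, h3, h4, h5⟩
      · simp; omega
      · have := hm p h3 (by simpa using h4)
        simp; omega
  constructor
  · rw [h1]; conv_rhs => rw [e2]
    simp
  · rw [h1]; conv_rhs => rw [e]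
    simp

structure Inv (A D B : Word) : Prop where
  pA : P false A
  pB : P true B
  pre : A ++ [true] <+: B
  pre4 : [true, false, true, false] <+: B
  E0 : ∀ p, P true p → p ++ [false] <+: B → False
  R0 : ∀ p, P false p → p ++ [false] <+: B → p.length ≤ 3
  RX : ∀ p, P false p → p ++ [true] <+: B ++ [true] → p.length ≤ A.length
  D1 : D = A ++ true :: false :: th true A
  D2 : false :: D <:+ B
  D3 : D ++ [true] <+: B

structure Inv2 (B C A : Word) : Prop where
  pA : P false A
  pC : P false C
  pB : P true B
  pre : B ++ [true] <+: C
  pre' : C ++ [true] <+: A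
  pre4 : [true, false, true, false] <+: B
  E0 : ∀ p, P true p → p ++ [false] <+: A → False
  R0 : ∀ p, P false p → p ++ [false] <+: A → p.length ≤ 3
  EX : ∀ p, P true p → p ++ [true] <+: A ++ [true] → p.length ≤ B.length
  C1 : ∃ z, B = z ++ [true, false, true, false] ∧
    C = z ++ [true, false, true, false, true] ++ th false z
  C2 : true :: C <:+ A

lemma pre_right {p x : Word} {b c : Bool} (h : p ++ [b] <+: x ++ [c]) : p <+: x :=
  List.prefix_of_prefix_length_le ((List.prefix_append _ _).trans h) (List.prefix_append _ _)
    (by have := h.length_le; simp at this; omega)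

lemma pre_cases {p w v : Word} (h1 : w ++ [true] <+: v) (h2 : p <+: v) :
    p <+: w ∨ w ++ [true] <+: p := by
  rcases le_or_gt p.length w.length with h | h
  · left; exact List.prefix_of_prefix_length_le h2 ((List.prefix_append _ _).trans h1) h
  · right; exact List.prefix_of_prefix_length_le h1 h2 (by simp; omega)

lemma len_of_pre {w p : Word} {b : Bool} (h : w ++ [b] <+: p) : w.length < p.length := by
  have := h.length_le
  simp at this; omega

lemma step1 {A D B C A' : Word} (I : Inv A D B) (hC : IsCl false (B ++ [true]) C)
    (hA : IsCl false (C ++ [true]) A') : Inv2 B C A' := by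
  obtain ⟨hC1, pC, hCm⟩ := hC
  obtain ⟨hA1, pA', hAm⟩ := hA
  obtain ⟨z, hz, hCz⟩ : ∃ z, B = z ++ [true, false, true, false] ∧
      C = z ++ [true, false, true, false, true] ++ th false z := by
    obtain ⟨t, ht⟩ := I.pre4
    have hB : B = th true t ++ [true, false, true, false] := by
      have : th true B = B := I.pB
      rw [← this, ← ht]; simp
    refine ⟨th true t, hB, ?_⟩
    apply cl_unique ⟨hC1, pC, hCm⟩
    · rw [hB]; simp
    · simp [P]
    · intro s h1 h2
      rcases maxsuf I.pB h1 h2 with h3 | ⟨p, h3, h4, h5⟩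
      · simp; omega
      · have := I.R0 p h3 (by simpa using h4)
        simp; omega
  have lC : C.length + 3 = 2 * B.length := by rw [hz, hCz]; simp; omega
  have hBC : B <+: C := (List.prefix_append _ _).trans hC1
  have hCA : C <+: A' := (List.prefix_append _ _).trans hA1
  obtain ⟨y, hy⟩ := I.pre.trans hBC
  have hyC : C = A ++ true :: y := by rw [← hy]; simp
  obtain ⟨eA1, eA2⟩ := same_cl pC I.pA hyC (by
    intro p h1 h2
    rcases pre_cases hC1 ((List.prefix_append _ _).trans h2) with h | h
    · apply I.RX p h1
      exact List.prefix_of_prefix_length_le h2 hC1 (by have := h.length_le; simp; omega)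
    · have := hCm p h h1
      have := len_of_pre h2
      omega) ⟨hA1, pA', hAm⟩
  have lA : A'.length + A.length = 2 * C.length := by rw [eA1]; rw [hyC]; simp; omega
  have X1 : ∀ p, P true p → p <+: C → p.length ≤ B.length := by
    intro p h1 h2
    by_contra hh
    have := h2.length_le
    obtain ⟨q, hq1, hq2, hq3⟩ := key I.pB pC hC1 h2 h1 (by omega) (by omega)
    have := I.R0 q hq1 hq2
    omega
  have X2 : ∀ p, P true p → p <+: A' → p.length ≤ B.length := by
    intro p h1 h2
    rcases pre_cases hA1 h2 with h | h
    · exact X1 p h1 h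
    · exfalso
      have := len_of_pre h
      obtain ⟨q, hq1, hq2, hq3⟩ := key pC pA' hA1 h2 h1 (by omega) (by omega)
      have h5 := X1 q hq1 ((List.prefix_append _ _).trans hq2)
      rcases tri hC1 hq2 with h | h | h
      · exact I.E0 q hq1 h
      · simp at h
      · have := len_of_pre h; omega
  refine ⟨pA', pC, I.pB, hC1, hA1, I.pre4, ?_, ?_, ?_, ⟨z, hz, hCz⟩, ⟨_, eA2.symm⟩⟩
  · intro p h1 h2
    have h3 := X2 p h1 ((List.prefix_append _ _).trans h2)
    rcases tri (hC1.trans hCA) h2 with h | h | h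
    · exact I.E0 p h1 h
    · simp at h
    · have := len_of_pre h; omega
  · intro p h1 h2
    rcases tri (hC1.trans hCA) h2 with h | h | h
    · exact I.R0 p h1 h
    · simp at h
    · have l1 := hCm p h h1
      rcases tri hA1 h2 with h | h | h
      · have := len_of_pre h; omega
      · simp at h
      · have := hAm p h h1
        have := len_of_pre h2
        omega
  · intro p h1 h2
    exact X2 p h1 (pre_right h2)

lemma step2 {B C A D B' : Word} (I : Inv2 B C A) (hD : IsCl true (A ++ [true]) D)
    (hB : IsCl true (D ++ [true]) B') : Inv A D B' := by
  obtain ⟨hD1, pD, hDm⟩ := hD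
  obtain ⟨hB1, pB', hBm⟩ := hB
  have hBC : B <+: C := (List.prefix_append _ _).trans I.pre
  have hCA : C <+: A := (List.prefix_append _ _).trans I.pre'
  have hAD : A <+: D := (List.prefix_append _ _).trans hD1
  have hDB : D <+: B' := (List.prefix_append _ _).trans hB1
  have hBA : B ++ [true] <+: A := I.pre.trans hCA
  have eD : D = A ++ true :: false :: th true A := by
    have := cl_unique (x := A ++ [true]) (s := []) ⟨hD1, pD, hDm⟩ (by simp) rfl (by
      intro s h1 h2
      rcases maxsuf I.pA h1 h2 with h3 | ⟨p, h3, h4, h5⟩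
      · rcases s with _ | ⟨d, s⟩
        · simp
        · simp at h3
          subst h3
          cases d <;> simp [P] at h2
      · exact (I.E0 p h3 (by simpa using h4)).elim)
    rw [this]; simp
  have lD : D.length = 2 * A.length + 2 := by rw [eD]; simp; omega
  have l4 := I.pre4.length_le
  simp at l4
  obtain ⟨y, hy⟩ := hBA.trans hAD
  have hyD : D = B ++ true :: y := by rw [← hy]; simp
  obtain ⟨eB1, eB2⟩ := same_cl pD I.pB hyD (by
    intro p h1 h2
    rcases pre_cases hD1 ((List.prefix_append _ _).trans h2) with h | h
    · apply I.EX p h1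
      exact List.prefix_of_prefix_length_le h2 hD1 (by have := h.length_le; simp; omega)
    · have := hDm p h h1
      have := len_of_pre h2
      omega) ⟨hB1, pB', hBm⟩
  have lB : B'.length + B.length = 2 * D.length := by rw [eB1]; rw [hyD]; simp; omega
  have X1 : ∀ p, P false p → p <+: D → p.length ≤ A.length := by
    intro p h1 h2
    by_contra hh
    have hl := h2.length_le
    rcases Nat.lt_or_ge p.length (A.length + 2) with h | h
    · have e : A ++ [true] = p :=
        (List.prefix_of_prefix_length_le hD1 h2 (by simp; omega)).eq_of_length (by simp; omega)
      subst e
      obtain ⟨t, ht⟩ := I.pre4.trans (hBC.trans hCA)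
      have e1 : th false A = A := I.pA
      have e2 : th false (A ++ [true]) = A ++ [true] := h1
      simp [e1] at e2
      rw [← ht] at e2
      simp at e2
    · obtain ⟨q, hq1, hq2, hq3⟩ := key I.pA pD hD1 h2 h1 (by omega) (by omega)
      exact I.E0 q hq1 hq2
  have X2 : ∀ p, P false p → p <+: B' → p.length ≤ A.length := by
    intro p h1 h2
    rcases pre_cases hB1 h2 with h | h
    · exact X1 p h1 h
    · exfalso
      have := len_of_pre h
      obtain ⟨q, hq1, hq2, hq3⟩ := key pD pB' hB1 h2 h1 (by omega) (by omega)
      have h5 := X1 q hq1 ((List.prefix_append _ _).trans hq2)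
      rcases tri hD1 hq2 with h | h | h
      · have := I.R0 q hq1 h
        omega
      · simp at h
      · have := len_of_pre h; omega
  refine ⟨I.pA, pB', hD1.trans hDB, I.pre4.trans (hBC.trans (hCA.trans (hAD.trans hDB))),
    ?_, ?_, ?_, eD, ⟨_, eB2.symm⟩, hB1⟩
  · intro p h1 h2
    rcases tri (hD1.trans hDB) h2 with h | h | h
    · exact I.E0 p h1 h
    · simp at h
    · have l1 := hDm p h h1
      rcases tri hB1 h2 with h | h | h
      · have := len_of_pre h; omega
      · simp at h
      · have := hBm p h h1
        have := len_of_pre h2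
        omega
  · intro p h1 h2
    have h3 := X2 p h1 ((List.prefix_append _ _).trans h2)
    rcases tri (hD1.trans hDB) h2 with h | h | h
    · exact I.R0 p h1 h
    · simp at h
    · have := len_of_pre h; omega
  · intro p h1 h2
    exact X2 p h1 (pre_right h2)

lemma P_true {w : Word} : P true w ↔ IsEPal w := by
  have : (fun b => true ^^ b) = Bool.not := by funext b; cases b <;> rfl
  unfold P IsEPal th Ebar; rw [this]

lemma P_false {w : Word} : P false w ↔ IsPal w := by simp [P, IsPal, th]

lemma isCl_e (w : Word) : IsCl true w (epalCl w) := by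
  obtain ⟨⟨h1, h2⟩, h3⟩ := (exists_minLength (epal_ext w)).choose_spec
  exact ⟨h1, P_true.2 h2, fun v' h4 h5 => h3 v' ⟨h4, P_true.1 h5⟩⟩

lemma isCl_r (w : Word) : IsCl false w (palCl w) := by
  obtain ⟨⟨h1, h2⟩, h3⟩ := (exists_minLength (pal_ext w)).choose_spec
  exact ⟨h1, P_false.2 h2, fun v' h4 h5 => h3 v' ⟨h4, P_false.1 h5⟩⟩

lemma wp_e {n : ℕ} (h : (n+1) % 4 = 1 ∨ (n+1) % 4 = 2) :
    IsCl true (wp n ++ [true]) (wp (n+1)) := by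
  rw [wp, if_pos h]; exact isCl_e _

lemma wp_r {n : ℕ} (h : ¬ ((n+1) % 4 = 1 ∨ (n+1) % 4 = 2)) :
    IsCl false (wp n ++ [true]) (wp (n+1)) := by
  rw [wp, if_neg h]; exact isCl_r _

lemma wp1 : wp 1 = [true, false] := by
  refine cl_unique (x := [true]) (s := []) (wp_e (n := 0) (by simp)) (by simp [wp]) rfl ?_
  intro s h1 h2
  have h3 : s <:+ [true] := by simpa [wp] using h1
  rw [← List.mem_tails] at h3
  simp at h3
  rcases h3 with rfl | rfl
  · simp [P] at h2
  · simp

lemma wp2 : wp 2 = [true, false, true, false] := by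
  refine cl_unique (x := [true]) (s := [false, true]) (wp_e (n := 1) (by simp)) (by simp [wp1])
    rfl ?_
  intro s h1 h2
  have h3 : s <:+ [true, false, true] := by simpa [wp1] using h1
  rw [← List.mem_tails] at h3
  simp at h3
  rcases h3 with rfl | rfl | rfl | rfl
  · simp [P] at h2
  all_goals simp

lemma base : Inv (wp 0) (wp 1) (wp 2) := by
  rw [wp1, wp2, wp]
  refine ⟨rfl, rfl, by simp, by simp, ?_, ?_, ?_, rfl, ⟨[true], rfl⟩, ⟨[false], rfl⟩⟩
  · intro p h1 h2
    have h3 : p <+: [true, false, true, false] := (List.prefix_append _ _).trans h2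
    rw [← List.mem_inits] at h3
    simp at h3
    rcases h3 with rfl | rfl | rfl | rfl | rfl <;> simp [P] at h1 h2
  · intro p h1 h2
    have := h2.length_le
    simp at this; omega
  · intro p h1 h2
    have h3 : p <+: [true, false, true, false] := pre_right h2
    rw [← List.mem_inits] at h3
    simp at h3
    rcases h3 with rfl | rfl | rfl | rfl | rfl <;> simp [P] at h1 h2 ⊢

lemma inv1 (k : ℕ) : Inv (wp (4*k)) (wp (4*k+1)) (wp (4*k+2)) := by
  induction k with
  | zero => exact base
  | succ k ih =>
    have h2 := step1 ih (wp_r (n := 4*k+2) (by omega)) (wp_r (n := 4*k+2+1) (by omega))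
    exact step2 h2 (wp_e (n := 4*k+3+1) (by omega)) (wp_e (n := 4*k+3+1+1) (by omega))

lemma inv2 (k : ℕ) : Inv2 (wp (4*k+2)) (wp (4*k+3)) (wp (4*k+4)) :=
  step1 (inv1 k) (wp_r (n := 4*k+2) (by omega)) (wp_r (n := 4*k+2+1) (by omega))

lemma infix_th {c : Bool} {x w : Word} (hw : P c w) (h : x <:+: w) : th c x <:+: w := by
  obtain ⟨s, t, rfl⟩ := h
  have : th c (s ++ x ++ t) = s ++ x ++ t := hw
  rw [← this]
  exact ⟨th c t, th c s, by simp⟩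

lemma infix_glue {a b : Bool} {x y w v : Word} (h1 : a :: y <:+ w) (h2 : x ++ [b] <+: y)
    (h3 : w <+: v) : a :: x ++ [b] <:+: v := by
  obtain ⟨s, rfl⟩ := h1
  obtain ⟨t, rfl⟩ := h2
  obtain ⟨r, rfl⟩ := h3
  exact ⟨s, t ++ r, by simp⟩

lemma infix_glue' {a b : Bool} {x w v : Word} (h1 : a :: x <:+ w) (h2 : w ++ [b] <+: v) :
    a :: x ++ [b] <:+: v := by
  obtain ⟨s, rfl⟩ := h1
  obtain ⟨r, rfl⟩ := h2
  exact ⟨s, r, by simp⟩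

end UP

open UP in
/-- `w_{4k+1}` and `w_{4k+3}` are strong bispecial factors of `u_p`;
moreover `1·w_{4k+1}·0` is a central factor of `w_{4k+5}` and `0·w_{4k+3}·0` is a
central factor of `w_{4k+7}`. -/
theorem up_prefixes_strong_bispecial (k : ℕ) :
    (∀ a b : Bool, FactorUp (a :: wp (4*k+1) ++ [b])) ∧
    (∀ a b : Bool, FactorUp (a :: wp (4*k+3) ++ [b])) ∧
    (∃ x y : Word, wp (4*k+5) = x ++ (true :: wp (4*k+1) ++ [false]) ++ y ∧
      x.length = y.length) ∧
    (∃ x y : Word, wp (4*k+7) = x ++ (false :: wp (4*k+3) ++ [false]) ++ y ∧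
      x.length = y.length) := by
  have I := inv1 k
  have J := inv2 k
  have I' : Inv (wp (4*k+4)) (wp (4*k+5)) (wp (4*k+6)) := inv1 (k+1)
  have J' : Inv2 (wp (4*k+6)) (wp (4*k+7)) (wp (4*k+8)) := inv2 (k+1)
  have pD' : P true (wp (4*k+5)) := (wp_e (n := 4*k+4) (by omega)).2.1
  have pD : P true (wp (4*k+1)) := (wp_e (n := 4*k) (by omega)).2.1
  have cD' : wp (4*k+4) ++ [true] <+: wp (4*k+5) := (wp_e (n := 4*k+4) (by omega)).1
  have hBC : wp (4*k+2) <+: wp (4*k+3) := (List.prefix_append _ _).trans J.pre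
  have hAD : wp (4*k+4) <+: wp (4*k+5) := (List.prefix_append _ _).trans cD'
  have cen1 : ∃ x y : Word, wp (4*k+5) = x ++ (true :: wp (4*k+1) ++ [false]) ++ y ∧
      x.length = y.length := by
    obtain ⟨t, ht⟩ := I.pre.trans (hBC.trans ((List.prefix_append _ _).trans J.pre'))
    have e1 : wp (4*k+4) = th false t ++ true :: wp (4*k) := by
      have h1 : th false (wp (4*k+4)) = wp (4*k+4) := J.pA
      have h2 : th false (wp (4*k)) = wp (4*k) := I.pA
      rw [← h1, ← ht]; simp [h2]
    refine ⟨th false t, th true (th false t), ?_, by simp⟩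
    rw [I'.D1, I.D1, e1]
    simp
  have cen2 : ∃ x y : Word, wp (4*k+7) = x ++ (false :: wp (4*k+3) ++ [false]) ++ y ∧
      x.length = y.length := by
    obtain ⟨z, hz1, hz2⟩ := J.C1
    obtain ⟨z', hz1', hz2'⟩ := J'.C1
    obtain ⟨t, ht⟩ := J.pre.trans (((List.prefix_append _ _).trans J.pre').trans
      ((List.prefix_append _ _).trans I'.pre))
    have e1 : wp (4*k+6) = th true t ++ false :: wp (4*k+2) := by
      have h1 : th true (wp (4*k+6)) = wp (4*k+6) := J'.pB
      have h2 : th true (wp (4*k+2)) = wp (4*k+2) := J.pB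
      rw [← h1, ← ht]; simp [h2]
    have e2 : z' = th true t ++ false :: z := by
      apply List.append_cancel_right (bs := [true, false, true, false])
      rw [← hz1', e1, hz1]; simp
    refine ⟨th true t, th false (th true t), ?_, by simp⟩
    rw [hz2', hz2, e2]
    simp
  refine ⟨?_, ?_, cen1, cen2⟩
  · have h11 : true :: wp (4*k+1) ++ [true] <:+: wp (4*k+5) :=
      infix_glue J.C2 (I.D3.trans hBC) hAD
    intro a b
    cases a <;> cases b
    · refine ⟨4*k+5, ?_⟩
      have := infix_th pD' h11
      have h : th true (wp (4*k+1)) = wp (4*k+1) := pD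
      simpa [h] using this
    · exact ⟨4*k+3, infix_glue' I.D2 J.pre⟩
    · obtain ⟨x, y, h, -⟩ := cen1
      exact ⟨4*k+5, x, y, h.symm⟩
    · exact ⟨_, h11⟩
  · have h01 : false :: wp (4*k+3) ++ [true] <:+: wp (4*k+7) :=
      infix_glue I'.D2 (J.pre'.trans hAD) ((List.prefix_append _ _).trans J'.pre)
    intro a b
    cases a <;> cases b
    · obtain ⟨x, y, h, -⟩ := cen2
      exact ⟨4*k+7, x, y, h.symm⟩
    · exact ⟨_, h01⟩
    · refine ⟨4*k+7, ?_⟩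
      have := infix_th J'.pC h01
      have h : th false (wp (4*k+3)) = wp (4*k+3) := J.pC
      simpa [h] using this
    · exact ⟨4*k+5, infix_glue' J.C2 cD'⟩
end

section
/- For u_p = u(1^ω,(EERR)^ω) and k ≥ 1, the words s_{4k+1} = R(w_{4k−3})·w_{4k−4}^{−1}·w_{4k−1}·w_{4k−4}^{−1}·w_{4k−3} and s_{4k+3} = E(w_{4k−1})·w_{4k−2}^{−1}·w_{4k+1}·w_{4k−2}^{−1}·w_{4k−1} are bispecial factors of u_p; s_{4k+1} is a palindrome contained in w_{4k+1} with bilateral extensions 1·s_{4k+1}·0 and 0·s_{4k+1}·1, and s_{4k+3} is an E-palindrome contained in w_{4k+3} with bilateral extensions 0·s_{4k+3}·0 and 1·s_{4k+3}·1. -/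
/-- The weak bispecial candidate `s_{4k+1}` (an overlap product). -/
noncomputable def s1 (k : ℕ) : Word :=
  (wp (4*k-3)).reverse ++ (wp (4*k-1)).drop (wp (4*k-4)).length
    ++ (wp (4*k-3)).drop (wp (4*k-4)).length

/-- The weak bispecial candidate `s_{4k+3}` (an overlap product). -/
noncomputable def s3 (k : ℕ) : Word :=
  Ebar (wp (4*k-1)) ++ (wp (4*k+1)).drop (wp (4*k-2)).length
    ++ (wp (4*k-1)).drop (wp (4*k-2)).length

/-- `sOdd k = s_{2k+1}`. -/
noncomputable def sOdd (k : ℕ) : Word := if k % 2 = 0 then s1 (k/2) else s3 (k/2)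



def th (e : Bool) (w : Word) : Word := (w.map (xor e)).reverse

def ty (n : ℕ) : Bool := decide (n % 4 = 1 ∨ n % 4 = 2)

lemma th_true (w : Word) : th true w = Ebar w := by
  unfold th Ebar; congr 2; funext b; cases b <;> rfl

lemma th_false (w : Word) : th false w = w.reverse := by
  unfold th
  have : (xor false) = id := by funext b; simp
  rw [this, List.map_id]

lemma wp_succ (n : ℕ) : (wp n ++ [true]) <+: wp (n+1) ∧ th (ty (n+1)) (wp (n+1)) = wp (n+1) ∧
    ∀ v, (wp n ++ [true]) <+: v → th (ty (n+1)) v = v → (wp (n+1)).length ≤ v.length := by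
  by_cases h : (n+1) % 4 = 1 ∨ (n+1) % 4 = 2
  · have h1 : wp (n+1) = epalCl (wp n ++ [true]) := by rw [wp, if_pos h]
    have h2 : ty (n+1) = true := by simp [ty, h]
    obtain ⟨⟨ha, hb⟩, hc⟩ := (exists_minLength (epal_ext (wp n ++ [true]))).choose_spec
    rw [h1, h2]
    refine ⟨ha, ?_, ?_⟩
    · rw [th_true]; exact hb
    · intro v hv hv'
      rw [th_true] at hv'
      exact hc v ⟨hv, hv'⟩
  · have h1 : wp (n+1) = palCl (wp n ++ [true]) := by rw [wp, if_neg h]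
    have h2 : ty (n+1) = false := by simp only [ty, h, decide_false]
    obtain ⟨⟨ha, hb⟩, hc⟩ := (exists_minLength (pal_ext (wp n ++ [true]))).choose_spec
    rw [h1, h2]
    refine ⟨ha, ?_, ?_⟩
    · rw [th_false]; exact hb
    · intro v hv hv'
      rw [th_false] at hv'
      exact hc v ⟨hv, hv'⟩

noncomputable def el (n : ℕ) : ℕ := (wp n).length
noncomputable def uu (i : ℕ) : Bool := (wp (i+1)).getD i false

def Sy (u : ℕ → Bool) (e : Bool) (l : ℕ) : Prop := ∀ i, i < l → u (l-1-i) = xor e (u i)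

lemma el_lt (n : ℕ) : el n < el (n+1) := by
  have := (wp_succ n).1.length_le
  simp [el] at *; omega

lemma el_mono : StrictMono el := strictMono_nat_of_lt_succ el_lt

lemma wp_get_s10 (n i : ℕ) (h : i < el n) : (wp n).getD i false = uu i := by
  have h2 : i < el (i+1) := lt_of_lt_of_le (Nat.lt_succ_self i) (el_mono.id_le (i+1))
  unfold uu
  rcases le_total n (i+1) with h3 | h3
  · obtain ⟨t, ht⟩ := wp_prefix h3
    rw [← ht, List.getD_append _ _ _ _ h]
  · obtain ⟨t, ht⟩ := wp_prefix h3
    rw [← ht, List.getD_append _ _ _ _ h2]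

def pre (u : ℕ → Bool) (l : ℕ) : Word := (List.range l).map u

lemma wp_pre_s10 (n : ℕ) : wp n = pre uu (el n) := by
  apply List.ext_getElem
  · simp [pre, el]
  · intro i h1 h2
    rw [← List.getD_eq_getElem _ false h1, wp_get_s10 n i h1]
    simp [pre]

lemma th_pre (u : ℕ → Bool) (e : Bool) (l : ℕ) : th e (pre u l) = pre u l ↔ Sy u e l := by
  constructor
  · intro h i hi
    have h1 : (th e (pre u l)).getD (l-1-i) false = (pre u l).getD (l-1-i) false := by rw [h]
    rw [List.getD_eq_getElem _ _ (by simp [th, pre]; omega),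
      List.getD_eq_getElem _ _ (by simp [pre]; omega)] at h1
    simp [th, pre] at h1
    rw [show l - 1 - (l-1-i) = i by omega] at h1
    exact h1.symm
  · intro h
    apply List.ext_getElem
    · simp [th, pre]
    · intro i h1 h2
      have hi : i < l := by simpa [pre] using h2
      have := h (l-1-i) (by omega)
      rw [show l - 1 - (l-1-i) = i by omega] at this
      simp [th, pre, this]

lemma el_zero : el 0 = 0 := by simp [el, wp]

lemma uu_el (n : ℕ) : uu (el n) = true := by
  rw [← wp_get_s10 (n+1) (el n) (el_lt n)]
  obtain ⟨t, ht⟩ := (wp_succ n).1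
  rw [← ht, List.getD_append _ _ _ _ (by simp [el])]
  simp [el]

lemma sy_el (n : ℕ) : Sy uu (ty (n+1)) (el (n+1)) := by
  rw [← th_pre, ← wp_pre_s10]; exact (wp_succ n).2.1

lemma min_el (n l : ℕ) (h1 : el n < l) (h2 : l ≤ 2 * el n + 2)
    (h : ∀ i, i ≤ el n → i < l → l - 1 - i ≤ el n → uu (l-1-i) = xor (ty (n+1)) (uu i)) :
    el (n+1) ≤ l := by
  let f : ℕ → Bool := fun i => if i ≤ el n then uu i else xor (ty (n+1)) (uu (l-1-i))
  have hs : Sy f (ty (n+1)) l := by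
    intro i hi
    simp only [f]
    by_cases ha : i ≤ el n <;> by_cases hb : l - 1 - i ≤ el n
    · simp [ha, hb, h i ha hi hb]
    · simp [ha, hb, show l - 1 - (l-1-i) = i by omega]
    · simp [ha, hb]
    · omega
  have := (wp_succ n).2.2 (pre f l) ?_ ((th_pre f _ l).2 hs)
  · simpa [pre, el] using this
  · have e1 : wp n ++ [true] = pre f (el n + 1) := by
      rw [pre, List.range_succ, List.map_append, wp_pre_s10 n, pre]
      congr 1
      · apply List.map_congr_left
        intro i hi
        simp at hi
        simp [f, hi.le]
      · simp [f, uu_el]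
    rw [e1]
    obtain ⟨d, rfl⟩ := Nat.exists_eq_add_of_le (show el n + 1 ≤ l by omega)
    unfold pre
    rw [List.range_add (n := el n + 1), List.map_append]
    exact List.prefix_append _ _

lemma min_el' (n l : ℕ) (h1 : el n < l) (h : Sy uu (ty (n+1)) l) : el (n+1) ≤ l := by
  by_cases h2 : l ≤ 2 * el n + 2
  · exact min_el n l h1 h2 (fun i _ hi _ => h i hi)
  · have := min_el n (2 * el n + 2) (by omega) le_rfl (fun i _ _ _ => by omega)
    omega

lemma sy_per {u : ℕ → Bool} {e e' : Bool} {L l : ℕ} (hL : Sy u e L) (hl : Sy u e' l) (h : l ≤ L)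
    (i : ℕ) (hi : i < l) : u (i + (L - l)) = xor e (xor e' (u i)) := by
  have h1 := hL (l-1-i) (by omega)
  rw [show L - 1 - (l-1-i) = i + (L-l) by omega, hl i hi] at h1
  exact h1

lemma sy_shift {u : ℕ → Bool} {e e' e'' : Bool} {L l m : ℕ} (hL : Sy u e L) (hl : Sy u e' l)
    (hm : Sy u e'' m) (h : l ≤ L) (h1 : L - l ≤ m) (h2 : m ≤ L) :
    Sy u (xor e (xor e' e'')) (m - (L - l)) := by
  intro i hi
  have a := sy_per hL hl h (m - (L-l) - 1 - i) (by omega)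
  rw [show m - (L-l) - 1 - i + (L - l) = m - 1 - i by omega, hm i (by omega)] at a
  revert a
  generalize u (m - (L-l) - 1 - i) = x
  generalize u i = y
  clear hL hl hm
  revert e e' e'' x y; decide

lemma sy_even {u : ℕ → Bool} {l : ℕ} (h : Sy u true l) : l % 2 = 0 := by
  by_contra hc
  have := h ((l-1)/2) (by omega)
  rw [show l - 1 - (l-1)/2 = (l-1)/2 by omega] at this
  revert this; cases u ((l-1)/2) <;> simp

lemma sy_both {u : ℕ → Bool} {l : ℕ} (h0 : 0 < l) (h : Sy u true l) (h' : Sy u false l) : False := by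
  have a := h 0 h0
  have b := h' 0 h0
  rw [a] at b
  revert b; cases u 0 <;> simp

def PE (n : ℕ) : Prop := ∀ l, l ≤ el n → Sy uu true l →
  ∃ m, m ≤ n ∧ l = el m ∧ (m = 0 ∨ m % 4 = 1 ∨ m % 4 = 2)
def PR (n : ℕ) : Prop := ∀ l, l ≤ el n → Sy uu false l →
  l = 1 ∨ l = 3 ∨ ∃ m, m ≤ n ∧ l = el m ∧ (m % 4 = 0 ∨ m % 4 = 3)

lemma ty1 (j : ℕ) : ty (4*j+1) = true := by simp [ty]
lemma ty2 (j : ℕ) : ty (4*j+2) = true := by simp [ty]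
lemma ty3 (j : ℕ) : ty (4*j+3) = false := by simp [ty]
lemma ty4 (j : ℕ) : ty (4*j+4) = false := by simp [ty]

lemma sy1 (j : ℕ) : Sy uu true (el (4*j+1)) := by have := sy_el (4*j); rwa [ty1] at this
lemma sy2 (j : ℕ) : Sy uu true (el (4*j+2)) := by have := sy_el (4*j+1); rwa [ty2] at this
lemma sy3 (j : ℕ) : Sy uu false (el (4*j+3)) := by have := sy_el (4*j+2); rwa [ty3] at this
lemma sy0 (j : ℕ) : Sy uu false (el (4*j)) := by
  rcases j with _ | j
  · intro i hi; simp [el_zero] at hi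
  · have := sy_el (4*j+3); rwa [ty4] at this

lemma el_one : el 1 = 2 := by
  have h1 := sy_even (sy1 0)
  have h2 := el_lt 0
  have h3 := min_el 0 2 (by rw [el_zero]; omega) (by omega) (by rw [el_zero]; intro i; omega)
  rw [el_zero] at *
  simp only [zero_add, mul_zero] at *
  omega

lemma u0 : uu 0 = true := by have := uu_el 0; rwa [el_zero] at this
lemma u1 : uu 1 = false := by
  have := sy1 0 0 (by simp [el_one])
  simp only [mul_zero, zero_add, el_one, u0] at this
  simpa using this
lemma u2 : uu 2 = true := by have := uu_el 1; rwa [el_one] at this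

lemma el_two : el 2 = 4 := by
  have h1 := sy_even (sy2 0)
  have h2 := el_lt 1
  have h3 := min_el 1 4 (by rw [el_one]; omega) (by rw [el_one]; omega) (by
    rw [el_one, show ty (1+1) = true from rfl]; intro i hi _ h
    interval_cases i
    · omega
    · simp [u1, u2]
    · simp [u1, u2])
  rw [el_one] at *
  change el 2 ≤ 4 at h3
  change 2 < el 2 at h2
  simp only [zero_add, mul_zero] at *
  omega

lemma u3 : uu 3 = false := by
  have := sy2 0 0 (by simp [el_two])
  simp only [mul_zero, zero_add, el_two, u0] at this
  simpa using this

lemma el_le {m n : ℕ} (h : m ≤ n) : el m ≤ el n := el_mono.monotone h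

-- step A
lemma rec1 (j : ℕ) (hE : PE (4*j)) : el (4*j+1) = 2 * el (4*j) + 2 := by
  have h1 := sy1 j
  have h0 := sy0 j
  have hlt := el_lt (4*j)
  have hev := sy_even h1
  have hub : el (4*j+1) ≤ 2 * el (4*j) + 2 :=
    min_el (4*j) _ (by omega) le_rfl (fun i _ _ _ => by omega)
  by_contra hne
  have hle : el (4*j+1) ≤ 2 * el (4*j) := by omega
  have hs := sy_shift h1 h0 h0 hlt.le (by omega) hlt.le
  have hp := sy_per h1 h0 hlt.le (el (4*j) - (el (4*j+1) - el (4*j))) (by omega)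
  rw [show el (4*j) - (el (4*j+1) - el (4*j)) + (el (4*j+1) - el (4*j)) = el (4*j) by omega,
    uu_el] at hp
  obtain ⟨m, _, hm, _⟩ := hE _ (by omega) hs
  rw [hm, uu_el] at hp
  simp at hp

lemma stepA_E (j : ℕ) (hE : PE (4*j)) : PE (4*j+1) := by
  intro l hl hs
  by_cases h : l ≤ el (4*j)
  · obtain ⟨m, h1, h2⟩ := hE l h hs
    exact ⟨m, by omega, h2⟩
  · have := min_el' (4*j) l (by omega) (by rw [ty1]; exact hs)
    exact ⟨4*j+1, le_rfl, by omega, by omega⟩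

lemma stepA_R (j : ℕ) (hE : PE (4*j)) (hR : PR (4*j)) : PR (4*j+1) := by
  intro l hl hs
  by_cases h : l ≤ el (4*j)
  · rcases hR l h hs with h1 | h1 | ⟨m, h1, h2⟩
    · exact Or.inl h1
    · exact Or.inr (Or.inl h1)
    · exact Or.inr (Or.inr ⟨m, by omega, h2⟩)
  have hrec := rec1 j hE
  have h1 := sy1 j
  have h0 := sy0 j
  have hlt := el_lt (4*j)
  by_cases hone : l = 1
  · exact Or.inl hone
  exfalso
  have hne : l ≠ el (4*j+1) := by
    rintro rfl
    exact sy_both (by omega) h1 hs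
  by_cases hl1 : l = el (4*j) + 1
  · have ha : 2 ≤ el (4*j) := by
      rcases Nat.eq_zero_or_pos j with rfl | hj
      · simp [el_zero] at hl1; omega
      · have := el_le (show 1 ≤ 4*j by omega)
        rw [el_one] at this; exact this
    have a := hs 1 (by omega)
    have b := h0 0 (by omega)
    rw [u1, hl1, show el (4*j) + 1 - 1 - 1 = el (4*j) - 1 - 0 by omega, b, u0] at a
    simp at a
  · have hss := sy_shift h1 hs h0 hl (by omega) (by omega)
    have hp := sy_per h1 hs hl (el (4*j) - (el (4*j+1) - l)) (by omega)
    rw [show el (4*j) - (el (4*j+1) - l) + (el (4*j+1) - l) = el (4*j) by omega, uu_el] at hp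
    obtain ⟨m, _, hm, _⟩ := hE _ (by omega) hss
    rw [hm, uu_el] at hp
    simp at hp

lemma upper (n m : ℕ) (hmn : m < n) (e : Bool) (he : ty (n+1) = e) (hn : Sy uu e (el n))
    (hm : Sy uu e (el m)) : el (n+1) ≤ 2 * el n - el m := by
  have hlt := el_mono hmn
  have key : ∀ i, i < el n → el n - 1 - el m ≤ i →
      uu (2 * el n - el m - 1 - i) = xor e (uu i) := by
    intro i hi hi2
    have a := hn i hi
    rcases Nat.eq_or_lt_of_le hi2 with h | h
    · rw [show 2 * el n - el m - 1 - i = el n by omega, uu_el]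
      rw [show el n - 1 - i = el m by omega, uu_el] at a
      exact a
    · have b := hm (el n - 1 - i) (by omega)
      have c := hn (el m - 1 - (el n - 1 - i)) (by omega)
      rw [show el n - 1 - (el m - 1 - (el n - 1 - i)) = 2 * el n - el m - 1 - i by omega] at c
      rw [c, b, a]; cases e <;> cases uu i <;> rfl
  apply min_el n _ (by omega) (by omega)
  intro i hi hi1 hi2
  rw [he]
  by_cases h : i < el n
  · exact key i h (by omega)
  · have hie : i = el n := by omega
    have := key (2 * el n - el m - 1 - i) (by omega) (by omega)
    rw [show 2 * el n - el m - 1 - (2 * el n - el m - 1 - i) = i by omega] at this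
    rw [this]; cases e <;> simp

lemma same_lt {m n : ℕ} (h : el m < el n) : m < n := el_mono.lt_iff_lt.1 h

-- step C
lemma rec2 (j : ℕ) (hj : 1 ≤ j) (hE : PE (4*j+1)) :
    el (4*j+2) + el (4*j-2) = 2 * el (4*j+1) := by
  have h1 := sy1 j
  have h2 := sy2 j
  have h3 := sy2 (j-1)
  rw [show 4*(j-1)+2 = 4*j-2 by omega] at h3
  have hlt := el_lt (4*j+1)
  have hlt' := el_mono (show 4*j-2 < 4*j+1 by omega)
  have hub := upper (4*j+1) (4*j-2) (by omega) true (ty2 j) h1 h3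
  by_contra hne
  change el (4*j+1) < el (4*j+2) at hlt
  change el (4*j+2) ≤ _ at hub
  have hs := sy_shift h2 h1 h1 hlt.le (by omega) hlt.le
  obtain ⟨m, _, hm, hmm⟩ := hE _ (by omega) hs
  have : m < 4*j+1 := same_lt (by omega)
  have := el_le (show m ≤ 4*j-2 by omega)
  omega

lemma stepC_E (j : ℕ) (hE : PE (4*j+1)) : PE (4*j+2) := by
  intro l hl hs
  by_cases h : l ≤ el (4*j+1)
  · obtain ⟨m, h1, h2⟩ := hE l h hs
    exact ⟨m, by omega, h2⟩
  · have : el (4*j+2) ≤ l := min_el' (4*j+1) l (by omega) (by rw [ty2]; exact hs)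
    exact ⟨4*j+2, le_rfl, by omega, by omega⟩

lemma stepC_R (j : ℕ) (hrec1 : el (4*j+1) = 2 * el (4*j) + 2)
    (hE : PE (4*j+1)) (hR : PR (4*j+1)) : PR (4*j+2) := by
  intro l hl hs
  by_cases h : l ≤ el (4*j+1)
  · rcases hR l h hs with h1 | h1 | ⟨m, h1, h2⟩
    · exact Or.inl h1
    · exact Or.inr (Or.inl h1)
    · exact Or.inr (Or.inr ⟨m, by omega, h2⟩)
  have hne : l ≠ el (4*j+2) := by
    rintro rfl
    exact sy_both (by omega) (sy2 j) hs
  rcases Nat.eq_zero_or_pos j with rfl | hj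
  · simp only [mul_zero, zero_add, el_one, el_two] at *
    omega
  exfalso
  have hrec := rec2 j hj hE
  have hlt := el_lt (4*j+1)
  have hlt' := el_mono (show 4*j-2 < 4*j by omega)
  have ha4 := el_le (show 2 ≤ 4*j-2 by omega)
  rw [el_two] at ha4
  change el (4*j+1) < el (4*j+2) at hlt
  have hss := sy_shift (sy2 j) hs hs hl (by omega) hl
  obtain ⟨m, _, hm, hmm⟩ := stepC_E j hE _ (by omega) hss
  have h1 : m < 4*j+2 := same_lt (by omega)
  have h2 : 4*j-2 < m := same_lt (by omega)
  have h3 : m = 4*j+1 := by omega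
  subst h3
  have hs3 := sy_shift (sy2 j) hs (sy1 j) hl (by omega) (by omega)
  rcases hR _ (by omega) hs3 with h1 | h1 | ⟨m, h1, h2, h3⟩
  · omega
  · omega
  · have := el_le (show m ≤ 4*j by omega)
    omega

-- step B
lemma rec3 (j : ℕ) (hR : PR (4*j+2)) : el (4*j+3) + 3 = 2 * el (4*j+2) := by
  have h2 := sy2 j
  have h3 := sy3 j
  have hlt := el_lt (4*j+2)
  have ha4 := el_le (show 2 ≤ 4*j+2 by omega)
  rw [el_two] at ha4
  have hub : el (4*j+2+1) ≤ 2 * el (4*j+2) - 3 := by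
    have q0 := h2 0 (by omega)
    have q1 := h2 1 (by omega)
    have q2 := h2 2 (by omega)
    have q3 := h2 3 (by omega)
    have q4 := uu_el (4*j+2)
    rw [u0] at q0
    rw [u1] at q1
    rw [u2] at q2
    rw [u3] at q3
    apply min_el (4*j+2) _ (by omega) (by omega)
    intro i hi hi1 hi2
    rw [ty3]
    generalize el (4*j+2) = a at *
    obtain h | h | h | h | h : i = a ∨ i = a - 1 - 0 ∨ i = a - 1 - 1 ∨ i = a - 1 - 2 ∨ i = a - 1 - 3 := by
      omega
    · rw [show 2 * a - 3 - 1 - i = a-1-3 by omega, h, q3, q4]; rfl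
    · rw [show 2 * a - 3 - 1 - i = a-1-2 by omega, h, q2, q0]; rfl
    · rw [show 2 * a - 3 - 1 - i = a-1-1 by omega, h, q1]; rfl
    · rw [show 2 * a - 3 - 1 - i = a-1-0 by omega, h, q2, q0]; rfl
    · rw [show 2 * a - 3 - 1 - i = a by omega, h, q3, q4]; rfl
  change el (4*j+2) < el (4*j+3) at hlt
  change el (4*j+3) ≤ _ at hub
  by_contra hne
  have hs := sy_shift h3 h2 h2 hlt.le (by omega) hlt.le
  have hp := sy_per h3 h2 hlt.le (el (4*j+2) - (el (4*j+3) - el (4*j+2))) (by omega)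
  rw [show el (4*j+2) - (el (4*j+3) - el (4*j+2)) + (el (4*j+3) - el (4*j+2)) = el (4*j+2) by omega,
    uu_el] at hp
  rcases hR _ (by omega) hs with h1 | h1 | ⟨m, h1, h2, h3⟩
  · omega
  · omega
  · rw [h2, uu_el] at hp
    simp at hp

lemma stepB_R (j : ℕ) (hR : PR (4*j+2)) : PR (4*j+3) := by
  intro l hl hs
  by_cases h : l ≤ el (4*j+2)
  · rcases hR l h hs with h1 | h1 | ⟨m, h1, h2⟩
    · exact Or.inl h1
    · exact Or.inr (Or.inl h1)
    · exact Or.inr (Or.inr ⟨m, by omega, h2⟩)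
  · have : el (4*j+3) ≤ l := min_el' (4*j+2) l (by omega) (by rw [ty3]; exact hs)
    exact Or.inr (Or.inr ⟨4*j+3, le_rfl, by omega, by omega⟩)

lemma center (i : ℕ) : uu (el (4*i+2) - 2) = true := by
  have ha4 := el_le (show 2 ≤ 4*i+2 by omega)
  rw [el_two] at ha4
  have := sy2 i 1 (by omega)
  rw [u1, show el (4*i+2) - 1 - 1 = el (4*i+2) - 2 by omega] at this
  simpa using this

lemma stepB_E (j : ℕ) (hev : ∀ i, i ≤ j → el (4*i) % 2 = 0)
    (h3 : ∀ i, i < j → el (4*i+3) + 3 = 2 * el (4*i+2))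
    (hE : PE (4*j+2)) (hR : PR (4*j+2)) : PE (4*j+3) := by
  intro l hl hs
  by_cases h : l ≤ el (4*j+2)
  · obtain ⟨m, h1, h2⟩ := hE l h hs
    exact ⟨m, by omega, h2⟩
  exfalso
  have hne : l ≠ el (4*j+3) := by
    rintro rfl
    exact sy_both (by omega) hs (sy3 j)
  have hrec := rec3 j hR
  have ha4 := el_le (show 2 ≤ 4*j+2 by omega)
  rw [el_two] at ha4
  have hss := sy_shift (sy3 j) hs hs hl (by omega) hl
  rcases stepB_R j hR _ (by omega) hss with h1 | h1 | ⟨m, h1, hm, hmm⟩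
  · omega
  · omega
  · have hm3 : m < 4*j+3 := same_lt (by omega)
    rcases hmm with hmm | hmm
    · have := hev (m/4) (by omega)
      rw [show 4*(m/4) = m by omega] at this
      omega
    · have h4 := h3 (m/4) (by omega)
      rw [show 4*(m/4)+3 = m by omega] at h4
      have c1 := center (m/4)
      have c2 := center j
      have hp := sy_per (sy3 j) hs hl (el (4*(m/4)+2) - 2) (by omega)
      rw [show el (4*(m/4)+2) - 2 + (el (4*j+3) - l) = el (4*j+2) - 2 by omega, c1, c2] at hp
      simp at hp

-- step D
lemma rec4 (j : ℕ) (hR : PR (4*j+3)) : el (4*j+4) + el (4*j) = 2 * el (4*j+3) := by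
  have h0 := sy0 j
  have h3 := sy3 j
  have h4 := sy0 (j+1)
  rw [show 4*(j+1) = 4*j+4 by omega] at h4
  have hlt := el_lt (4*j+3)
  have hlt' := el_mono (show 4*j < 4*j+3 by omega)
  have hub := upper (4*j+3) (4*j) (by omega) false (ty4 j) h3 h0
  change el (4*j+3) < el (4*j+4) at hlt
  change el (4*j+4) ≤ _ at hub
  by_contra hne
  have hs := sy_shift h4 h3 h3 hlt.le (by omega) hlt.le
  have hp := sy_per h4 h3 hlt.le (el (4*j+3) - (el (4*j+4) - el (4*j+3))) (by omega)
  rw [show el (4*j+3) - (el (4*j+4) - el (4*j+3)) + (el (4*j+4) - el (4*j+3)) = el (4*j+3) by omega,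
    uu_el] at hp
  rcases hR _ (by omega) hs with h1 | h1 | ⟨m, h1, h2, h3⟩
  · rw [h1, u1] at hp; simp at hp
  · rw [h1, u3] at hp; simp at hp
  · have : m < 4*j+3 := same_lt (by omega)
    have := el_le (show m ≤ 4*j by omega)
    omega

lemma stepD_R (j : ℕ) (hR : PR (4*j+3)) : PR (4*j+4) := by
  intro l hl hs
  by_cases h : l ≤ el (4*j+3)
  · rcases hR l h hs with h1 | h1 | ⟨m, h1, h2⟩
    · exact Or.inl h1
    · exact Or.inr (Or.inl h1)
    · exact Or.inr (Or.inr ⟨m, by omega, h2⟩)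
  · have : el (4*j+4) ≤ l := min_el' (4*j+3) l (by omega) (by rw [ty4]; exact hs)
    exact Or.inr (Or.inr ⟨4*j+4, le_rfl, by omega, by omega⟩)

lemma stepD_E (j : ℕ) (hev : el (4*j) % 2 = 0)
    (h3 : el (4*j+3) + 3 = 2 * el (4*j+2))
    (hE : PE (4*j+3)) (hR : PR (4*j+3)) : PE (4*j+4) := by
  intro l hl hs
  by_cases h : l ≤ el (4*j+3)
  · obtain ⟨m, h1, h2⟩ := hE l h hs
    exact ⟨m, by omega, h2⟩
  exfalso
  have h4 := sy0 (j+1)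
  rw [show 4*(j+1) = 4*j+4 by omega] at h4
  have hne : l ≠ el (4*j+4) := by
    rintro rfl
    exact sy_both (by omega) hs h4
  have hrec := rec4 j hR
  have hss := sy_shift h4 hs hs hl (by omega) hl
  rcases stepD_R j hR _ (by omega) hss with h1 | h1 | ⟨m, h1, hm, hmm⟩
  · omega
  · omega
  · have hm3 : m < 4*j+4 := same_lt (by omega)
    have : m ≠ 4*j+3 := by rintro rfl; omega
    have := el_le (show m ≤ 4*j by omega)
    omega

lemma main_ind (j : ℕ) : PE (4*j) ∧ PR (4*j) ∧ (∀ i, i ≤ j → el (4*i) % 2 = 0) ∧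
    ∀ i, i < j → el (4*i+1) = 2 * el (4*i) + 2 ∧
      (1 ≤ i → el (4*i+2) + el (4*i-2) = 2 * el (4*i+1)) ∧
      el (4*i+3) + 3 = 2 * el (4*i+2) ∧ el (4*i+4) + el (4*i) = 2 * el (4*i+3) := by
  induction j with
  | zero =>
    refine ⟨?_, ?_, ?_, by intro i hi; omega⟩
    · intro l hl _
      exact ⟨0, le_rfl, by simp [el_zero] at *; omega, Or.inl rfl⟩
    · intro l hl _
      exact Or.inr (Or.inr ⟨0, le_rfl, by simp [el_zero] at *; omega, Or.inl rfl⟩)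
    · intro i hi
      rw [show i = 0 by omega]; simp [el_zero]
  | succ j ih =>
    obtain ⟨hE, hR, hev, hrec⟩ := ih
    have r1 := rec1 j hE
    have hE1 := stepA_E j hE
    have hR1 := stepA_R j hE hR
    have r2 := fun hj => rec2 j hj hE1
    have hE2 := stepC_E j hE1
    have hR2 := stepC_R j r1 hE1 hR1
    have r3 := rec3 j hR2
    have hE3 := stepB_E j hev (fun i hi => (hrec i hi).2.2.1) hE2 hR2
    have hR3 := stepB_R j hR2
    have r4 := rec4 j hR3
    have hE4 := stepD_E j (hev j le_rfl) r3 hE3 hR3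
    have hR4 := stepD_R j hR3
    refine ⟨hE4, hR4, ?_, ?_⟩
    · intro i hi
      rcases Nat.lt_or_ge j i with h | h
      · rw [show 4*i = 4*j+4 by omega]
        have := hev j le_rfl
        omega
      · exact hev i h
    · intro i hi
      rcases Nat.lt_or_ge i j with h | h
      · exact hrec i h
      · rw [show i = j by omega]
        exact ⟨r1, r2, r3, r4⟩

lemma th_append (e : Bool) (a b : Word) : th e (a ++ b) = th e b ++ th e a := by simp [th]
lemma th_single (e a : Bool) : th e [a] = [xor e a] := by simp [th]
lemma th_cons (e a : Bool) (w : Word) : th e (a :: w) = th e w ++ [xor e a] := by simp [th]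
lemma th_nil (e : Bool) : th e [] = [] := rfl
lemma th_th (e : Bool) (a : Word) : th e (th e a) = a := by
  simp [th, List.map_reverse, Function.comp_def]
lemma th_comm (e f : Bool) (a : Word) : th e (th f a) = th f (th e a) := by
  simp only [th, List.map_reverse, List.reverse_reverse, List.map_map]
  congr 1; funext b; cases e <;> cases f <;> cases b <;> rfl
lemma th_length (e : Bool) (a : Word) : (th e a).length = a.length := by simp [th]

lemma ext_lem (e : Bool) {T Q r X Y : Word} (hT : th e T = T) (h1 : T = Q ++ r) (h2 : T = X ++ Y)
    (hl : X.length = r.length) : r = th e X := by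
  have h3 : th e r ++ th e Q = X ++ Y := by rw [← th_append, ← h1, hT, h2]
  have := (List.append_inj h3 (by rw [th_length, hl])).1
  rw [← this, th_th]

lemma words1 {A P Q T P' A' t t2 : Word} (hA : th false A = A) (hP : th false P = P)
    (hQ : th false Q = Q) (hT : th true T = T)
    (h1 : P = A ++ [true] ++ [false] ++ th true A ++ [true] ++ P')
    (h2 : Q = P ++ t) (h2l : Q.length + A.length = 2 * P.length)
    (h3 : Q = A ++ [true] ++ A') (h4 : T = Q ++ [true] ++ t2)
    (h4l : T.length = 2 * Q.length + 2) :
    ([true] ++ ((th true A ++ [false] ++ [true]) ++ P ++ ([true] ++ [false] ++ th true A))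
      ++ [false]) <:+: T := by
  have hcA : th false (th true A) = th true A := by rw [th_comm, hA]
  have e1 : P = (th false P' ++ [true] ++ th true A ++ [false] ++ [true]) ++ A := by
    conv_lhs => rw [← hP, h1]
    simp [th_append, th_cons, th_nil, hcA, hA]
  have e2 : Q = (th false P' ++ [true] ++ th true A ++ [false] ++ [true]) ++ (A ++ t) := by
    conv_lhs => rw [h2, e1]
    simp
  have e3 : t = [true] ++ [false] ++ th true A ++ [true] ++ P' := by
    rw [ext_lem false hQ h2 e2 (by
      have := congrArg List.length h2
      have := congrArg List.length e1
      simp at *; omega)]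
    simp [th_append, th_cons, th_nil, hcA, th_th]
  have e4 : Q = th false P' ++ [true] ++ th true A ++ [false] ++ [true] ++ P := by
    conv_lhs => rw [← hQ, h2, e3]
    simp [th_append, th_cons, th_nil, hcA, hP]
  have e5 : t2 = th true (Q ++ [true]) := by
    refine ext_lem true (Y := t2) hT h4 h4 ?_
    have := congrArg List.length h4
    simp at *; omega
  have e6 : th true Q = th true A ++ [false] ++ th true (th false A') := by
    conv_lhs => rw [← hQ, h3]
    simp [th_append, th_cons, th_nil, hA]
  refine ⟨th false P', th true (th false A'), ?_⟩
  rw [h4, e5, th_append, e6]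
  conv_rhs => rw [e4]
  simp [th_cons, th_nil]

lemma words3 {g D P Q T P' Q' t t2 : Word} (hD : th true D = D) (hP : th true P = P)
    (hQ : th true Q = Q) (hT : th false T = T)
    (hg : D = g ++ [true, false, true, false])
    (h1 : P = D ++ [true] ++ th false g ++ [true] ++ P')
    (h2 : Q = P ++ t) (h2l : Q.length + D.length = 2 * P.length)
    (h3 : Q = D ++ [true] ++ Q') (h4 : T = Q ++ t2)
    (h4l : T.length + 3 = 2 * Q.length) :
    ([false] ++ ((th true (th false g) ++ [false]) ++ P ++ ([true] ++ th false g))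
      ++ [false]) <:+: T := by
  have e1 : P = (th true P' ++ [false] ++ th true (th false g) ++ [false]) ++ D := by
    conv_lhs => rw [← hP, h1]
    simp [th_append, th_cons, th_nil, hD]
  have e2 : Q = (th true P' ++ [false] ++ th true (th false g) ++ [false]) ++ (D ++ t) := by
    conv_lhs => rw [h2, e1]
    simp
  have e3 : t = [true] ++ th false g ++ [true] ++ P' := by
    rw [ext_lem true hQ h2 e2 (by
      have := congrArg List.length h2
      have := congrArg List.length e1
      simp at *; omega)]
    simp [th_append, th_cons, th_nil, th_th]
  have e4 : Q = th true P' ++ [false] ++ th true (th false g) ++ [false] ++ P := by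
    conv_lhs => rw [← hQ, h2, e3]
    simp [th_append, th_cons, th_nil, hP]
  have e5 : Q = th true Q' ++ [false] ++ g ++ [true] ++ [false, true, false] := by
    conv_lhs => rw [← hQ, h3]
    simp [th_append, th_cons, th_nil, hD, ← hg]
  have e6 : t2 = th false (th true Q' ++ [false] ++ g ++ [true]) := by
    refine ext_lem false (Y := [false, true, false] ++ t2) hT h4 ?_ ?_
    · rw [h4]; conv_lhs => rw [e5]
      simp
    · have := congrArg List.length h4
      have := congrArg List.length e5
      simp at *; omega
  refine ⟨th true P', th false (th true Q'), ?_⟩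
  rw [h4, e6, e4]
  simp [th_append, th_cons, th_nil]

lemma fin_lem (e c d : Bool) {A B P T W y p : Word} (n N : ℕ) (hA : th e A = A) (hP : th e P = P)
    (hB : B = A ++ y) (hp : P = A ++ p) (hT : T = wp n) (hW : W = wp N) (hWs : th e W = W)
    (hTW : T <+: W) (s : Word) (hs : s = th e B ++ P.drop A.length ++ B.drop A.length)
    (hf : ([c] ++ (th e y ++ P ++ y) ++ [d]) <:+: T) :
    (∃ x y : Word, th e B = x ++ A ∧ B = A ++ y ∧ A <+: P ∧ A <:+ P ∧ s = x ++ P ++ y) ∧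
    th e s = s ∧ s <:+: T ∧ FactorUp (c :: s ++ [d]) ∧ FactorUp (xor e d :: s ++ [xor e c]) := by
  have e1 : s = th e y ++ P ++ y := by
    rw [hs, hB, hp, th_append, hA]; simp
  have e2 : th e s = s := by
    rw [e1]; simp [th_append, hP, th_th]
  rw [← e1] at hf
  refine ⟨⟨th e y, y, by rw [hB, th_append, hA], hB, ⟨p, hp.symm⟩,
    ⟨th e p, by rw [← hP, hp, th_append, hA]⟩, e1⟩, e2, ?_, ⟨n, ?_⟩, ⟨N, ?_⟩⟩
  · obtain ⟨a, b, h⟩ := hf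
    exact ⟨a ++ [c], [d] ++ b, by rw [← h]; simp⟩
  · rw [← hT]; exact hf
  · obtain ⟨a, b, h⟩ := hf
    obtain ⟨r, hr⟩ := hTW
    refine ⟨th e r ++ th e b, th e a, ?_⟩
    rw [← hW, ← hWs, ← hr, ← h]
    simp only [th_append, th_cons, th_nil, e2]
    simp

lemma factor_left {s : Word} {a b : Bool} (h : FactorUp (a :: s ++ [b])) : FactorUp (a :: s) := by
  obtain ⟨n, h⟩ := h
  exact ⟨n, (List.prefix_append _ _).isInfix.trans h⟩
lemma factor_right {s : Word} {a b : Bool} (h : FactorUp (a :: s ++ [b])) : FactorUp (s ++ [b]) := by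
  obtain ⟨n, h⟩ := h
  exact ⟨n, (List.suffix_cons a (s ++ [b])).isInfix.trans h⟩

lemma th_wp {n : ℕ} {e : Bool} (h : Sy uu e (el n)) : th e (wp n) = wp n := by
  rw [wp_pre_s10, th_pre]; exact h

lemma wp_ext {m n : ℕ} (h : m < n) : ∃ t, wp n = wp m ++ [true] ++ t := by
  obtain ⟨t, ht⟩ := (wp_succ m).1.trans (wp_prefix (show m + 1 ≤ n by omega))
  exact ⟨t, ht.symm⟩

lemma wp_two : ∃ t, wp 2 = [true, false, true, false] ++ t :=
  ⟨[], by rw [wp_pre_s10, el_two]; simp [pre, List.range_succ, u0, u1, u2, u3]⟩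

lemma part1 (j : ℕ) :
    (∃ x y : Word, th false (wp (4*j+1)) = x ++ wp (4*j) ∧ wp (4*j+1) = wp (4*j) ++ y ∧
      wp (4*j) <+: wp (4*j+3) ∧ wp (4*j) <:+ wp (4*j+3) ∧ s1 (j+1) = x ++ wp (4*j+3) ++ y) ∧
    th false (s1 (j+1)) = s1 (j+1) ∧ s1 (j+1) <:+: wp (4*j+5) ∧
    FactorUp (true :: s1 (j+1) ++ [false]) ∧ FactorUp (false :: s1 (j+1) ++ [true]) := by
  obtain ⟨-, -, -, hrec⟩ := main_ind (j+2)
  obtain ⟨r1, -, -, r4⟩ := hrec j (by omega)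
  obtain ⟨r5, -⟩ := hrec (j+1) (by omega)
  rw [show 4*(j+1)+1 = 4*j+5 by ring, show 4*(j+1) = 4*j+4 by ring] at r5
  have hA := th_wp (sy0 j)
  have hB := th_wp (sy1 j)
  have hP := th_wp (sy3 j)
  have hQ := th_wp (sy0 (j+1))
  have hT := th_wp (sy1 (j+1))
  have hW := th_wp (sy3 (j+1))
  rw [show 4*(j+1)+1 = 4*j+5 by ring] at hT
  rw [show 4*(j+1)+3 = 4*j+7 by ring] at hW
  rw [show 4*(j+1) = 4*j+4 by ring] at hQ
  obtain ⟨b, hb⟩ := wp_ext (show 4*j < 4*j+1 by omega)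
  obtain ⟨p, hp⟩ := wp_ext (show 4*j+1 < 4*j+3 by omega)
  obtain ⟨q, hq⟩ := wp_ext (show 4*j+3 < 4*j+4 by omega)
  obtain ⟨q', hq'⟩ := wp_ext (show 4*j < 4*j+4 by omega)
  obtain ⟨t, ht⟩ := wp_ext (show 4*j+4 < 4*j+5 by omega)
  have e1 : b = th true (wp (4*j) ++ [true]) := by
    refine ext_lem true hB hb hb ?_
    have := congrArg List.length hb
    simp [el] at *; omega
  have e2 : wp (4*j+1) = wp (4*j) ++ ([true] ++ [false] ++ th true (wp (4*j))) := by
    rw [hb, e1]; simp [th_append, th_cons, th_nil]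
  have hf := words1 (t := [true] ++ q) hA hP hQ hT (P' := p) (by rw [hp, e2]; simp) (by rw [hq]; simp)
    r4 hq' ht r5
  refine fin_lem false true false (4*j+5) (4*j+7) hA hP e2 (p := _) (by rw [hp, e2, List.append_assoc, List.append_assoc]) rfl rfl hW
    (wp_prefix (by omega)) (s1 (j+1)) ?_ ?_
  · unfold s1
    rw [th_false, show 4*(j+1)-3 = 4*j+1 by omega, show 4*(j+1)-1 = 4*j+3 by omega,
      show 4*(j+1)-4 = 4*j by omega]
  · have hcA : th false (th true (wp (4*j))) = th true (wp (4*j)) := by rw [th_comm, hA]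
    simpa [th_append, th_cons, th_nil, hcA] using hf

lemma part3 (j : ℕ) :
    (∃ x y : Word, th true (wp (4*j+3)) = x ++ wp (4*j+2) ∧ wp (4*j+3) = wp (4*j+2) ++ y ∧
      wp (4*j+2) <+: wp (4*j+5) ∧ wp (4*j+2) <:+ wp (4*j+5) ∧ s3 (j+1) = x ++ wp (4*j+5) ++ y) ∧
    th true (s3 (j+1)) = s3 (j+1) ∧ s3 (j+1) <:+: wp (4*j+7) ∧
    FactorUp (false :: s3 (j+1) ++ [false]) ∧ FactorUp (true :: s3 (j+1) ++ [true]) := by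
  obtain ⟨-, -, -, hrec⟩ := main_ind (j+2)
  obtain ⟨-, -, r3, -⟩ := hrec j (by omega)
  obtain ⟨-, r6, r7, -⟩ := hrec (j+1) (by omega)
  replace r6 := r6 (by omega)
  rw [show 4*(j+1)+1 = 4*j+5 by ring, show 4*(j+1)+2 = 4*j+6 by ring,
    show 4*(j+1)-2 = 4*j+2 by omega] at r6
  rw [show 4*(j+1)+3 = 4*j+7 by ring, show 4*(j+1)+2 = 4*j+6 by ring] at r7
  have hD := th_wp (sy2 j)
  have hB := th_wp (sy3 j)
  have hP := th_wp (sy1 (j+1))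
  have hQ := th_wp (sy2 (j+1))
  have hT := th_wp (sy3 (j+1))
  have hW := th_wp (sy1 (j+2))
  rw [show 4*(j+1)+1 = 4*j+5 by ring] at hP
  rw [show 4*(j+1)+2 = 4*j+6 by ring] at hQ
  rw [show 4*(j+1)+3 = 4*j+7 by ring] at hT
  rw [show 4*(j+2)+1 = 4*j+9 by ring] at hW
  obtain ⟨g, hg⟩ : ∃ g, wp (4*j+2) = g ++ [true, false, true, false] := by
    obtain ⟨t, ht⟩ := wp_two
    obtain ⟨r, hr⟩ := wp_prefix (show 2 ≤ 4*j+2 by omega)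
    refine ⟨th true (t ++ r), ?_⟩
    conv_lhs => rw [← hD, ← hr, ht]
    simp [th]
  obtain ⟨b, hb⟩ := wp_prefix (show 4*j+2 ≤ 4*j+3 by omega)
  obtain ⟨p, hp⟩ := wp_ext (show 4*j+3 < 4*j+5 by omega)
  obtain ⟨q, hq⟩ := wp_prefix (show 4*j+5 ≤ 4*j+6 by omega)
  obtain ⟨q', hq'⟩ := wp_ext (show 4*j+2 < 4*j+6 by omega)
  obtain ⟨t, ht⟩ := wp_prefix (show 4*j+6 ≤ 4*j+7 by omega)
  have e1 : b = th false (g ++ [true]) := by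
    refine ext_lem false (Y := [false, true, false] ++ b) hB hb.symm (by rw [← hb, hg]; simp) ?_
    have := congrArg List.length hb
    have := congrArg List.length hg
    simp [el] at *; omega
  have e2 : wp (4*j+3) = wp (4*j+2) ++ ([true] ++ th false g) := by
    rw [← hb, e1]; simp [th_append, th_cons, th_nil]
  have hf := words3 hD hP hQ hT hg (P' := p) (by rw [hp, e2]; simp) hq.symm
    r6 hq' ht.symm r7
  refine fin_lem true false false (4*j+7) (4*j+9) hD hP e2 (p := _) (by rw [hp, e2, List.append_assoc, List.append_assoc]) rfl rfl hW
    (wp_prefix (by omega)) (s3 (j+1)) ?_ ?_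
  · unfold s3
    rw [th_true, show 4*(j+1)-1 = 4*j+3 by omega, show 4*(j+1)+1 = 4*j+5 by omega,
      show 4*(j+1)-2 = 4*j+2 by omega]
  · simpa [th_append, th_cons, th_nil] using hf

/-- `s_{4k+1}` and `s_{4k+3}` are bispecial factors of `u_p`;
`s_{4k+1}` is a palindrome contained in `w_{4k+1}` with bilateral extensions
`1·s_{4k+1}·0` and `0·s_{4k+1}·1`, and `s_{4k+3}` is an `E`-palindrome contained in
`w_{4k+3}` with bilateral extensions `0·s_{4k+3}·0` and `1·s_{4k+3}·1`. -/
theorem s1_s3_bispecial (k : ℕ) (hk : 1 ≤ k) :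
    (∃ x y : Word, (wp (4*k-3)).reverse = x ++ wp (4*k-4) ∧
        wp (4*k-3) = wp (4*k-4) ++ y ∧
        wp (4*k-4) <+: wp (4*k-1) ∧ wp (4*k-4) <:+ wp (4*k-1) ∧
        s1 k = x ++ wp (4*k-1) ++ y) ∧
    IsPal (s1 k) ∧ (s1 k) <:+: wp (4*k+1) ∧
    (∀ a : Bool, FactorUp (a :: s1 k)) ∧ (∀ b : Bool, FactorUp (s1 k ++ [b])) ∧
    FactorUp (true :: s1 k ++ [false]) ∧ FactorUp (false :: s1 k ++ [true]) ∧
    (∃ x y : Word, Ebar (wp (4*k-1)) = x ++ wp (4*k-2) ∧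
        wp (4*k-1) = wp (4*k-2) ++ y ∧
        wp (4*k-2) <+: wp (4*k+1) ∧ wp (4*k-2) <:+ wp (4*k+1) ∧
        s3 k = x ++ wp (4*k+1) ++ y) ∧
    IsEPal (s3 k) ∧ (s3 k) <:+: wp (4*k+3) ∧
    (∀ a : Bool, FactorUp (a :: s3 k)) ∧ (∀ b : Bool, FactorUp (s3 k ++ [b])) ∧
    FactorUp (false :: s3 k ++ [false]) ∧ FactorUp (true :: s3 k ++ [true]) := by
  obtain ⟨j, rfl⟩ : ∃ j, k = j + 1 := ⟨k - 1, by omega⟩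
  obtain ⟨a1, a2, a3, a4, a5⟩ := part1 j
  obtain ⟨b1, b2, b3, b4, b5⟩ := part3 j
  rw [th_false] at a1 a2
  rw [th_true] at b1 b2
  have i1 : 4*(j+1)-3 = 4*j+1 := by omega
  have i2 : 4*(j+1)-4 = 4*j := by omega
  have i3 : 4*(j+1)-1 = 4*j+3 := by omega
  have i4 : 4*(j+1)+1 = 4*j+5 := by omega
  have i5 : 4*(j+1)-2 = 4*j+2 := by omega
  have i6 : 4*(j+1)+3 = 4*j+7 := by omega
  rw [i1, i2, i3, i4, i5, i6]
  refine ⟨a1, a2, a3, ?_, ?_, a4, a5, b1, b2, b3, ?_, ?_, b4, b5⟩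
  · intro a; cases a
    · exact factor_left a5
    · exact factor_left a4
  · intro a; cases a
    · exact factor_right a4
    · exact factor_right a5
  · intro a; cases a
    · exact factor_left b4
    · exact factor_left b5
  · intro a; cases a
    · exact factor_right b4
    · exact factor_right b5
end

section
/- In u_p = u(1^ω,(EERR)^ω), the factors s_{2k+1} (k ≥ 2) together with their images under R and E are exactly the weak bispecial factors of u_p. -/
/-- `w` is a weak bispecial factor of `u_p`. -/
def WeakBSUp (w : Word) : Prop :=
  ((∀ a : Bool, FactorUp (a :: w)) ∧ (∀ b : Bool, FactorUp (w ++ [b]))) ∧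
    ((FactorUp (false :: w ++ [true]) ∧ FactorUp (true :: w ++ [false]) ∧
        ¬ FactorUp (false :: w ++ [false]) ∧ ¬ FactorUp (true :: w ++ [true])) ∨
     (FactorUp (false :: w ++ [false]) ∧ FactorUp (true :: w ++ [true]) ∧
        ¬ FactorUp (false :: w ++ [true]) ∧ ¬ FactorUp (true :: w ++ [false])))

inductive T3 | a | b | c
  deriving DecidableEq

namespace T3

def t1 : T3 → List T3
  | a => [a, b, a, c]
  | b => [a, b, a]
  | c => [a, b, a, a]

def tau : List T3 → List T3
  | [] => []
  | x :: w => t1 x ++ tau w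

abbrev mk : List T3 := [a, b, a]

def pp (w : List T3) : List T3 := tau w ++ mk

def e : ℕ → List T3
  | 0 => []
  | n+1 => pp (e n)

def f : ℕ → List T3
  | 0 => [a]
  | n+1 => pp (f n)

def g : ℕ → List T3
  | 0 => [a, a, b, a, c, a, b, a, a]
  | n+1 => pp (g n)

lemma tau_append (u v : List T3) : tau (u ++ v) = tau u ++ tau v := by
  induction u with
  | nil => rfl
  | cons x u ih => simp [tau, ih]

lemma pp_start (w : List T3) : ∃ r, pp w = a :: b :: a :: r := by
  cases w with
  | nil => exact ⟨[], rfl⟩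
  | cons x w => cases x <;> simp [pp, tau, t1]

lemma sync (W : List T3) : ∀ α β, α ++ mk ++ β = pp W →
    ∃ w1 w2, W = w1 ++ w2 ∧ α = tau w1 ∧ mk ++ β = pp w2 := by
  induction W with
  | nil =>
    intro α β h
    have hl := congrArg List.length h
    simp [pp, tau] at hl
    have : α = [] := List.length_eq_zero_iff.1 (by omega)
    subst this
    exact ⟨[], [], rfl, rfl, by simpa using h⟩
  | cons x W ih =>
    intro α β h
    obtain ⟨r, hr⟩ := pp_start W
    have h2 : α ++ mk ++ β = t1 x ++ pp W := by rw [h]; simp [pp, tau]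
    by_cases hα : α = []
    · subst hα
      exact ⟨[], x :: W, rfl, rfl, by simpa using h⟩
    have key : ∃ α', α = t1 x ++ α' ∧ α' ++ mk ++ β = pp W := by
      rw [hr] at h2 ⊢
      cases x <;> rcases α with _ | ⟨p, _ | ⟨q, _ | ⟨s, _ | ⟨u, α⟩⟩⟩⟩ <;> simp_all [t1]
    obtain ⟨α', h3, h4⟩ := key
    obtain ⟨w1, w2, h5, h6, h7⟩ := ih α' β h4
    exact ⟨x :: w1, w2, by simp [h5], by simp [h3, h6, tau], h7⟩

lemma pp_inj : ∀ w w', pp w = pp w' → w = w' := by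
  intro w
  induction w with
  | nil =>
    intro w' h
    cases w' with
    | nil => rfl
    | cons y w' =>
      have hl := congrArg List.length h
      cases y <;> simp [pp, tau, t1] at hl
  | cons x w ih =>
    intro w' h
    cases w' with
    | nil =>
      have hl := congrArg List.length h
      cases x <;> simp [pp, tau, t1] at hl
    | cons y w' =>
      have h2 : t1 x ++ pp w = t1 y ++ pp w' := by simpa [pp, tau] using h
      obtain ⟨r, hr⟩ := pp_start w
      obtain ⟨r', hr'⟩ := pp_start w'
      have hxy : x = y := by
        rw [hr, hr'] at h2
        cases x <;> cases y <;> simp_all [t1]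
      subst hxy
      rw [ih w' (List.append_cancel_left h2)]

lemma tau_inj {w w' : List T3} (h : tau w = tau w') : w = w' :=
  pp_inj w w' (by simp [pp, h])

lemma mk_t1 (x : T3) : mk ++ (t1 x).reverse = t1 x ++ mk := by
  cases x <;> simp [t1]

lemma pp_reverse (w : List T3) : (pp w).reverse = pp w.reverse := by
  induction w with
  | nil => rfl
  | cons x w ih =>
    have : pp (x :: w) = t1 x ++ pp w := by simp [pp, tau]
    rw [this, List.reverse_append, ih]
    simp only [pp, List.reverse_cons, tau_append, List.append_assoc]
    rw [mk_t1]; simp [tau]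

lemma e_pal (n : ℕ) : (e n).reverse = e n := by
  induction n with
  | zero => rfl
  | succ n ih => simp only [e, pp_reverse, ih]

lemma f_pal (n : ℕ) : (f n).reverse = f n := by
  induction n with
  | zero => rfl
  | succ n ih => simp only [f, pp_reverse, ih]

lemma g_pal (n : ℕ) : (g n).reverse = g n := by
  induction n with
  | zero => rfl
  | succ n ih => simp only [g, pp_reverse, ih]

/-- prefix step -/
lemma pp_prefix {u v : List T3} (h : u <+: v) : pp u <+: pp v := by
  obtain ⟨s, rfl⟩ := h
  obtain ⟨r, hr⟩ := pp_start s
  refine ⟨r, ?_⟩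
  have : pp (u ++ s) = tau u ++ pp s := by simp [pp, tau_append]
  rw [this, hr]; simp [pp]

lemma e_step (n : ℕ) : e n <+: e (n+1) := by
  induction n with
  | zero => exact List.nil_prefix
  | succ n ih => exact pp_prefix ih

lemma e_mono {m n : ℕ} (h : m ≤ n) : e m <+: e n := by
  induction h with
  | refl => exact List.prefix_rfl
  | step _ ih => exact ih.trans (e_step _)

def Lt (v : List T3) : Prop := ∃ n, v <:+: e n

lemma Lt.mono {u v : List T3} (h : Lt v) (h' : u <:+: v) : Lt u := by
  obtain ⟨n, hn⟩ := h
  exact ⟨n, h'.trans hn⟩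

lemma Lt.rev {v : List T3} (h : Lt v) : Lt v.reverse := by
  obtain ⟨n, hn⟩ := h
  exact ⟨n, by rw [← e_pal n]; exact List.reverse_infix.2 hn⟩

lemma Lt.succ {v : List T3} (h : Lt v) : ∃ n, v <:+: pp (e n) := by
  obtain ⟨n, hn⟩ := h
  exact ⟨n, hn.trans (e_step n).isInfix⟩

lemma Lt.pp {v : List T3} (h : Lt v) : Lt (pp v) := by
  obtain ⟨n, s, t, hn⟩ := h
  refine ⟨n+1, ?_⟩
  have h1 : T3.pp (v ++ t) <:+: e (n+1) := by
    refine ⟨tau s, [], ?_⟩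
    simp [e, ← hn, T3.pp, tau_append]
  exact ((pp_prefix (List.prefix_append v t)).isInfix).trans h1

def bad : List T3 → Bool
  | b :: b :: _ => true
  | c :: b :: _ => true
  | b :: c :: _ => true
  | c :: c :: _ => true
  | b :: a :: b :: _ => true
  | a :: a :: c :: _ => true
  | c :: a :: a :: _ => true
  | c :: a :: c :: _ => true
  | a :: a :: a :: a :: _ => true
  | _ => false

lemma not_bad (W : List T3) : ∀ s, s <:+ pp W → bad s = false := by
  induction W with
  | nil =>
    intro s hs
    simp only [pp, tau, List.nil_append, List.suffix_cons_iff, List.suffix_nil] at hs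
    rcases hs with rfl | rfl | rfl | rfl <;> rfl
  | cons x W ih =>
    intro s hs
    obtain ⟨r, hr⟩ := pp_start W
    have h2 : pp (x :: W) = t1 x ++ pp W := by simp [pp, tau]
    rw [h2] at hs
    have ih' := ih s
    rw [hr] at hs ih'
    cases x <;> simp only [t1, List.cons_append, List.nil_append] at hs <;>
    (iterate 4 (rw [List.suffix_cons_iff] at hs; rcases hs with rfl | hs; rfl)) <;>
    first | exact ih' hs | exact ih' (hs.trans (List.suffix_cons _ _))

lemma Lt.not_bad {v : List T3} (h : Lt v) (s t r : List T3) (hv : v = s ++ t ++ r)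
    (hb : ∀ q, bad (t ++ q) = true) : False := by
  obtain ⟨n, α, β, hn⟩ := h.succ
  have := T3.not_bad (e n) (t ++ (r ++ β)) ⟨α ++ s, by rw [← hn, hv]; simp⟩
  rw [hb] at this
  cases this

lemma ext {l Y r : List T3} (h : Lt (l ++ Y ++ mk ++ r)) (hY : mk <+: Y ++ mk) :
    ∃ n w1 w w4, Y = tau w ∧ e n = w1 ++ w ++ w4 ∧ l <:+ tau w1 ∧ mk ++ r <+: pp w4 := by
  obtain ⟨n, α, β, hn⟩ := h.succ
  obtain ⟨Z, hZ⟩ := hY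
  have h1 : (α ++ l) ++ mk ++ (Z ++ r ++ β) = pp (e n) := by
    rw [← hn]
    calc _ = α ++ l ++ (mk ++ Z) ++ r ++ β := by simp only [List.append_assoc]
      _ = _ := by rw [hZ]; simp only [List.append_assoc]
  obtain ⟨w1, w2, hw, h2, h3⟩ := sync _ _ _ h1
  have h4 : Y ++ mk ++ (r ++ β) = pp w2 := by
    rw [← h3, ← hZ]; simp only [List.append_assoc]
  obtain ⟨w, w4, hw', h5, h6⟩ := sync _ _ _ h4
  exact ⟨n, w1, w, w4, h5, by rw [hw, hw', List.append_assoc], ⟨α, h2⟩,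
    ⟨β, by rw [← h6, List.append_assoc]⟩⟩

/-- two-sided extension correspondence, letters `x`, `y` plus short contexts -/
lemma ext_iff {l w r : List T3} (hl : l ≠ []) (hr : r ≠ []) (hl2 : l.length ≤ 2)
    (hr2 : r.length ≤ 2) :
    Lt (l ++ tau w ++ mk ++ r) ↔
      ∃ x y, l <:+ t1 x ∧ mk ++ r <+: t1 y ++ mk ∧ Lt (x :: w ++ [y]) := by
  constructor
  · intro h
    have hY : mk <+: tau w ++ mk := by
      obtain ⟨q, hq⟩ := pp_start w
      exact ⟨q, by rw [show tau w ++ mk = pp w from rfl, hq]; rfl⟩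
    obtain ⟨n, w1, w', w4, h1, h2, h3, h4⟩ := ext h hY
    have := tau_inj h1
    subst this
    rcases List.eq_nil_or_concat w1 with rfl | ⟨w1, x, rfl⟩
    · simp [tau] at h3; exact absurd h3 hl
    rcases w4 with _ | ⟨y, w4⟩
    · have := h4.length_le
      have hr' := List.length_pos_iff.2 hr
      simp [pp, tau] at this
      omega
    refine ⟨x, y, ?_, ?_, n, w1, w4, by rw [h2]; simp⟩
    · rw [List.concat_eq_append, tau_append] at h3
      refine List.suffix_of_suffix_length_le h3 ?_ ?_
      · simp [tau]
      · cases x <;> simp [t1] <;> omega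
    · obtain ⟨q, hq⟩ := pp_start w4
      have h5 : pp (y :: w4) = t1 y ++ pp w4 := by simp [pp, tau]
      rw [h5] at h4
      refine List.prefix_of_prefix_length_le h4 (l₂ := t1 y ++ mk) ?_ ?_
      · rw [hq]; exact ⟨q, by simp⟩
      · cases y <;> simp [t1] <;> omega
  · rintro ⟨x, y, ⟨p, hp⟩, ⟨q, hq⟩, h⟩
    refine h.pp.mono ⟨p, q, ?_⟩
    have : pp (x :: w ++ [y]) = t1 x ++ tau w ++ (t1 y ++ mk) := by
      simp [pp, tau, tau_append]
    rw [this, ← hp, ← hq]; simp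

def P : T3 → Option Bool
  | a => some true
  | _ => some false

def Q : T3 → Option Bool
  | a => none
  | b => some true
  | c => some false

def F (f g : T3 → Option Bool) (w : List T3) (i j : Bool) : Prop :=
  ∃ x y, f x = some i ∧ g y = some j ∧ Lt (x :: w ++ [y])

def Wk (G : Bool → Bool → Prop) : Prop :=
  (G false true ∧ G true false ∧ ¬ G false false ∧ ¬ G true true) ∨
    (G false false ∧ G true true ∧ ¬ G false true ∧ ¬ G true false)

lemma Wk.congr {G H : Bool → Bool → Prop} (h : ∀ i j, G i j ↔ H i j) : Wk G ↔ Wk H := by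
  simp only [Wk, h]

lemma Wk.neg {G H : Bool → Bool → Prop} (h : ∀ i j, G i j ↔ H (!i) (!j)) : Wk G ↔ Wk H := by
  simp only [Wk, h, Bool.not_true, Bool.not_false]; tauto

def CL (l : List T3) (lf : T3 → Option Bool) : Prop :=
  l.length ≤ 1 ∧ ∀ x i, lf x = some (!i) ↔ ∃ x', P x' = some i ∧ (x' :: l) <:+ t1 x

def CR (r : List T3) (rf : T3 → Option Bool) : Prop :=
  r.length ≤ 1 ∧ ∀ y j, rf y = some (!j) ↔ ∃ y', P y' = some j ∧ mk ++ (r ++ [y']) <+: t1 y ++ mk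

lemma ex3 (p : T3 → Prop) : (∃ x, p x) ↔ p a ∨ p b ∨ p c :=
  ⟨fun ⟨x, h⟩ => by cases x <;> simp [h], by rintro (h | h | h) <;> exact ⟨_, h⟩⟩

lemma cl0 : CL [] P := ⟨by simp, by
  intro x i; rw [ex3]; cases x <;> cases i <;> simp [P] <;> decide⟩
lemma cl1 : CL [a] Q := ⟨by simp, by
  intro x i; rw [ex3]; cases x <;> cases i <;> simp [P, Q] <;> decide⟩
lemma cr0 : CR [] P := ⟨by simp, by
  intro x i; rw [ex3]; cases x <;> cases i <;> simp [P] <;> decide⟩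
lemma cr1 : CR [a] Q := ⟨by simp, by
  intro x i; rw [ex3]; cases x <;> cases i <;> simp [P, Q] <;> decide⟩

lemma F_desub {l r w : List T3} {lf rf : T3 → Option Bool} (hl : CL l lf) (hr : CR r rf)
    (i j : Bool) : F P P (l ++ tau w ++ mk ++ r) i j ↔ F lf rf w (!i) (!j) := by
  have key : ∀ x' y', Lt (x' :: (l ++ tau w ++ mk ++ r) ++ [y']) ↔ 
      ∃ x y, x' :: l <:+ t1 x ∧ mk ++ (r ++ [y']) <+: t1 y ++ mk ∧ Lt (x :: w ++ [y]) := by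
    intro x' y'
    rw [← ext_iff (by simp) (by simp) (by have := hl.1; simp; omega) (by have := hr.1; simp; omega)]
    simp
  constructor
  · rintro ⟨x', y', h1, h2, h3⟩
    obtain ⟨x, y, h4, h5, h6⟩ := (key x' y').1 h3
    exact ⟨x, y, (hl.2 x i).2 ⟨x', h1, h4⟩, (hr.2 y j).2 ⟨y', h2, h5⟩, h6⟩
  · rintro ⟨x, y, h1, h2, h3⟩
    obtain ⟨x', h4, h5⟩ := (hl.2 x i).1 h1
    obtain ⟨y', h6, h7⟩ := (hr.2 y j).1 h2
    exact ⟨x', y', h4, h6, (key x' y').2 ⟨x, y, h5, h7, h3⟩⟩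

lemma F_rev {f g : T3 → Option Bool} {w : List T3} {i j : Bool} (h : F f g w i j) :
    F g f w.reverse j i := by
  obtain ⟨x, y, h1, h2, h3⟩ := h
  exact ⟨y, x, h2, h1, by simpa using h3.rev⟩

lemma Wk.rev {f g : T3 → Option Bool} {w : List T3} (h : Wk (F f g w)) :
    Wk (F g f w.reverse) := by
  have h0 : ∀ i j, F f g w i j ↔ F g f w.reverse j i := fun i j =>
    ⟨F_rev, fun h => by simpa using F_rev h⟩
  simp only [Wk, h0] at h ⊢
  tauto

lemma Wk.left {G : Bool → Bool → Prop} (h : Wk G) (i : Bool) : ∃ j, G i j := by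
  rcases h with ⟨h1, h2, -, -⟩ | ⟨h1, h2, -, -⟩ <;> cases i <;> exact ⟨_, by assumption⟩

def LSP (w : List T3) : Prop := Lt (a :: w) ∧ (Lt (b :: w) ∨ Lt (c :: w))
def LSQ (w : List T3) : Prop := Lt (b :: w) ∧ Lt (c :: w)

lemma Wk.lsp {w : List T3} {g : T3 → Option Bool} (h : Wk (F P g w)) : LSP w := by
  obtain ⟨_, x, y, h1, h2, h3⟩ := h.left true
  obtain ⟨_, x', y', h1', h2', h3'⟩ := h.left false
  have h4 := h3.mono (List.prefix_append _ _).isInfix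
  have h4' := h3'.mono (List.prefix_append _ _).isInfix
  constructor
  · cases x <;> simp_all [P]
  · cases x' <;> simp_all [P]

lemma Wk.lsq {w : List T3} {g : T3 → Option Bool} (h : Wk (F Q g w)) : LSQ w := by
  obtain ⟨_, x, y, h1, h2, h3⟩ := h.left true
  obtain ⟨_, x', y', h1', h2', h3'⟩ := h.left false
  have h4 := h3.mono (List.prefix_append _ _).isInfix
  have h4' := h3'.mono (List.prefix_append _ _).isInfix
  constructor
  · cases x <;> simp_all [Q]
  · cases x' <;> simp_all [Q]

lemma LSP.mono {u v : List T3} (h : LSP v) (huv : u <+: v) : LSP u := by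
  have key : ∀ x, Lt (x :: v) → Lt (x :: u) := fun x hx =>
    hx.mono (List.prefix_cons_inj x |>.2 huv).isInfix
  exact ⟨key _ h.1, h.2.imp (key _) (key _)⟩

lemma LSQ_cases {w : List T3} (h : LSQ w) : w = [] ∨ w = [a] := by
  obtain ⟨h1, h2⟩ := h
  rcases w with _ | ⟨x, _ | ⟨y, w⟩⟩
  · simp
  · cases x
    · simp
    · exact (h1.not_bad [] [b, b] [] (by simp) (by simp [bad])).elim
    · exact (h1.not_bad [] [b, c] [] (by simp) (by simp [bad])).elim
  · exfalso
    cases x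
    · cases y
      · exact h2.not_bad [] [c, a, a] w (by simp) (by simp [bad])
      · exact h1.not_bad [] [b, a, b] w (by simp) (by simp [bad])
      · exact h2.not_bad [] [c, a, c] w (by simp) (by simp [bad])
    · exact h1.not_bad [] [b, b] (y :: w) (by simp) (by simp [bad])
    · exact h1.not_bad [] [b, c] (y :: w) (by simp) (by simp [bad])

lemma LSP_step1 {x : T3} (h : LSP [x]) : x = a := by
  obtain ⟨h1, h2⟩ := h
  cases x
  · rfl
  · rcases h2 with h2 | h2
    · exact (h2.not_bad [] [b, b] [] (by simp) (by simp [bad])).elim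
    · exact (h2.not_bad [] [c, b] [] (by simp) (by simp [bad])).elim
  · rcases h2 with h2 | h2
    · exact (h2.not_bad [] [b, c] [] (by simp) (by simp [bad])).elim
    · exact (h2.not_bad [] [c, c] [] (by simp) (by simp [bad])).elim

/-- `P`-left-special words without `aba` -/
lemma LSP_cases {w : List T3} (h : LSP w) (hm : ¬ mk <:+: w) :
    w = [] ∨ w = [a] ∨ w = [a, a] ∨ w = [a, b] ∨ w = [a, a, b] := by
  rcases w with _ | ⟨x, w⟩
  · simp
  have hx : x = a := LSP_step1 (h.mono ⟨w, rfl⟩)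
  subst hx
  obtain ⟨h1, h2⟩ := h
  rcases w with _ | ⟨y, w⟩
  · simp
  cases y
  · rcases w with _ | ⟨z, w⟩
    · simp
    cases z
    · exact (h1.not_bad [] [a, a, a, a] w (by simp) (by simp [bad])).elim
    · rcases w with _ | ⟨u, w⟩
      · simp
      exfalso
      cases u
      · exact hm ⟨[a], w, by simp⟩
      · exact h1.not_bad [a, a, a] [b, b] w (by simp) (by simp [bad])
      · exact h1.not_bad [a, a, a] [b, c] w (by simp) (by simp [bad])
    · exact (h1.not_bad [a] [a, a, c] w (by simp) (by simp [bad])).elim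
  · rcases w with _ | ⟨u, w⟩
    · simp
    exfalso
    cases u
    · exact hm ⟨[], w, by simp⟩
    · exact h1.not_bad [a, a] [b, b] w (by simp) (by simp [bad])
    · exact h1.not_bad [a, a] [b, c] w (by simp) (by simp [bad])
  · exact (h1.not_bad [] [a, a, c] w (by simp) (by simp [bad])).elim

lemma first_occ {α : Type} {m v : List α} (h : m <:+: v) : ∃ l X, v = l ++ m ++ X ∧
    ∀ l' X', v = l' ++ m ++ X' → l.length ≤ l'.length := by
  classical
  have hex : ∃ k l X, v = l ++ m ++ X ∧ l.length = k := by
    obtain ⟨l, X, h⟩ := h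
    exact ⟨_, l, X, h.symm, rfl⟩
  obtain ⟨l, X, h1, h2⟩ := Nat.find_spec hex
  exact ⟨l, X, h1, fun l' X' h' => h2 ▸ Nat.find_min' hex ⟨l', X', h', rfl⟩⟩

lemma LSP_occ {w : List T3} (h : LSP w) (hm : mk <:+: w) : ∃ l X, w = l ++ mk ++ X ∧
    (∀ l' X', w = l' ++ mk ++ X' → l.length ≤ l'.length) ∧ (l = [] ∨ l = [a]) := by
  obtain ⟨l, X, rfl, hmin⟩ := first_occ hm
  refine ⟨l, X, rfl, hmin, ?_⟩
  have hl : ¬ mk <:+: l := by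
    rintro ⟨s, t, hst⟩
    have := hmin s (t ++ mk ++ X) (by rw [← hst]; simp)
    rw [← hst] at this; simp at this
  have h1 := h.1
  rcases LSP_cases (h.mono ⟨mk ++ X, by simp⟩) hl with rfl | rfl | rfl | rfl | rfl
  · simp
  · simp
  · exact (h1.not_bad [] [a, a, a, a] (b :: a :: X) (by simp) (by simp [bad])).elim
  · exact (h1.not_bad [a, a] [b, a, b] (a :: X) (by simp) (by simp [bad])).elim
  · exact (h1.not_bad [a, a, a] [b, a, b] (a :: X) (by simp) (by simp [bad])).elim

/-- both-sided desubstitution shape -/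
lemma occ_both {α : Type} {m v l X r' X' : List α} (hm : m.reverse = m) (h1 : v = l ++ m ++ X)
    (hmin : ∀ l' X', v = l' ++ m ++ X' → l.length ≤ l'.length)
    (h2 : v.reverse = r' ++ m ++ X') :
    ∃ Y, v = l ++ Y ++ m ++ r'.reverse ∧ m <+: Y ++ m := by
  have h3 : v = X'.reverse ++ m ++ r'.reverse := by
    rw [← List.reverse_reverse v, h2]; simp [hm]
  have h4 := hmin _ _ h3
  have h5 : l <+: X'.reverse := by
    refine List.prefix_of_prefix_length_le (l₃ := v) ⟨m ++ X, by simp [h1]⟩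
      ⟨m ++ r'.reverse, by rw [h3]; simp⟩ h4
  obtain ⟨Y, hY⟩ := h5
  refine ⟨Y, by rw [h3, ← hY], ?_⟩
  have h6 : m ++ X = Y ++ m ++ r'.reverse := by
    have : l ++ (m ++ X) = l ++ (Y ++ m ++ r'.reverse) := by
      rw [← List.append_assoc, ← h1, h3, ← hY]; simp only [List.append_assoc]
    exact List.append_cancel_left this
  refine List.prefix_of_prefix_length_le (l₃ := m ++ X) ⟨X, rfl⟩ ⟨r'.reverse, h6.symm⟩ ?_
  simp

lemma pos_e3 {v : List T3} (h : v <:+: e 3) : Lt v := ⟨3, h⟩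

lemma not_wk_t {G : Bool → Bool → Prop} (i : Bool) (h1 : G i true) (h2 : G i false) : ¬ Wk G := by
  intro h; cases i <;> simp_all [Wk]

lemma Wk_nil : ¬ Wk (F P P []) :=
  not_wk_t true ⟨a, a, rfl, rfl, pos_e3 (by decide)⟩ ⟨a, b, rfl, rfl, pos_e3 (by decide)⟩
lemma Wk_a : ¬ Wk (F P P [a]) :=
  not_wk_t true ⟨a, a, rfl, rfl, pos_e3 (by decide)⟩ ⟨a, b, rfl, rfl, pos_e3 (by decide)⟩
lemma Wk_aa : ¬ Wk (F P P [a, a]) :=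
  not_wk_t false ⟨b, a, rfl, rfl, pos_e3 (by decide)⟩ ⟨b, b, rfl, rfl, pos_e3 (by decide)⟩

lemma Wk_QP {w : List T3} : ¬ Wk (F Q P w) := by
  intro h
  rcases LSQ_cases h.lsq with rfl | rfl
  · have := (Wk.rev h).lsp
    obtain ⟨_, x, y, h1, h2, h3⟩ := h.left true
    obtain ⟨i, h5⟩ := (Wk.rev h).left false
    obtain ⟨x, y, h1, h2, h3⟩ := h5
    cases x <;> cases y <;> simp_all [P, Q]
    · exact h3.not_bad [] [b, b] [] (by simp) (by simp [bad])
    · exact h3.not_bad [] [b, c] [] (by simp) (by simp [bad])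
    · exact h3.not_bad [] [c, b] [] (by simp) (by simp [bad])
    · exact h3.not_bad [] [c, c] [] (by simp) (by simp [bad])
  · exact not_wk_t true ⟨b, a, rfl, rfl, pos_e3 (by decide)⟩
      ⟨b, c, rfl, rfl, pos_e3 (by decide)⟩ h

lemma Wk_PQ {w : List T3} : ¬ Wk (F P Q w) := fun h => Wk_QP (Wk.rev h)

lemma Wk_QQ_a : Wk (F Q Q [a]) := by
  left
  refine ⟨⟨c, b, rfl, rfl, pos_e3 (by decide)⟩, ⟨b, c, rfl, rfl, pos_e3 (by decide)⟩, ?_, ?_⟩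
  · rintro ⟨x, y, h1, h2, h3⟩
    cases x <;> cases y <;> simp_all [Q]
    exact h3.not_bad [] [c, a, c] [] (by simp) (by simp [bad])
  · rintro ⟨x, y, h1, h2, h3⟩
    cases x <;> cases y <;> simp_all [Q]
    exact h3.not_bad [] [b, a, b] [] (by simp) (by simp [bad])

lemma Wk_QQ {w : List T3} (h : Wk (F Q Q w)) : w = [a] := by
  rcases LSQ_cases h.lsq with rfl | rfl
  · exfalso
    obtain ⟨i, x, y, h1, h2, h3⟩ := h.left false
    cases x <;> cases y <;> simp_all [Q]
    · exact h3.not_bad [] [c, b] [] (by simp) (by simp [bad])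
    · exact h3.not_bad [] [c, c] [] (by simp) (by simp [bad])
  · rfl

lemma Wk_g (n : ℕ) : Wk (F P P (g n)) := by
  induction n with
  | zero => exact (Wk.neg (F_desub (w := [a]) cl1 cr1)).2 Wk_QQ_a
  | succ n ih =>
    have := (Wk.neg (F_desub (w := g n) cl0 cr0)).2 ih
    simpa [g, pp] using this

lemma Wk_class : ∀ (k : ℕ) (w : List T3), w.length ≤ k → Wk (F P P w) → ∃ n, w = g n := by
  intro k
  induction k with
  | zero =>
    intro w hw h
    have : w = [] := List.length_eq_zero_iff.1 (by omega)
    subst this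
    exact (Wk_nil h).elim
  | succ k ih =>
    intro w hw h
    have hr := Wk.rev h
    by_cases hm : mk <:+: w
    · have hm' : mk <:+: w.reverse := by
        have := List.reverse_infix.2 hm
        simpa using this
      obtain ⟨l, X, h1, hmin, hl⟩ := LSP_occ h.lsp hm
      obtain ⟨r, X', h2, -, hr'⟩ := LSP_occ hr.lsp hm'
      obtain ⟨Y, hY, hY'⟩ := occ_both (by simp) h1 hmin h2
      obtain ⟨j, x, y, -, -, h5⟩ := h.left true
      have h6 : Lt ((x :: l) ++ Y ++ mk ++ (r.reverse ++ [y])) := by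
        rw [hY] at h5; simpa using h5
      obtain ⟨_, _, w', _, rfl, -⟩ := ext h6 hY'
      subst hY
      rcases hl with rfl | rfl <;> rcases hr' with rfl | rfl
      · have h7 := (Wk.neg (F_desub (w := w') cl0 cr0)).1 h
        obtain ⟨n, rfl⟩ := ih w' (by
          have : w'.length ≤ (tau w').length := by
            clear * -
            induction w' with
            | nil => simp
            | cons x w ih => cases x <;> simp [tau, t1] <;> omega
          simp at hw; omega) h7
        exact ⟨n+1, by simp [g, pp]⟩
      · exact (Wk_PQ ((Wk.neg (F_desub (w := w') cl0 cr1)).1 h)).elim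
      · exact (Wk_QP ((Wk.neg (F_desub (w := w') cl1 cr0)).1 h)).elim
      · have := Wk_QQ ((Wk.neg (F_desub (w := w') cl1 cr1)).1 h)
        subst this
        exact ⟨0, rfl⟩
    · have hm' : ¬ mk <:+: w.reverse := by
        intro h'
        exact hm (by have := List.reverse_infix.2 h'; simpa using this)
      exfalso
      have h8 := LSP_cases hr.lsp hm'
      rcases LSP_cases h.lsp hm with rfl | rfl | rfl | rfl | rfl
      · exact Wk_nil h
      · exact Wk_a h
      · exact Wk_aa h
      · simp at h8
      · simp at h8

/-! ### The difference word -/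

abbrev tt : List Bool := [true, true, true]

def s1' : T3 → List Bool
  | a => [true]
  | b => [true, true, true, false]
  | c => [true, true, true, false, true, false]

def psi : List T3 → List Bool
  | [] => []
  | x :: w => s1' x ++ psi w

def dd (w : List T3) : List Bool := psi w ++ tt

lemma psi_append (u v : List T3) : psi (u ++ v) = psi u ++ psi v := by
  induction u with
  | nil => rfl
  | cons x u ih => simp [psi, ih]

lemma dd_start (w : List T3) : ∃ r, dd w = true :: true :: true :: r := by
  induction w with
  | nil => exact ⟨[], rfl⟩
  | cons x w ih =>
    obtain ⟨r, hr⟩ := ih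
    have : dd (x :: w) = s1' x ++ dd w := by simp [dd, psi]
    rw [this, hr]
    cases x <;> simp [s1']

lemma dd_cons (x : T3) (w : List T3) : dd (x :: w) = s1' x ++ dd w := by simp [dd, psi]

lemma dsync (W : List T3) : ∀ α β, α ++ tt ++ β = dd W →
    ∃ w1 w2, W = w1 ++ w2 ∧ α = psi w1 ∧ tt ++ β = dd w2 := by
  induction W with
  | nil =>
    intro α β h
    have hl := congrArg List.length h
    simp [dd, psi] at hl
    have : α = [] := List.length_eq_zero_iff.1 (by omega)
    subst this
    exact ⟨[], [], rfl, rfl, by simpa using h⟩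
  | cons x W ih =>
    intro α β h
    obtain ⟨r, hr⟩ := dd_start W
    have h2 : α ++ tt ++ β = s1' x ++ dd W := by rw [h, dd_cons]
    by_cases hα : α = []
    · subst hα
      exact ⟨[], x :: W, rfl, rfl, by simpa using h⟩
    have key : ∃ α', α = s1' x ++ α' ∧ α' ++ tt ++ β = dd W := by
      rw [hr] at h2 ⊢
      cases x <;> rcases α with _ | ⟨p, _ | ⟨q, _ | ⟨s, _ | ⟨u, _ | ⟨u', _ | ⟨u'', α⟩⟩⟩⟩⟩⟩ <;>
        simp_all [s1']
    obtain ⟨α', h3, h4⟩ := key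
    obtain ⟨w1, w2, h5, h6, h7⟩ := ih α' β h4
    exact ⟨x :: w1, w2, by simp [h5], by simp [h3, h6, psi], h7⟩

lemma dd_inj : ∀ w w', dd w = dd w' → w = w' := by
  intro w
  induction w with
  | nil =>
    intro w' h
    cases w' with
    | nil => rfl
    | cons y w' =>
      have hl := congrArg List.length h
      cases y <;> simp [dd, psi, s1'] at hl
  | cons x w ih =>
    intro w' h
    cases w' with
    | nil =>
      have hl := congrArg List.length h
      cases x <;> simp [dd, psi, s1'] at hl
    | cons y w' =>
      rw [dd_cons, dd_cons] at h
      obtain ⟨r, hr⟩ := dd_start w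
      obtain ⟨r', hr'⟩ := dd_start w'
      have hxy : x = y := by
        rw [hr, hr'] at h
        cases x <;> cases y <;> simp_all [s1']
      subst hxy
      rw [ih w' (List.append_cancel_left h)]

lemma psi_inj {w w' : List T3} (h : psi w = psi w') : w = w' :=
  dd_inj w w' (by simp [dd, h])

lemma tt_s1 (x : T3) : tt ++ (s1' x).reverse = s1' x ++ tt := by
  cases x <;> simp [s1']

lemma dd_reverse (w : List T3) : (dd w).reverse = dd w.reverse := by
  induction w with
  | nil => rfl
  | cons x w ih =>
    rw [dd_cons, List.reverse_append, ih]
    simp only [dd, List.reverse_cons, psi_append, List.append_assoc]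
    rw [tt_s1]; simp [psi]

lemma dd_prefix {u v : List T3} (h : u <+: v) : dd u <+: dd v := by
  obtain ⟨s, rfl⟩ := h
  obtain ⟨r, hr⟩ := dd_start s
  refine ⟨r, ?_⟩
  have : dd (u ++ s) = psi u ++ dd s := by simp [dd, psi_append]
  rw [this, hr]; simp [dd]

def LD (v : List Bool) : Prop := ∃ n, v <:+: dd (e n)

lemma LD.mono {u v : List Bool} (h : LD v) (h' : u <:+: v) : LD u := by
  obtain ⟨n, hn⟩ := h
  exact ⟨n, h'.trans hn⟩

lemma LD.rev {v : List Bool} (h : LD v) : LD v.reverse := by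
  obtain ⟨n, hn⟩ := h
  refine ⟨n, ?_⟩
  have := List.reverse_infix.2 hn
  rwa [dd_reverse, e_pal] at this

lemma Lt.dd {v : List T3} (h : Lt v) : LD (dd v) := by
  obtain ⟨n, s, t, hn⟩ := h
  refine ⟨n, ?_⟩
  have h1 : T3.dd (v ++ t) <:+: T3.dd (e n) := by
    refine ⟨psi s, [], ?_⟩
    simp [← hn, T3.dd, psi_append]
  exact ((dd_prefix (List.prefix_append v t)).isInfix).trans h1

def dbad : List Bool → Bool
  | false :: false :: _ => true
  | false :: true :: true :: false :: _ => true
  | false :: true :: false :: true :: false :: _ => true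
  | _ => false

lemma not_dbad (W : List T3) : ∀ s, s <:+ dd W → dbad s = false := by
  induction W with
  | nil =>
    intro s hs
    simp only [dd, psi, List.nil_append, List.suffix_cons_iff, List.suffix_nil] at hs
    rcases hs with rfl | rfl | rfl | rfl <;> rfl
  | cons x W ih =>
    intro s hs
    obtain ⟨r, hr⟩ := dd_start W
    rw [dd_cons] at hs
    have ih' := ih s
    rw [hr] at hs ih'
    cases x <;> simp only [s1', List.cons_append, List.nil_append] at hs
    · rw [List.suffix_cons_iff] at hs; rcases hs with rfl | hs
      · rfl
      · exact ih' hs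
    · iterate 4 (rw [List.suffix_cons_iff] at hs; rcases hs with rfl | hs; rfl)
      exact ih' hs
    · iterate 6 (rw [List.suffix_cons_iff] at hs; rcases hs with rfl | hs; rfl)
      exact ih' hs

lemma LD.not_bad {v : List Bool} (h : LD v) (s t r : List Bool) (hv : v = s ++ t ++ r)
    (hb : ∀ q, dbad (t ++ q) = true) : False := by
  obtain ⟨n, α, β, hn⟩ := h
  have := T3.not_dbad (e n) (t ++ (r ++ β)) ⟨α ++ s, by rw [← hn, hv]; simp⟩
  rw [hb] at this
  cases this

lemma dext {l Y r : List Bool} (h : LD (l ++ Y ++ tt ++ r)) (hY : tt <+: Y ++ tt) :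
    ∃ n w1 w w4, Y = psi w ∧ e n = w1 ++ w ++ w4 ∧ l <:+ psi w1 ∧ tt ++ r <+: dd w4 := by
  obtain ⟨n, α, β, hn⟩ := h
  obtain ⟨Z, hZ⟩ := hY
  have h1 : (α ++ l) ++ tt ++ (Z ++ r ++ β) = dd (e n) := by
    rw [← hn]
    calc _ = α ++ l ++ (tt ++ Z) ++ r ++ β := by simp only [List.append_assoc]
      _ = _ := by rw [hZ]; simp only [List.append_assoc]
  obtain ⟨w1, w2, hw, h2, h3⟩ := dsync _ _ _ h1
  have h4 : Y ++ tt ++ (r ++ β) = dd w2 := by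
    rw [← h3, ← hZ]; simp only [List.append_assoc]
  obtain ⟨w, w4, hw', h5, h6⟩ := dsync _ _ _ h4
  exact ⟨n, w1, w, w4, h5, by rw [hw, hw', List.append_assoc], ⟨α, h2⟩,
    ⟨β, by rw [← h6, List.append_assoc]⟩⟩

def FD (v : List Bool) (i j : Bool) : Prop := LD (i :: v ++ [j])

def DL (l : List Bool) (lf : T3 → Option Bool) : Prop :=
  ∀ x i, (lf x = some i → i :: l <:+ s1' x) ∧
    (∀ p, i :: l <:+ p ++ s1' x → lf x = some i)

def DR (r : List Bool) (rf : T3 → Option Bool) : Prop :=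
  ∀ y j, (rf y = some j → tt ++ (r ++ [j]) <+: s1' y ++ tt) ∧
    (∀ q, tt ++ (r ++ [j]) <+: s1' y ++ (tt ++ q) → rf y = some j)

lemma suffix_rev {α : Type} {u v : List α} : u <:+ v ↔ u.reverse <+: v.reverse :=
  List.reverse_prefix.symm

lemma dl0 : DL [] P := by
  intro x i
  constructor
  · cases x <;> cases i <;> simp [P] <;> decide
  · intro p; rw [suffix_rev]; cases x <;> cases i <;> simp [P, s1']
lemma dl1 : DL [true, false] Q := by
  intro x i
  constructor
  · cases x <;> cases i <;> simp [Q] <;> decide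
  · intro p; rw [suffix_rev]; cases x <;> cases i <;> simp [Q, s1']
lemma dr0 : DR [] P := by
  intro x i
  constructor
  · cases x <;> cases i <;> simp [P] <;> decide
  · intro p; cases x <;> cases i <;> simp [P, s1']
lemma dr1 : DR [false, true] Q := by
  intro x i
  constructor
  · cases x <;> cases i <;> simp [Q] <;> decide
  · intro p; cases x <;> cases i <;> simp [Q, s1']

lemma FD_desub {l r : List Bool} {w : List T3} {lf rf : T3 → Option Bool} (hl : DL l lf)
    (hr : DR r rf) (i j : Bool) : FD (l ++ psi w ++ tt ++ r) i j ↔ F lf rf w i j := by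
  constructor
  · intro h
    have h' : LD ((i :: l) ++ psi w ++ tt ++ (r ++ [j])) := by simpa [FD] using h
    have hY : tt <+: psi w ++ tt := by
      obtain ⟨q, hq⟩ := dd_start w
      exact ⟨q, by rw [show psi w ++ tt = dd w from rfl, hq]; rfl⟩
    obtain ⟨n, w1, w', w4, h1, h2, h3, h4⟩ := dext h' hY
    have := psi_inj h1
    subst this
    rcases List.eq_nil_or_concat w1 with rfl | ⟨w1, x, rfl⟩
    · simp [psi] at h3
    rcases w4 with _ | ⟨y, w4⟩
    · have := h4.length_le
      simp [dd, psi] at this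
      omega
    refine ⟨x, y, ?_, ?_, n, w1, w4, by rw [h2]; simp⟩
    · rw [List.concat_eq_append, psi_append] at h3
      exact (hl x i).2 (psi w1) (by simpa [psi] using h3)
    · obtain ⟨q, hq⟩ := dd_start w4
      rw [dd_cons, hq] at h4
      exact (hr y j).2 q h4
  · rintro ⟨x, y, h1, h2, h⟩
    obtain ⟨p, hp⟩ := (hl x i).1 h1
    obtain ⟨q, hq⟩ := (hr y j).1 h2
    refine h.dd.mono ⟨p, q, ?_⟩
    have : dd (x :: w ++ [y]) = s1' x ++ psi w ++ (s1' y ++ tt) := by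
      simp [dd, psi, psi_append]
    rw [this, ← hp, ← hq]; simp

lemma FD_rev {v : List Bool} {i j : Bool} (h : FD v i j) : FD v.reverse j i := by
  simpa [FD] using LD.rev h

lemma Wk.drev {v : List Bool} (h : Wk (FD v)) : Wk (FD v.reverse) := by
  have h0 : ∀ i j, FD v i j ↔ FD v.reverse j i := fun i j =>
    ⟨FD_rev, fun h => by simpa using FD_rev h⟩
  simp only [Wk, h0] at h ⊢
  tauto

def LSD (v : List Bool) : Prop := LD (true :: v) ∧ LD (false :: v)

lemma Wk.lsd {v : List Bool} (h : Wk (FD v)) : LSD v := by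
  obtain ⟨_, h1⟩ := h.left true
  obtain ⟨_, h2⟩ := h.left false
  exact ⟨LD.mono h1 (List.prefix_append _ _).isInfix, LD.mono h2 (List.prefix_append _ _).isInfix⟩

lemma LSD.mono {u v : List Bool} (h : LSD v) (huv : u <+: v) : LSD u := by
  have key : ∀ x, LD (x :: v) → LD (x :: u) := fun x hx =>
    hx.mono (List.prefix_cons_inj x |>.2 huv).isInfix
  exact ⟨key _ h.1, key _ h.2⟩

lemma LSD_cases {v : List Bool} (h : LSD v) (hm : ¬ tt <:+: v) :
    v = [] ∨ v = [true] ∨ v = [true, true] ∨ v = [true, false] ∨ v = [true, false, true] ∨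
      v = [true, false, true, true] := by
  obtain ⟨-, h2⟩ := h
  rcases v with _ | ⟨_ | _, v⟩
  · simp
  · exact (h2.not_bad [] [false, false] v (by simp) (by simp [dbad])).elim
  rcases v with _ | ⟨_ | _, v⟩
  · simp
  · rcases v with _ | ⟨_ | _, v⟩
    · simp
    · exact (h2.not_bad [false, true] [false, false] v (by simp) (by simp [dbad])).elim
    · rcases v with _ | ⟨_ | _, v⟩
      · simp
      · exact (h2.not_bad [] [false, true, false, true, false] v (by simp) (by simp [dbad])).elim
      · rcases v with _ | ⟨_ | _, v⟩
        · simp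
        · exact (h2.not_bad [false, true] [false, true, true, false] v (by simp)
            (by simp [dbad])).elim
        · exact (hm ⟨[true, false], v, by simp⟩).elim
  · rcases v with _ | ⟨_ | _, v⟩
    · simp
    · exact (h2.not_bad [] [false, true, true, false] v (by simp) (by simp [dbad])).elim
    · exact (hm ⟨[], v, by simp⟩).elim

lemma LSD_occ {v : List Bool} (h : LSD v) (hm : tt <:+: v) : ∃ l X, v = l ++ tt ++ X ∧
    (∀ l' X', v = l' ++ tt ++ X' → l.length ≤ l'.length) ∧ (l = [] ∨ l = [true, false]) := by
  obtain ⟨l, X, rfl, hmin⟩ := first_occ hm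
  refine ⟨l, X, rfl, hmin, ?_⟩
  have hl : ¬ tt <:+: l := by
    rintro ⟨s, t, hst⟩
    have := hmin s (t ++ tt ++ X) (by rw [← hst]; simp)
    rw [← hst] at this; simp at this
  rcases LSD_cases (h.mono ⟨tt ++ X, by simp⟩) hl with rfl | rfl | rfl | rfl | rfl | rfl
  · simp
  · have := hmin [] (true :: X) (by simp); simp at this
  · have := hmin [] (true :: true :: X) (by simp); simp at this
  · simp
  · have := hmin [true, false] (true :: X) (by simp); simp at this
  · have := hmin [true, false] (true :: true :: X) (by simp); simp at this

lemma pos_d2 {v : List Bool} (h : v <:+: dd (e 2)) : LD v := ⟨2, h⟩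

lemma WkD_iff (v : List Bool) : Wk (FD v) ↔
    v = [true, false, true, true, true, true, false, true] ∨ ∃ n, v = dd (g n) := by
  constructor
  · intro h
    have hr := Wk.drev h
    by_cases hm : tt <:+: v
    · have hm' : tt <:+: v.reverse := by
        have := List.reverse_infix.2 hm
        simpa using this
      obtain ⟨l, X, h1, hmin, hl⟩ := LSD_occ h.lsd hm
      obtain ⟨r, X', h2, -, hr'⟩ := LSD_occ hr.lsd hm'
      obtain ⟨Y, hY, hY'⟩ := occ_both (by simp) h1 hmin h2
      obtain ⟨j, h5⟩ := h.left true
      have h6 : LD ((true :: l) ++ Y ++ tt ++ (r.reverse ++ [j])) := by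
        rw [hY] at h5; simpa [FD] using h5
      obtain ⟨_, _, w', _, rfl, -⟩ := dext h6 hY'
      subst hY
      rcases hl with rfl | rfl <;> rcases hr' with rfl | rfl
      · have h7 := (Wk.congr (FD_desub (w := w') dl0 dr0)).1 h
        obtain ⟨n, rfl⟩ := Wk_class _ w' le_rfl h7
        exact Or.inr ⟨n, by simp [dd]⟩
      · exact (Wk_PQ ((Wk.congr (FD_desub (w := w') dl0 dr1)).1 h)).elim
      · exact (Wk_QP ((Wk.congr (FD_desub (w := w') dl1 dr0)).1 h)).elim
      · have := Wk_QQ ((Wk.congr (FD_desub (w := w') dl1 dr1)).1 h)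
        subst this
        exact Or.inl rfl
    · have hm' : ¬ tt <:+: v.reverse := by
        intro h'
        exact hm (by have := List.reverse_infix.2 h'; simpa using this)
      exfalso
      have h8 := LSD_cases hr.lsd hm'
      rcases LSD_cases h.lsd hm with rfl | rfl | rfl | rfl | rfl | rfl
      · exact not_wk_t true (pos_d2 (by decide)) (pos_d2 (by decide)) h
      · exact not_wk_t true (pos_d2 (by decide)) (pos_d2 (by decide)) h
      · exact not_wk_t true (pos_d2 (by decide)) (pos_d2 (by decide)) h
      · simp at h8
      · exact not_wk_t true (pos_d2 (by decide)) (pos_d2 (by decide)) h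
      · simp at h8
  · rintro (rfl | ⟨n, rfl⟩)
    · exact (Wk.congr (FD_desub (w := [a]) dl1 dr1)).2 Wk_QQ_a
    · have := (Wk.congr (FD_desub (w := g n) dl0 dr0)).2 (Wk_g n)
      simpa [dd] using this

/-! ### Palindromic prefixes -/

lemma pal_prefix_t (N : ℕ) : ∀ q, q.reverse = q → q <+: e N → ∃ j, q = e j ∨ q = f j := by
  induction N with
  | zero =>
    intro q _ h
    exact ⟨0, Or.inl (List.prefix_nil.1 h)⟩
  | succ N ih =>
    intro q hq h
    obtain ⟨r, hr⟩ := pp_start (e N)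
    obtain ⟨β, hβ⟩ := h
    have hβ' : q ++ β = pp (e N) := hβ
    rcases q with _ | ⟨x, _ | ⟨y, _ | ⟨z, q⟩⟩⟩
    · exact ⟨0, Or.inl rfl⟩
    · rw [hr] at hβ'
      simp at hβ'
      exact ⟨0, Or.inr (by simp [f, hβ'.1])⟩
    · rw [hr] at hβ'
      simp at hβ' hq
      obtain ⟨rfl, rfl, -⟩ := hβ'
      simp at hq
    · have h0 : x :: y :: z :: q = mk ++ q := by
        rw [hr] at hβ'
        simp at hβ'
        simp [hβ'.1, hβ'.2.1, hβ'.2.2.1]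
      rw [h0] at hq hβ' ⊢
      have h1 : mk ++ q = q.reverse ++ mk := by rw [← hq]; simp
      have h2 : q.reverse ++ mk ++ β = pp (e N) := by rw [← hβ', h1]
      obtain ⟨w1, w2, hw, h3, h4⟩ := sync _ _ _ h2
      have h5 : mk ++ q = pp w1 := by rw [h1, h3]; rfl
      have h6 : w1.reverse = w1 := pp_inj _ _ (by rw [← pp_reverse, ← h5, hq])
      obtain ⟨j, hj⟩ := ih w1 h6 ⟨w2, hw.symm⟩
      refine ⟨j+1, hj.imp ?_ ?_⟩ <;>
      · rintro rfl; exact h5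

lemma pal_prefix_d (N : ℕ) (q : List Bool) (hq : q.reverse = q) (h : q <+: dd (e N)) :
    q = [] ∨ q = [true] ∨ q = [true, true] ∨ ∃ j, q = dd (e j) ∨ q = dd (f j) := by
  obtain ⟨r, hr⟩ := dd_start (e N)
  obtain ⟨β, hβ⟩ := h
  rcases q with _ | ⟨x, _ | ⟨y, _ | ⟨z, q⟩⟩⟩
  · simp
  · rw [hr] at hβ; simp at hβ; simp [hβ.1]
  · rw [hr] at hβ; simp at hβ; simp [hβ.1, hβ.2.1]
  · right; right; right
    have h0 : x :: y :: z :: q = tt ++ q := by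
      rw [hr] at hβ
      simp at hβ
      simp [hβ.1, hβ.2.1, hβ.2.2.1]
    rw [h0] at hq hβ ⊢
    have h1 : tt ++ q = q.reverse ++ tt := by rw [← hq]; simp
    have h2 : q.reverse ++ tt ++ β = dd (e N) := by rw [← hβ, h1]
    obtain ⟨w1, w2, hw, h3, h4⟩ := dsync _ _ _ h2
    have h5 : tt ++ q = dd w1 := by rw [h1, h3]; rfl
    have h6 : w1.reverse = w1 := dd_inj _ _ (by rw [← dd_reverse, ← h5, hq])
    obtain ⟨j, hj⟩ := pal_prefix_t N w1 h6 ⟨w2, hw.symm⟩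
    refine ⟨j, hj.imp ?_ ?_⟩ <;>
    · rintro rfl; exact h5

/-! ### Differences and integrals -/

def diff : List Bool → List Bool
  | x :: y :: l => xor x y :: diff (y :: l)
  | _ => []

def integ : Bool → List Bool → List Bool
  | x, [] => [x]
  | x, d :: ds => x :: integ (xor x d) ds

def ipar : List Bool → Bool
  | [] => false
  | d :: ds => xor d (ipar ds)

lemma ipar_append (p q : List Bool) : ipar (p ++ q) = xor (ipar p) (ipar q) := by
  induction p with
  | nil => simp [ipar]
  | cons x p ih => simp [ipar, ih]

lemma integ_ne (x : Bool) (d : List Bool) : integ x d ≠ [] := by cases d <;> simp [integ]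

lemma integ_head (x : Bool) (d : List Bool) : ∃ l, integ x d = x :: l := by
  cases d <;> simp [integ]

lemma diff_integ (x : Bool) (d : List Bool) : diff (integ x d) = d := by
  induction d generalizing x with
  | nil => rfl
  | cons y d ih =>
    have := ih (xor x y)
    obtain ⟨l, hl⟩ := integ_head (xor x y) d
    rw [hl] at this
    simp [integ, hl, diff, this]

lemma integ_diff (x : Bool) (l : List Bool) : integ x (diff (x :: l)) = x :: l := by
  induction l generalizing x with
  | nil => rfl
  | cons y l ih => simp [diff, integ, ih]

lemma length_integ (x : Bool) (d : List Bool) : (integ x d).length = d.length + 1 := by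
  induction d generalizing x with
  | nil => rfl
  | cons y d ih => simp [integ, ih]

lemma length_diff (x : Bool) (l : List Bool) : (diff (x :: l)).length = l.length := by
  have := length_integ x (diff (x :: l))
  rw [integ_diff] at this; simp at this; omega

lemma integ_append (x : Bool) (p : List Bool) (z : Bool) :
    integ x (p ++ [z]) = integ x p ++ [xor x (xor (ipar p) z)] := by
  induction p generalizing x with
  | nil => simp [integ, ipar]
  | cons y p ih => simp [integ, ipar, ih]

lemma integ_prefix (x : Bool) {p q : List Bool} (h : p <+: q) : integ x p <+: integ x q := by
  obtain ⟨s, rfl⟩ := h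
  induction s using List.reverseRecOn with
  | nil => simp
  | append_singleton s z ih =>
    rw [← List.append_assoc, integ_append]
    exact ih.trans (List.prefix_append _ _)

lemma integ_last (x : Bool) (p : List Bool) : ∃ l, integ x p = l ++ [xor x (ipar p)] := by
  induction p using List.reverseRecOn with
  | nil => exact ⟨[], by simp [integ, ipar]⟩
  | append_singleton s z ih => exact ⟨integ x s, by rw [integ_append, ipar_append]; simp [ipar]⟩

lemma diff_append (l : List Bool) (x : Bool) (r : List Bool) :
    diff (l ++ x :: r) = diff (l ++ [x]) ++ diff (x :: r) := by
  induction l with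
  | nil => simp [diff]
  | cons y l ih =>
    cases l with
    | nil => simp [diff]
    | cons z l => simpa [diff] using ih

lemma diff_reverse (l : List Bool) : diff l.reverse = (diff l).reverse := by
  induction l with
  | nil => rfl
  | cons x l ih =>
    cases l with
    | nil => rfl
    | cons y l =>
      have := diff_append l.reverse y [x]
      simp only [List.reverse_cons, List.append_assoc, List.cons_append, List.nil_append] at ih ⊢
      rw [this, ih]
      simp [diff, Bool.xor_comm]

lemma diff_not (l : List Bool) : diff (l.map Bool.not) = diff l := by
  induction l with
  | nil => rfl
  | cons x l ih =>
    cases l with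
    | nil => rfl
    | cons y l => simpa [diff] using ih

lemma integ_not (x : Bool) (d : List Bool) : integ (!x) d = (integ x d).map Bool.not := by
  induction d generalizing x with
  | nil => rfl
  | cons y d ih =>
    have := ih (xor x y)
    simp only [integ, List.map_cons]
    rw [← this]; simp

lemma diff_eq {v w : List Bool} (hv : v ≠ []) (hw : w ≠ []) (h : diff v = diff w) :
    v = w ∨ v = w.map Bool.not := by
  rcases v with _ | ⟨x, v⟩
  · simp at hv
  rcases w with _ | ⟨y, w⟩
  · simp at hw
  rw [← integ_diff x v, ← integ_diff y w, h, ← integ_not]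
  cases x <;> cases y <;> simp

lemma diff_prefix {v w : List Bool} (h : v <+: w) : diff v <+: diff w := by
  obtain ⟨s, rfl⟩ := h
  rcases List.eq_nil_or_concat v with rfl | ⟨v, x, rfl⟩
  · simp [diff]
  · rw [List.concat_eq_append, List.append_assoc, List.singleton_append, diff_append v x s]
    exact List.prefix_append _ _

lemma diff_infix {v w : List Bool} (h : v <:+: w) : diff v <:+: diff w := by
  obtain ⟨s, t, rfl⟩ := h
  have h1 : diff (s ++ v) <+: diff (s ++ v ++ t) := diff_prefix (List.prefix_append _ _)
  refine List.IsInfix.trans ?_ h1.isInfix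
  rcases v with _ | ⟨x, v⟩
  · simp [diff]
  · rw [diff_append]; exact (List.suffix_append _ _).isInfix

lemma infix_diff {d w : List Bool} (hw : w ≠ []) (h : d <:+: diff w) :
    ∃ v, v ≠ [] ∧ v <:+: w ∧ diff v = d := by
  rcases w with _ | ⟨x, w⟩
  · simp at hw
  obtain ⟨s, t, h⟩ := h
  obtain ⟨l, hl⟩ := integ_last x s
  have h1 : integ x (s ++ d) <+: x :: w := by
    rw [← integ_diff x w, ← h]; exact integ_prefix x (List.prefix_append _ _)
  have h2 : ∀ (x : Bool) (s d : List Bool), ∃ y, integ y d <:+ integ x (s ++ d) := by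
    intro x s
    induction s generalizing x with
    | nil => intro d; exact ⟨x, by simp⟩
    | cons z s ih =>
      intro d
      obtain ⟨y, hy⟩ := ih (xor x z) d
      exact ⟨y, hy.trans (by simp only [List.cons_append, integ]; exact List.suffix_cons _ _)⟩
  obtain ⟨y, hy⟩ := h2 x s d
  exact ⟨_, integ_ne _ _, hy.isInfix.trans h1.isInfix, diff_integ _ _⟩

lemma Ebar_eq (w : Word) : Ebar w = w.reverse.map Bool.not := by simp [Ebar]

lemma diff_Ebar (w : Word) : diff (Ebar w) = (diff w).reverse := by
  rw [Ebar_eq, diff_not, diff_reverse]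

lemma rev_integ (x : Bool) (d : List Bool) :
    (integ x d).reverse = integ (xor x (ipar d)) d.reverse := by
  obtain ⟨l, hl⟩ := integ_last x d
  have h : diff ((xor x (ipar d)) :: l.reverse) = d.reverse := by
    have := diff_reverse (integ x d)
    rw [diff_integ, hl] at this
    simpa using this
  rw [← h, integ_diff, hl]; simp

lemma integ_pal {x : Bool} {d : List Bool} (hd : d.reverse = d) (hp : ipar d = false) :
    IsPal (integ x d) := by
  rw [IsPal, rev_integ, hd, hp]; simp

lemma integ_epal {x : Bool} {d : List Bool} (hd : d.reverse = d) (hp : ipar d = true) :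
    IsEPal (integ x d) := by
  rw [IsEPal, Ebar_eq, rev_integ, hd, hp, ← integ_not]; simp

/-! ### closures -/

structure Anti (θ : Word → Word) : Prop where
  app : ∀ u v, θ (u ++ v) = θ v ++ θ u
  inv : ∀ u, θ (θ u) = u
  len : ∀ u, (θ u).length = u.length

lemma anti_rev : Anti List.reverse := ⟨by simp, by simp, by simp⟩
lemma anti_E : Anti Ebar := ⟨by simp [Ebar], by intro u; simp [Ebar, Function.comp_def], by simp [Ebar]⟩

lemma closure_shape {θ : Word → Word} (hθ : Anti θ) {w U : Word} (hU : θ U = U) (hp : w <+: U)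
    (hl : U.length ≤ 2 * w.length) : ∃ z t, U = w ++ t ∧ w = θ t ++ z ∧ θ z = z := by
  obtain ⟨t, rfl⟩ := hp
  have h1 : θ t ++ θ w = w ++ t := by rw [← hθ.app, hU]
  have h2 : θ t <+: w := by
    refine List.prefix_of_prefix_length_le (l₃ := w ++ t) ⟨θ w, h1⟩ ⟨t, rfl⟩ ?_
    rw [hθ.len]; simp at hl; omega
  obtain ⟨z, hz⟩ := h2
  refine ⟨z, t, rfl, hz.symm, ?_⟩
  rw [← hz, hθ.app, hθ.inv] at h1
  have h3 : θ z ++ t = z ++ t := by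
    apply List.append_cancel_left (as := θ t)
    simpa using h1
  exact List.append_cancel_right h3

lemma closure_eq {θ : Word → Word} (hθ : Anti θ) {w U V : Word} (hU : θ U = U) (hpU : w <+: U)
    (hV : θ V = V) (hpV : w <+: V) (hUV : U.length ≤ V.length) (m : ℕ)
    (hlen : V.length + m = 2 * w.length)
    (hmax : ∀ z, z <:+ w → θ z = z → z.length ≤ m) : U = V := by
  obtain ⟨z, t, h1, h2, h3⟩ := closure_shape hθ hU hpU (by omega)
  obtain ⟨z', t', h1', h2', h3'⟩ := closure_shape hθ hV hpV (by omega)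
  have h4 := hmax z ⟨_, h2.symm⟩ h3
  have h5 := congrArg List.length h1
  have h6 := congrArg List.length h2
  have h5' := congrArg List.length h1'
  have h6' := congrArg List.length h2'
  simp only [List.length_append, hθ.len] at h5 h6 h5' h6'
  have h7 : θ t = θ t' := by
    refine (List.append_inj (h2.symm.trans h2') ?_).1
    rw [hθ.len, hθ.len]; omega
  have h8 : t = t' := by rw [← hθ.inv t, h7, hθ.inv]
  rw [h1, h1', h8]

lemma palCl_spec (w : Word) : (w <+: palCl w ∧ IsPal (palCl w)) ∧
    ∀ v', w <+: v' ∧ IsPal v' → (palCl w).length ≤ v'.length :=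
  (exists_minLength (pal_ext w)).choose_spec

lemma epalCl_spec (w : Word) : (w <+: epalCl w ∧ IsEPal (epalCl w)) ∧
    ∀ v', w <+: v' ∧ IsEPal v' → (epalCl w).length ≤ v'.length :=
  (exists_minLength (epal_ext w)).choose_spec

/-! ### explicit prefixes -/

def V : ℕ → Word
  | 0 => []
  | 1 => [true, false]
  | m+2 => integ true (dd (if m % 2 = 0 then e (m/2) else f (m/2)))

lemma V_e (j : ℕ) : V (2*j+2) = integ true (dd (e j)) := by
  simp [V]
lemma V_f (j : ℕ) : V (2*j+3) = integ true (dd (f j)) := by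
  have : (2*j+1) / 2 = j := by omega
  simp [V, this]

lemma ipar_psi_tau (w : List T3) : ipar (psi (tau w)) = ipar (psi w) := by
  induction w with
  | nil => rfl
  | cons x w ih => cases x <;> simp [tau, t1, psi, s1', ipar, ih]

lemma ipar_pp (w : List T3) : ipar (dd (pp w)) = !ipar (dd w) := by
  simp [dd, pp, psi_append, ipar_append, ipar_psi_tau, psi, s1', ipar]

lemma ipar_e (n : ℕ) : ipar (dd (e n)) = decide (n % 2 = 0) := by
  induction n with
  | zero => rfl
  | succ n ih =>
    simp only [e, ipar_pp, ih]
    rcases Nat.mod_two_eq_zero_or_one n with h | h <;> simp [h, Nat.add_mod]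

lemma ipar_f (n : ℕ) : ipar (dd (f n)) = decide (n % 2 = 1) := by
  induction n with
  | zero => rfl
  | succ n ih =>
    simp only [f, ipar_pp, ih]
    rcases Nat.mod_two_eq_zero_or_one n with h | h <;> simp [h, Nat.add_mod]

lemma dd_e_pal (n : ℕ) : (dd (e n)).reverse = dd (e n) := by rw [dd_reverse, e_pal]
lemma dd_f_pal (n : ℕ) : (dd (f n)).reverse = dd (f n) := by rw [dd_reverse, f_pal]

lemma V_cases (n : ℕ) : n = 0 ∨ n = 1 ∨ (∃ j, n = 2*j+2) ∨ ∃ j, n = 2*j+3 := by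
  rcases n with _ | _ | n
  · simp
  · simp
  · right; right
    rcases Nat.even_or_odd' n with ⟨j, rfl | rfl⟩
    · exact Or.inl ⟨j, rfl⟩
    · exact Or.inr ⟨j, rfl⟩

lemma V_epal {n : ℕ} (h : n % 4 = 1 ∨ n % 4 = 2) : IsEPal (V n) := by
  rcases V_cases n with rfl | rfl | ⟨j, rfl⟩ | ⟨j, rfl⟩
  · simp at h
  · rfl
  · rw [V_e]; exact integ_epal (dd_e_pal j) (by rw [ipar_e]; simp; omega)
  · rw [V_f]; exact integ_epal (dd_f_pal j) (by rw [ipar_f]; simp; omega)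

lemma V_pal {n : ℕ} (h : n % 4 = 3 ∨ n % 4 = 0) : IsPal (V n) := by
  rcases V_cases n with rfl | rfl | ⟨j, rfl⟩ | ⟨j, rfl⟩
  · rfl
  · simp at h
  · rw [V_e]; exact integ_pal (dd_e_pal j) (by rw [ipar_e]; simp; omega)
  · rw [V_f]; exact integ_pal (dd_f_pal j) (by rw [ipar_f]; simp; omega)

lemma not_both {x : Bool} {l : Word} (h1 : IsPal (x :: l)) (h2 : IsEPal (x :: l)) : False := by
  rw [IsPal] at h1
  rw [IsEPal, Ebar_eq, h1] at h2
  simp at h2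

lemma pp_next {u v : List T3} {y : T3} {i : Bool} (h : u ++ [y] <+: v) (hy : P y = some i) :
    ∃ y', pp u ++ [y'] <+: pp v ∧ P y' = some (!i) := by
  obtain ⟨s, rfl⟩ := h
  obtain ⟨r, hr⟩ := pp_start s
  have h1 : pp (u ++ [y] ++ s) = tau u ++ (t1 y ++ pp s) := by simp [pp, tau, tau_append]
  rw [h1, hr]
  cases y
  · exact ⟨c, ⟨a :: b :: a :: r, by simp [pp, t1]⟩, by simp [P] at hy ⊢; exact hy⟩
  · exact ⟨a, ⟨b :: a :: r, by simp [pp, t1]⟩, by simp [P] at hy ⊢; exact hy⟩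
  · exact ⟨a, ⟨a :: b :: a :: r, by simp [pp, t1]⟩, by simp [P] at hy ⊢; exact hy⟩

lemma dd_next {u v : List T3} {y : T3} {i : Bool} (h : u ++ [y] <+: v) (hy : P y = some i) :
    dd u ++ [i] <+: dd v := by
  obtain ⟨s, rfl⟩ := h
  obtain ⟨r, hr⟩ := dd_start s
  have h1 : dd (u ++ [y] ++ s) = psi u ++ (s1' y ++ dd s) := by simp [dd, psi, psi_append]
  rw [h1, hr]
  cases y <;> simp [P] at hy <;> subst hy <;> simp [dd, s1']

lemma e_next (j : ℕ) : ∃ y, e j ++ [y] <+: f j ∧ P y = some (ipar (dd (e j))) := by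
  induction j with
  | zero => exact ⟨a, by decide, rfl⟩
  | succ j ih =>
    obtain ⟨y, h1, h2⟩ := ih
    obtain ⟨y', h3, h4⟩ := pp_next h1 h2
    exact ⟨y', h3, by rw [h4, e, ipar_pp]⟩

lemma f_next (j : ℕ) : ∃ y, f j ++ [y] <+: e (j+1) ∧ P y = some (ipar (dd (f j))) := by
  induction j with
  | zero => exact ⟨b, by decide, rfl⟩
  | succ j ih =>
    obtain ⟨y, h1, h2⟩ := ih
    obtain ⟨y', h3, h4⟩ := pp_next h1 h2
    exact ⟨y', h3, by rw [h4, f, ipar_pp]⟩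

lemma integ_next {d d' : List Bool} (h : d ++ [ipar d] <+: d') :
    integ true d ++ [true] <+: integ true d' := by
  have := integ_prefix true h
  rw [integ_append] at this
  simpa using this

lemma V_step (n : ℕ) : V n ++ [true] <+: V (n+1) := by
  rcases V_cases n with rfl | rfl | ⟨j, rfl⟩ | ⟨j, rfl⟩
  · decide
  · decide
  · rw [V_e, show 2*j+2+1 = 2*j+3 from rfl, V_f]
    obtain ⟨y, h1, h2⟩ := e_next j
    exact integ_next (dd_next h1 h2)
  · rw [V_f, show 2*j+3+1 = 2*(j+1)+2 by ring, V_e]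
    obtain ⟨y, h1, h2⟩ := f_next j
    exact integ_next (dd_next h1 h2)

lemma V_mono {m n : ℕ} (h : m ≤ n) : V m <+: V n := by
  induction h with
  | refl => exact List.prefix_rfl
  | step _ ih => exact ih.trans ((List.prefix_append _ _).trans (V_step _))

lemma V_lt {m n : ℕ} (h : m < n) : V m ++ [true] <+: V n := (V_step m).trans (V_mono h)

lemma count_pp (w : List T3) :
    (pp w).count a = 2 * w.count a + 2 * w.count b + 3 * w.count c + 2 ∧
    (pp w).count b = w.count a + w.count b + w.count c + 1 ∧
    (pp w).count c = w.count a := by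
  induction w with
  | nil => decide
  | cons x w ih =>
    have : pp (x :: w) = t1 x ++ pp w := by simp [pp, tau]
    rw [this]
    cases x <;> simp [t1, List.count_append, List.count_cons, ih] <;> omega

lemma length_dd (w : List T3) :
    (dd w).length = w.count a + 4 * w.count b + 6 * w.count c + 3 := by
  induction w with
  | nil => rfl
  | cons x w ih =>
    rw [dd_cons]
    cases x <;> simp [s1', ih, List.count_cons] <;> omega

lemma count_ef (n : ℕ) :
    (f n).count b = 2 * (e n).count b ∧
    (n % 2 = 0 → (f n).count a = 2 * (e n).count a + 1 ∧ (f n).count c = 2 * (e n).count c) ∧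
    (n % 2 = 1 → (f n).count a = 2 * (e n).count a ∧ (f n).count c = 2 * (e n).count c + 1) := by
  induction n with
  | zero => decide
  | succ n ih =>
    obtain ⟨h1, h2, h3⟩ := count_pp (e n)
    obtain ⟨h4, h5, h6⟩ := count_pp (f n)
    simp only [e, f]
    omega

lemma count_eef (n : ℕ) :
    (e (n+2)).count a + (e n).count a = 2 * (f (n+1)).count a ∧
    (e (n+2)).count b + (e n).count b = 2 * (f (n+1)).count b ∧
    (e (n+2)).count c + (e n).count c = 2 * (f (n+1)).count c := by
  induction n with
  | zero => decide
  | succ n ih =>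
    obtain ⟨h1, h2, h3⟩ := count_pp (e (n+2))
    obtain ⟨h4, h5, h6⟩ := count_pp (f (n+1))
    obtain ⟨h7, h8, h9⟩ := count_pp (e n)
    rw [show e (n+1+2) = pp (e (n+2)) from rfl, show f (n+1+1) = pp (f (n+1)) from rfl,
      show e (n+1) = pp (e n) from rfl]
    omega

lemma len_RE (k : ℕ) : (V (4*k+1)).length = 2 * ((V (4*k)).length + 1) := by
  rcases k with _ | k
  · rfl
  · rw [show 4*(k+1)+1 = 2*(2*k+1)+3 by ring, show 4*(k+1) = 2*(2*k+1)+2 by ring, V_e, V_f,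
      length_integ, length_integ, length_dd, length_dd]
    have := count_ef (2*k+1)
    omega

lemma len_ER (k : ℕ) : (V (4*k+3)).length + 5 = 2 * ((V (4*k+2)).length + 1) := by
  rw [show 4*k+3 = 2*(2*k)+3 by ring, show 4*k+2 = 2*(2*k)+2 by ring, V_e, V_f,
      length_integ, length_integ, length_dd, length_dd]
  have := count_ef (2*k)
  omega

lemma len_odd (n : ℕ) (hn : n % 2 = 1) :
    (V (n+1)).length + ((V (n-3)).length + 2) = 2 * ((V n).length + 1) := by
  rcases V_cases n with rfl | rfl | ⟨j, rfl⟩ | ⟨j, rfl⟩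
  · simp at hn
  · rfl
  · omega
  · rcases j with _ | j
    · rfl
    · rw [show 2*(j+1)+3+1 = 2*(j+2)+2 by ring, show 2*(j+1)+3-3 = 2*j+2 by omega, V_e, V_f, V_e,
        length_integ, length_integ, length_integ, length_dd, length_dd, length_dd]
      have := count_eef j
      omega

lemma V_class {n : ℕ} {q : Word} (hq : q <+: V n) (hp : IsPal q ∨ IsEPal q) :
    q = [true] ∨ q = [true, false, true] ∨ ∃ m, q = V m := by
  rcases q with _ | ⟨x, l⟩
  · exact Or.inr (Or.inr ⟨0, rfl⟩)
  have h1 : x :: l <+: V (2*n+2) := hq.trans (V_mono (by omega))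
  rw [V_e] at h1
  have hx : x = true := by
    obtain ⟨l', hl'⟩ := integ_head true (dd (e n))
    rw [hl'] at h1
    exact (List.cons_prefix_cons.1 h1).1
  subst hx
  have h2 : diff (true :: l) <+: dd (e n) := by
    have := diff_prefix h1
    rwa [diff_integ] at this
  have h3 : (diff (true :: l)).reverse = diff (true :: l) := by
    rcases hp with hp | hp
    · rw [← diff_reverse, hp]
    · rw [← diff_Ebar, hp]
  rw [← integ_diff true l]
  rcases pal_prefix_d n _ h3 h2 with h | h | h | ⟨j, h | h⟩ <;> rw [h]
  · left; rfl
  · right; right; exact ⟨1, rfl⟩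
  · right; left; rfl
  · right; right; exact ⟨_, (V_e j).symm⟩
  · right; right; exact ⟨_, (V_f j).symm⟩

lemma V_next {m n : ℕ} {y : Bool} (h : V m ++ [y] <+: V n) : m < n ∧ y = true := by
  have hmn : m < n := by
    by_contra hc
    have h1 := (V_mono (Nat.le_of_not_lt hc)).length_le
    have h2 := h.length_le
    simp at h2; omega
  refine ⟨hmn, ?_⟩
  have h1 := V_lt hmn
  have h2 : V m ++ [y] = V m ++ [true] :=
    (List.prefix_of_prefix_length_le h h1 (by simp)).eq_of_length (by simp)
  simpa using h2

lemma V_type {m : ℕ} (hm : m ≠ 0) (h : IsEPal (V m)) : m % 4 = 1 ∨ m % 4 = 2 := by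
  by_contra hc
  have h1 := V_pal (n := m) (by omega)
  have h2 : V 1 <+: V m := V_mono (by omega)
  obtain ⟨s, hs⟩ := h2
  rw [← hs] at h h1
  exact not_both h1 h

lemma V_type' {m : ℕ} (hm : m ≠ 0) (h : IsPal (V m)) : m % 4 = 3 ∨ m % 4 = 0 := by
  by_contra hc
  have h1 := V_epal (n := m) (by omega)
  have h2 : V 1 <+: V m := V_mono (by omega)
  obtain ⟨s, hs⟩ := h2
  rw [← hs] at h h1
  exact not_both h h1

lemma pal_split {z w : Word} (hz : z <:+ w ++ [true]) (hp : IsPal z) :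
    z.length ≤ 1 ∨ ∃ q, IsPal q ∧ true :: q <:+ w ∧ z.length = q.length + 2 := by
  rcases z with _ | ⟨x, z⟩
  · simp
  rcases List.eq_nil_or_concat z with rfl | ⟨q, y, rfl⟩
  · simp
  right
  rw [List.concat_eq_append] at *
  obtain ⟨s, hs⟩ := hz
  have h1 : s ++ x :: q ++ [y] = w ++ [true] := by simpa using hs
  obtain ⟨h2, h3⟩ := List.append_inj' h1 rfl
  simp [IsPal] at hp h3
  subst h3
  obtain ⟨rfl, hp⟩ := hp
  exact ⟨q, by simpa [IsPal] using hp, ⟨s, h2⟩, by simp⟩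

lemma epal_split {z w : Word} (hz : z <:+ w ++ [true]) (hp : IsEPal z) :
    z.length = 0 ∨ ∃ q, IsEPal q ∧ false :: q <:+ w ∧ z.length = q.length + 2 := by
  rcases z with _ | ⟨x, z⟩
  · simp
  rcases List.eq_nil_or_concat z with rfl | ⟨q, y, rfl⟩
  · simp [IsEPal, Ebar] at hp
  right
  rw [List.concat_eq_append] at *
  obtain ⟨s, hs⟩ := hz
  have h1 : s ++ x :: q ++ [y] = w ++ [true] := by simpa using hs
  obtain ⟨h2, h3⟩ := List.append_inj' h1 rfl
  simp [IsEPal, Ebar] at hp h3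
  subst h3
  simp at hp
  obtain ⟨rfl, hp⟩ := hp
  exact ⟨q, by simpa [IsEPal, Ebar] using hp, ⟨s, h2⟩, by simp⟩

lemma pal_suf {y : Bool} {q w : Word} (hw : IsPal w) (h : y :: q <:+ w) :
    q.reverse ++ [y] <+: w := by
  have := List.reverse_prefix.2 h
  rw [hw] at this
  simpa using this

lemma epal_suf {y : Bool} {q w : Word} (hw : IsEPal w) (h : y :: q <:+ w) :
    Ebar q ++ [!y] <+: w := by
  have := List.reverse_prefix.2 (h.map Bool.not)
  have hw' : (List.map Bool.not w).reverse = w := hw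
  rw [hw'] at this
  simpa [Ebar] using this

lemma IsPal.ebar {q : Word} (h : IsPal q) : IsPal (Ebar q) := by
  have h' : q.reverse = q := h
  rw [IsPal, Ebar_eq, h', ← List.map_reverse, h']
lemma IsEPal.rev {q : Word} (h : IsEPal q) : IsEPal q.reverse := by
  have h' : (q.map Bool.not).reverse = q := h
  rw [IsEPal, Ebar, List.map_reverse, h']

lemma wp_eq (n : ℕ) : wp n = V n := by
  induction n with
  | zero => rfl
  | succ n ih =>
    have hst := V_step n
    rw [wp, ih]
    split_ifs with h
    · have hs := epalCl_spec (V n ++ [true])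
      have hVE := V_epal h
      have hle := hs.2 _ ⟨hst, hVE⟩
      rcases (show n % 4 = 0 ∨ n % 4 = 1 by omega) with h4 | h4
      · obtain ⟨k, rfl⟩ : ∃ k, n = 4*k := ⟨n/4, by omega⟩
        refine closure_eq anti_E hs.1.2 hs.1.1 hVE hst hle 0 (by simp [len_RE]) ?_
        intro z hz hzp
        rcases epal_split hz hzp with h0 | ⟨q, hq, hq2, hq3⟩
        · omega
        · exfalso
          have h5 := pal_suf (V_pal (by omega)) hq2
          have h6 := IsEPal.rev hq
          rcases V_class ((List.prefix_append _ _).trans h5) (Or.inr h6) with h7 | h7 | ⟨m, h7⟩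
          · rw [h7] at h6; simp [IsEPal, Ebar] at h6
          · rw [h7] at h6; simp [IsEPal, Ebar] at h6
          · rw [h7] at h5
            exact absurd (V_next h5).2 (by simp)
      · refine closure_eq anti_E hs.1.2 hs.1.1 hVE hst hle _
          ((len_odd n (by omega)).trans (by simp)) ?_
        intro z hz hzp
        rcases epal_split hz hzp with h0 | ⟨q, hq, hq2, hq3⟩
        · omega
        · have h5 := epal_suf (V_epal (Or.inl h4)) hq2
          have hqE : Ebar q = q := hq
          rw [hqE] at h5
          rcases V_class ((List.prefix_append _ _).trans h5) (Or.inr hq) with h7 | h7 | ⟨m, h7⟩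
          · rw [h7] at hq; simp [IsEPal, Ebar] at hq
          · rw [h7] at hq; simp [IsEPal, Ebar] at hq
          · rw [h7] at h5 hq
            have h8 := (V_next h5).1
            have h9 : m ≤ n - 3 := by
              by_cases hm : m = 0
              · omega
              · have := V_type hm hq
                omega
            have := (V_mono h9).length_le
            rw [hq3, h7]; omega
    · have hs := palCl_spec (V n ++ [true])
      have hVE := V_pal (n := n+1) (by omega)
      have hle := hs.2 _ ⟨hst, hVE⟩
      rcases (show n % 4 = 2 ∨ n % 4 = 3 by omega) with h4 | h4
      · obtain ⟨k, rfl⟩ : ∃ k, n = 4*k+2 := ⟨n/4, by omega⟩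
        refine closure_eq anti_rev hs.1.2 hs.1.1 hVE hst hle 5 (by simp [len_ER]) ?_
        intro z hz hzp
        rcases pal_split hz hzp with h0 | ⟨q, hq, hq2, hq3⟩
        · omega
        · have h5 := epal_suf (V_epal (by omega)) hq2
          have h6 := IsPal.ebar hq
          have hql : (Ebar q).length = q.length := anti_E.len q
          rcases V_class ((List.prefix_append _ _).trans h5) (Or.inl h6) with h7 | h7 | ⟨m, h7⟩
          · rw [h7] at hql; simp at hql; omega
          · rw [h7] at hql; simp at hql; omega
          · rw [h7] at h5
            exact absurd (V_next h5).2 (by simp)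
      · refine closure_eq anti_rev hs.1.2 hs.1.1 hVE hst hle _
          ((len_odd n (by omega)).trans (by simp)) ?_
        intro z hz hzp
        rcases pal_split hz hzp with h0 | ⟨q, hq, hq2, hq3⟩
        · omega
        · have h5 := pal_suf (V_pal (Or.inl h4)) hq2
          have hqE : q.reverse = q := hq
          rw [hqE] at h5
          have h3 : V 3 <+: V n := V_mono (by omega)
          rcases V_class ((List.prefix_append _ _).trans h5) (Or.inl hq) with h7 | h7 | ⟨m, h7⟩
          · rw [h7] at h5
            have := List.prefix_of_prefix_length_le h5 h3 (by decide)
            exact absurd this (by decide)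
          · rw [h7] at h5
            have := List.prefix_of_prefix_length_le h5 h3 (by decide)
            exact absurd this (by decide)
          · rw [h7] at h5 hq
            have h8 := (V_next h5).1
            have h9 : m ≤ n - 3 := by
              by_cases hm : m = 0
              · omega
              · have := V_type' hm hq
                omega
            have := (V_mono h9).length_le
            rw [hq3, h7]; omega

/-! ### factors -/

lemma factor_iff (v : Word) : FactorUp v ↔ ∃ n, v <:+: V n := by
  simp only [FactorUp, wp_eq]

lemma fac_mono {u v : Word} (h : FactorUp v) (h' : u <:+: v) : FactorUp u := by
  obtain ⟨n, hn⟩ := h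
  exact ⟨n, h'.trans hn⟩

lemma fac_rev {v : Word} (h : FactorUp v) : FactorUp v.reverse := by
  rw [factor_iff] at h ⊢
  obtain ⟨n, hn⟩ := h
  have h1 := hn.trans (V_mono (show n ≤ 4*n by omega)).isInfix
  have h2 := List.reverse_infix.2 h1
  have h3 : (V (4*n)).reverse = V (4*n) := V_pal (by omega)
  rw [h3] at h2
  exact ⟨_, h2⟩

lemma fac_ebar {v : Word} (h : FactorUp v) : FactorUp (Ebar v) := by
  rw [factor_iff] at h ⊢
  obtain ⟨n, hn⟩ := h
  have h1 := hn.trans (V_mono (show n ≤ 4*n+2 by omega)).isInfix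
  have h2 := List.reverse_infix.2 (h1.map Bool.not)
  have h3 : ((V (4*n+2)).map Bool.not).reverse = V (4*n+2) := V_epal (by omega)
  rw [h3] at h2
  exact ⟨_, h2⟩

lemma fac_not {v : Word} (h : FactorUp v) : FactorUp (v.map Bool.not) := by
  have := fac_rev (fac_ebar h)
  simpa [Ebar] using this

lemma fac_diff {v : Word} (hv : v ≠ []) : FactorUp v ↔ LD (diff v) := by
  constructor
  · intro h
    rw [factor_iff] at h
    obtain ⟨n, hn⟩ := h
    have h1 := diff_infix (hn.trans (V_mono (show n ≤ 2*n+2 by omega)).isInfix)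
    rw [V_e, diff_integ] at h1
    exact ⟨n, h1⟩
  · rintro ⟨n, hn⟩
    rw [← diff_integ true (dd (e n)), ← V_e] at hn
    obtain ⟨u, hu, h1, h2⟩ := infix_diff (by rw [V_e]; exact integ_ne _ _) hn
    have h3 : FactorUp u := (factor_iff u).2 ⟨_, h1⟩
    rcases diff_eq hv hu h2.symm with rfl | rfl
    · exact h3
    · exact fac_not h3

lemma diff_ext (v : Word) (hv : v ≠ []) : ∃ x z : Bool, ∀ i j,
    diff (i :: v ++ [j]) = xor i x :: diff v ++ [xor z j] := by
  rcases v with _ | ⟨x, l⟩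
  · simp at hv
  rcases List.eq_nil_or_concat (x :: l) with h | ⟨m, z, h⟩
  · simp at h
  rw [List.concat_eq_append] at h
  refine ⟨x, z, fun i j => ?_⟩
  have h1 : diff (x :: l ++ [j]) = diff (x :: l) ++ [xor z j] := by
    rw [h, List.append_assoc, List.singleton_append, diff_append m z [j]]
    simp [diff]
  rw [List.cons_append, List.cons_append (a := xor i x), ← h1]
  simp [diff]

lemma Wk.sym {G H : Bool → Bool → Prop} (x z : Bool)
    (h : ∀ i j, G i j ↔ H (xor i x) (xor z j)) : Wk G ↔ Wk H := by
  cases x <;> cases z <;> simp only [Wk, h] <;> simp <;> tauto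

lemma weak_iff_Wk (v : Word) : WeakBSUp v ↔ Wk (fun i j => FactorUp (i :: v ++ [j])) := by
  constructor
  · rintro ⟨_, h⟩
    simp only [Wk]; tauto
  · intro h
    have key : (∀ a : Bool, FactorUp (a :: v)) ∧ (∀ b : Bool, FactorUp (v ++ [b])) := by
      constructor
      · intro i
        obtain ⟨j, hj⟩ := h.left i
        exact fac_mono hj (List.prefix_append _ _).isInfix
      · intro j
        have : ∃ i, FactorUp (i :: v ++ [j]) := by
          simp only [Wk] at h
          cases j
          · rcases h with h | h
            all_goals first | exact ⟨true, by tauto⟩ | exact ⟨false, by tauto⟩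
          · rcases h with h | h
            all_goals first | exact ⟨true, by tauto⟩ | exact ⟨false, by tauto⟩
        obtain ⟨i, hi⟩ := this
        exact fac_mono hi (List.suffix_cons _ _).isInfix
    refine ⟨key, ?_⟩
    simp only [Wk] at h
    tauto

lemma weak_iff {v : Word} (hv : v ≠ []) : WeakBSUp v ↔ Wk (FD (diff v)) := by
  rw [weak_iff_Wk]
  obtain ⟨x, z, h⟩ := diff_ext v hv
  refine Wk.sym x z fun i j => ?_
  rw [fac_diff (by simp), h, FD]

lemma not_weak_nil : ¬ WeakBSUp [] := by
  rw [weak_iff_Wk]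
  refine not_wk_t true ?_ ?_
  · exact (factor_iff _).2 ⟨4, by decide⟩
  · exact (factor_iff _).2 ⟨4, by decide⟩

lemma weak_cases (v : Word) : WeakBSUp v ↔ v ≠ [] ∧
    (diff v = [true, false, true, true, true, true, false, true] ∨ ∃ n, diff v = dd (g n)) := by
  constructor
  · intro h
    have hv : v ≠ [] := by rintro rfl; exact not_weak_nil h
    exact ⟨hv, (WkD_iff _).1 ((weak_iff hv).1 h)⟩
  · rintro ⟨hv, h⟩
    exact (weak_iff hv).2 ((WkD_iff _).2 h)

/-! ### the words s -/

lemma e_pre_f (n : ℕ) : e n <+: f n := by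
  obtain ⟨y, h, _⟩ := e_next n
  exact (List.prefix_append _ _).trans h

lemma f_pre_e (n : ℕ) : f n <+: e (n+1) := by
  obtain ⟨y, h, _⟩ := f_next n
  exact (List.prefix_append _ _).trans h

lemma g_split (n : ℕ) : ∀ z y, f n = e n ++ z → f (n+1) = e n ++ y → g n = f n ++ y ++ z := by
  induction n with
  | zero =>
    intro z y h1 h2
    simp only [e, List.nil_append] at h1 h2
    subst h1 h2
    decide
  | succ n ih =>
    intro z' y' h1 h2
    obtain ⟨z, hz⟩ := e_pre_f n
    obtain ⟨y, hy⟩ := (e_pre_f n).trans ((f_pre_e n).trans (e_pre_f (n+1)))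
    have h3 := ih z y hz.symm hy.symm
    have hz' : mk ++ z' = tau z ++ mk := by
      have : pp (f n) = pp (e n) ++ z' := h1
      rw [← hz] at this
      simpa [pp, tau_append] using this.symm
    have hy' : mk ++ y' = tau y ++ mk := by
      have : pp (f (n+1)) = pp (e n) ++ y' := h2
      rw [← hy] at this
      simpa [pp, tau_append] using this.symm
    show pp (g n) = pp (f n) ++ y' ++ z'
    rw [h3]
    simp only [pp, tau_append, List.append_assoc]
    rw [← hz', ← List.append_assoc (tau y), ← hy']
    simp

lemma dd_g (n : ℕ) {Y Z : List Bool} (hZ : dd (f n) = dd (e n) ++ Z)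
    (hY : dd (f (n+1)) = dd (e n) ++ Y) : dd (g n) = dd (f n) ++ Y ++ Z := by
  obtain ⟨z, hz⟩ := e_pre_f n
  obtain ⟨y, hy⟩ := (e_pre_f n).trans ((f_pre_e n).trans (e_pre_f (n+1)))
  rw [g_split n z y hz.symm hy.symm]
  rw [← hz] at hZ
  rw [← hy] at hY
  have hz' : tt ++ Z = psi z ++ tt := by
    simpa [dd, psi_append] using hZ.symm
  have hy' : tt ++ Y = psi y ++ tt := by
    simpa [dd, psi_append] using hY.symm
  simp only [dd, psi_append, List.append_assoc]
  rw [← hz', ← List.append_assoc (psi y), ← hy']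
  simp

lemma diff_glue {A C r Y : Word} {x : Bool} (hA : A.getLast? = some x) (hC : C.getLast? = some x)
    (h : diff (C ++ r) = diff C ++ Y) : diff (A ++ r) = diff A ++ Y := by
  obtain ⟨l, rfl⟩ := List.getLast?_eq_some_iff.1 hA
  obtain ⟨m, rfl⟩ := List.getLast?_eq_some_iff.1 hC
  simp only [List.append_assoc, List.singleton_append] at h ⊢
  rw [diff_append m x r] at h
  rw [diff_append l x r, List.append_cancel_left h]

lemma getLast_glue {A C r : Word} (h : A.getLast? = C.getLast?) :
    (A ++ r).getLast? = (C ++ r).getLast? := by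
  simp [List.getLast?_append, h]

lemma V_head {n : ℕ} (hn : n ≠ 0) : ∃ l, V n = true :: l := by
  obtain ⟨s, hs⟩ := V_mono (show 1 ≤ n by omega)
  exact ⟨_, hs.symm⟩

lemma V_last_pal {n : ℕ} (hn : n ≠ 0) (h : IsPal (V n)) : (V n).getLast? = some true := by
  obtain ⟨l, hl⟩ := V_head hn
  have h' : (V n).reverse = V n := h
  rw [← h', hl]; simp

lemma V_last_epal {n : ℕ} (hn : n ≠ 0) (h : IsEPal (V n)) : (V n).getLast? = some false := by
  obtain ⟨l, hl⟩ := V_head hn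
  have h' : Ebar (V n) = V n := h
  rw [← h', hl]; simp [Ebar]

lemma diff_s_aux (n : ℕ) (A : Word) (x : Bool) (hA : A.getLast? = some x)
    (hdA : diff A = dd (f n)) (h2 : (V (2*n+2)).getLast? = some x)
    (h5 : (V (2*n+5)).getLast? = some x) :
    diff (A ++ (V (2*n+5)).drop (V (2*n+2)).length ++ (V (2*n+3)).drop (V (2*n+2)).length)
      = dd (g n) := by
  obtain ⟨r, hr⟩ := V_mono (show 2*n+2 ≤ 2*n+5 by omega)
  obtain ⟨q, hq⟩ := V_mono (show 2*n+2 ≤ 2*n+3 by omega)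
  obtain ⟨Y, hY⟩ := diff_prefix (V_mono (show 2*n+2 ≤ 2*n+5 by omega))
  obtain ⟨Z, hZ⟩ := diff_prefix (V_mono (show 2*n+2 ≤ 2*n+3 by omega))
  rw [← hr, ← hq, List.drop_left, List.drop_left]
  have e1 : diff (A ++ r) = diff A ++ Y := diff_glue hA h2 (by rw [hr, hY])
  have hl : (A ++ r).getLast? = some x := by
    rw [getLast_glue (hA.trans h2.symm), hr, h5]
  rw [diff_glue hl h2 (by rw [hq, hZ]), e1, hdA]
  rw [show 2*n+5 = 2*(n+1)+3 by ring, V_f, V_e, diff_integ, diff_integ] at hY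
  rw [V_f, V_e, diff_integ, diff_integ] at hZ
  exact (dd_g n hZ.symm hY.symm).symm

lemma diff_sOdd (n : ℕ) : diff (sOdd (n+3)) = dd (g n) := by
  obtain ⟨l, hl⟩ := V_head (n := 2*n+3) (by omega)
  rcases Nat.mod_two_eq_zero_or_one n with h | h
  · have hs : sOdd (n+3) = Ebar (V (2*n+3)) ++ (V (2*n+5)).drop (V (2*n+2)).length
        ++ (V (2*n+3)).drop (V (2*n+2)).length := by
      rw [sOdd, if_neg (by omega), s3]
      simp only [wp_eq]
      rw [show 4*((n+3)/2)-1 = 2*n+3 by omega, show 4*((n+3)/2)+1 = 2*n+5 by omega,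
        show 4*((n+3)/2)-2 = 2*n+2 by omega]
    rw [hs]
    refine diff_s_aux n _ false ?_ ?_ (V_last_epal (by omega) (V_epal (by omega)))
      (V_last_epal (by omega) (V_epal (by omega)))
    · rw [hl]; simp [Ebar]
    · rw [diff_Ebar, V_f, diff_integ, dd_f_pal]
  · have hs : sOdd (n+3) = (V (2*n+3)).reverse ++ (V (2*n+5)).drop (V (2*n+2)).length
        ++ (V (2*n+3)).drop (V (2*n+2)).length := by
      rw [sOdd, if_pos (by omega), s1]
      simp only [wp_eq]
      rw [show 4*((n+3)/2)-3 = 2*n+3 by omega, show 4*((n+3)/2)-1 = 2*n+5 by omega,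
        show 4*((n+3)/2)-4 = 2*n+2 by omega]
    rw [hs]
    refine diff_s_aux n _ true ?_ ?_ (V_last_pal (by omega) (V_pal (by omega)))
      (V_last_pal (by omega) (V_pal (by omega)))
    · rw [hl]; simp
    · rw [diff_reverse, V_f, diff_integ, dd_f_pal]

lemma diff_sOdd2 : diff (sOdd 2) = [true, false, true, true, true, true, false, true] := by
  simp only [sOdd, s1, wp_eq]
  decide

lemma dd_g_ne (n : ℕ) : dd (g n) ≠ [] := by simp [dd, tt]

lemma diff_sOdd_or {k : ℕ} (hk : 2 ≤ k) :
    (diff (sOdd k) = [true, false, true, true, true, true, false, true] ∨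
      ∃ n, diff (sOdd k) = dd (g n)) := by
  rcases Nat.eq_or_lt_of_le hk with rfl | h
  · exact Or.inl diff_sOdd2
  · obtain ⟨n, rfl⟩ : ∃ n, k = n + 3 := ⟨k-3, by omega⟩
    exact Or.inr ⟨n, diff_sOdd n⟩

lemma diff_pal_sOdd {k : ℕ} (hk : 2 ≤ k) : (diff (sOdd k)).reverse = diff (sOdd k) := by
  rcases diff_sOdd_or hk with h | ⟨n, h⟩ <;> rw [h]
  · rfl
  · rw [dd_reverse, g_pal]

lemma ne_of_diff {v : Word} (h : diff v = [true, false, true, true, true, true, false, true] ∨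
      ∃ n, diff v = dd (g n)) : v ≠ [] := by
  rintro rfl
  rcases h with h | ⟨n, h⟩
  · simp [diff] at h
  · exact dd_g_ne n h.symm

theorem main (v : Word) :
    WeakBSUp v ↔ ∃ k : ℕ, 2 ≤ k ∧
      (v = sOdd k ∨ v = (sOdd k).reverse ∨ v = Ebar (sOdd k) ∨
        v = Ebar ((sOdd k).reverse)) := by
  rw [weak_cases]
  constructor
  · rintro ⟨hv, h⟩
    have : ∃ k, 2 ≤ k ∧ diff v = diff (sOdd k) := by
      rcases h with h | ⟨n, h⟩
      · exact ⟨2, le_rfl, by rw [h, diff_sOdd2]⟩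
      · exact ⟨n+3, by omega, by rw [h, diff_sOdd]⟩
    obtain ⟨k, hk, hd⟩ := this
    refine ⟨k, hk, ?_⟩
    rcases diff_eq hv (ne_of_diff (diff_sOdd_or hk)) hd with h1 | h1
    · exact Or.inl h1
    · refine Or.inr (Or.inr (Or.inr ?_))
      rw [h1, Ebar_eq, List.reverse_reverse]
  · rintro ⟨k, hk, h⟩
    have hd : diff v = diff (sOdd k) := by
      rcases h with rfl | rfl | rfl | rfl
      · rfl
      · rw [diff_reverse, diff_pal_sOdd hk]
      · rw [diff_Ebar, diff_pal_sOdd hk]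
      · rw [diff_Ebar, diff_reverse, List.reverse_reverse]
    have h2 := diff_sOdd_or hk
    rw [← hd] at h2
    exact ⟨ne_of_diff h2, h2⟩

end T3

/-- the weak bispecial factors of `u_p` are exactly the factors
`s_{2k+1}` (`k ≥ 2`) together with their images under `R` and `E`. -/
theorem weak_bispecials_characterization (v : Word) :
    WeakBSUp v ↔ ∃ k : ℕ, 2 ≤ k ∧
      (v = sOdd k ∨ v = (sOdd k).reverse ∨ v = Ebar (sOdd k) ∨
        v = Ebar ((sOdd k).reverse)) := by
  exact T3.main v
end
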